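/- Let k ≥ 2 be an integer, let ϱ₁, …, ϱ_n ∈ ℍ be points lying in pairwise distinct SL₂(ℤ)-orbits, and let α₁, …, α_n ∈ ℝ. Then there exists exactly one function f : ℍ → ℂ with the following properties: (i) f is holomorphic on ℍ ∖ ⋃ᵢ SL₂(ℤ)ϱᵢ; (ii) f(γz) = (cz+d)^{2k}·f(z) for all γ = (a b; c d) ∈ SL₂(ℤ) and all z ∈ ℍ ∖ ⋃ᵢ SL₂(ℤ)ϱᵢ; (iii) f(z) → 0 as Im(z) → ∞, uniformly in Re(z); (iv) for each i the function z ↦ f(z) − αᵢ·((z−ϱᵢ)(z−conj(ϱᵢ))/(ϱᵢ−conj(ϱᵢ)))^{−k} is bounded on a punctured neighborhood of ϱᵢ; (v) for every primitive hyperbolic γ ∈ SL₂(ℤ), every z₀ ∈ ℍ ∖ ⋃ᵢ SL₂(ℤ)ϱᵢ, and every piecewise continuously differentiable path σ in ℍ ∖ ⋃ᵢ SL₂(ℤ)ϱᵢ from z₀ to γz₀, one has Re( (i/√(d_γ))^{k−1} ∫_σ f(z)·Q_γ(z,1)^{k−1} dz ) = 0. (This function f is the canonical meromorphic modular form of weight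 2k associated with the divisor ∑ᵢ αᵢ[ϱᵢ].) -/

import Mathlib

open Complex ComplexConjugate Metric Set MeasureTheory

noncomputable section

/-- The upper half-plane, as a subset of `ℂ`. -/
def UH : Set ℂ := {z | 0 < z.im}

abbrev SL2Z := Matrix.SpecialLinearGroup (Fin 2) ℤ

/-- The Möbius action `γz = (az+b)/(cz+d)` of `SL₂(ℤ)` on the upper half-plane
(written as a map on `ℂ`). -/
def moeb (γ : SL2Z) (z : ℂ) : ℂ :=
  ((γ.1 0 0 : ℂ) * z + (γ.1 0 1 : ℂ)) / ((γ.1 1 0 : ℂ) * z + (γ.1 1 1 : ℂ))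

/-- The `SL₂(ℤ)`-orbit of a point `ϱ`. -/
def orbit (ϱ : ℂ) : Set ℂ := {z | ∃ γ : SL2Z, z = moeb γ ϱ}

/-- `γ ∈ SL₂(ℤ)` is hyperbolic if `|a + d| > 2`. -/
def IsHyperbolic (γ : SL2Z) : Prop := 2 < |γ.1 0 0 + γ.1 1 1|

/-- `γ ∈ SL₂(ℤ)` is primitive if it is not a power `γ₀^m`, `m ≥ 2`, of another element. -/
def IsPrimitive (γ : SL2Z) : Prop := ¬∃ (γ₀ : SL2Z) (m : ℕ), 2 ≤ m ∧ γ = γ₀ ^ m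

/-- The binary quadratic form `Q_γ(z,1) = cz² + (d−a)z − b` attached to `γ`. -/
def Qpoly (γ : SL2Z) (z : ℂ) : ℂ :=
  (γ.1 1 0 : ℂ) * z ^ 2 + ((γ.1 1 1 - γ.1 0 0 : ℤ) : ℂ) * z - (γ.1 0 1 : ℂ)

/-- The discriminant `d_γ = (a+d)² − 4` of `Q_γ`. -/
def discr (γ : SL2Z) : ℝ := ((γ.1 0 0 + γ.1 1 1 : ℤ) : ℝ) ^ 2 - 4

/-- The factor `(i/√(d_γ))^(k−1)` appearing in the geodesic pairing. -/
def geodFactor (k : ℕ) (γ : SL2Z) : ℂ := (Complex.I / (Real.sqrt (discr γ) : ℂ)) ^ (k - 1)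

/-- Complex line integral of `f` along the path `σ : [0,1] → ℂ`. -/
def pathInt (f : ℂ → ℂ) (σ : ℝ → ℂ) : ℂ := ∫ t in (0 : ℝ)..1, f (σ t) * deriv σ t

/-- `σ : [0,1] → ℂ` is a piecewise continuously differentiable path. -/
def PiecewiseC1 (σ : ℝ → ℂ) : Prop :=
  ContinuousOn σ (Set.Icc 0 1) ∧
    ∃ (n : ℕ) (t : ℕ → ℝ), 0 < n ∧ t 0 = 0 ∧ t n = 1 ∧ (∀ i < n, t i ≤ t (i + 1)) ∧
      ∀ i < n, ContDiffOn ℝ 1 σ (Set.Icc (t i) (t (i + 1)))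

/-- The elliptic pole term `((z−ϱ)(z−conj ϱ)/(ϱ−conj ϱ))^(−k)`. -/
def polePart (k : ℕ) (ϱ z : ℂ) : ℂ :=
  ((z - ϱ) * (z - conj ϱ) / (ϱ - conj ϱ)) ^ (-(k : ℤ))

/-- The union of the `SL₂(ℤ)`-orbits of the points `ϱ i`. -/
def orbitUnion {n : ℕ} (ϱ : Fin n → ℂ) : Set ℂ := ⋃ i, orbit (ϱ i)

/-- The defining properties of the canonical meromorphic modular form of weight `2k`
associated with the divisor `∑ᵢ αᵢ[ϱᵢ]`:
(i) holomorphy on `ℍ ∖ ⋃ᵢ SL₂(ℤ)ϱᵢ`; (ii) weight `2k` modularity; (iii) vanishing at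
the cusp, uniformly in `Re z`; (iv) poles of order `k` at the `ϱᵢ` with elliptic leading
coefficients `αᵢ`; (v) vanishing of the real parts of all cycle integrals along closed
geodesics. -/
def IsCanonicalForm (k : ℕ) {n : ℕ} (ϱ : Fin n → ℂ) (α : Fin n → ℝ) (f : ℂ → ℂ) : Prop :=
  DifferentiableOn ℂ f (UH \ orbitUnion ϱ) ∧
  (∀ γ : SL2Z, ∀ z ∈ UH \ orbitUnion ϱ,
    f (moeb γ z) = ((γ.1 1 0 : ℂ) * z + (γ.1 1 1 : ℂ)) ^ (2 * k) * f z) ∧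
  (∀ ε > 0, ∃ T : ℝ, ∀ z ∈ UH \ orbitUnion ϱ, T < z.im → ‖f z‖ < ε) ∧
  (∀ i, ∃ δ > 0, ∃ Cb : ℝ, ∀ z ∈ (Metric.ball (ϱ i) δ \ {ϱ i}) ∩ (UH \ orbitUnion ϱ),
    ‖f z - (α i : ℂ) * polePart k (ϱ i) z‖ ≤ Cb) ∧
  (∀ γ : SL2Z, IsHyperbolic γ → IsPrimitive γ →
    ∀ z₀ ∈ UH \ orbitUnion ϱ, ∀ σ : ℝ → ℂ, PiecewiseC1 σ → σ 0 = z₀ →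
      σ 1 = moeb γ z₀ → (∀ t ∈ Set.Icc (0 : ℝ) 1, σ t ∈ UH \ orbitUnion ϱ) →
      (geodFactor k γ * pathInt (fun z => f z * Qpoly γ z ^ (k - 1)) σ).re = 0)

/-! ### Basic facts on the Möbius action -/

def jden (γ : SL2Z) (z : ℂ) : ℂ := (γ.1 1 0 : ℂ) * z + (γ.1 1 1 : ℂ)

lemma sl2_det (γ : SL2Z) : γ.1 0 0 * γ.1 1 1 - γ.1 0 1 * γ.1 1 0 = 1 := by
  have := γ.2; rwa [Matrix.det_fin_two] at this

lemma sl2_det_c (γ : SL2Z) :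
    (γ.1 0 0 : ℂ) * γ.1 1 1 - (γ.1 0 1 : ℂ) * γ.1 1 0 = 1 := by
  exact_mod_cast sl2_det γ

lemma jden_ne {γ : SL2Z} {z : ℂ} (hz : z.im ≠ 0) : jden γ z ≠ 0 := by
  intro h
  have h1 := congrArg Complex.im h
  have h2 := congrArg Complex.re h
  simp [jden] at h1 h2
  rcases h1 with h1 | h1
  · rw [h1] at h2
    simp at h2
    have := sl2_det γ
    rw [h1, h2] at this
    simp at this
  · exact hz h1

lemma moeb_eq (γ : SL2Z) (z : ℂ) :
    moeb γ z = ((γ.1 0 0 : ℂ) * z + (γ.1 0 1 : ℂ)) / jden γ z := rfl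

lemma moeb_sub {γ : SL2Z} {z w : ℂ} (hz : z.im ≠ 0) (hw : w.im ≠ 0) :
    moeb γ z - moeb γ w = (z - w) / (jden γ z * jden γ w) := by
  have h1 := jden_ne (γ := γ) hz
  have h2 := jden_ne (γ := γ) hw
  rw [moeb_eq, moeb_eq, div_sub_div _ _ h1 h2]
  congr 1
  simp only [jden]
  linear_combination (z - w) * sl2_det_c γ

lemma jden_conj (γ : SL2Z) (z : ℂ) : jden γ (conj z) = conj (jden γ z) := by
  simp [jden]

lemma moeb_conj (γ : SL2Z) (z : ℂ) : moeb γ (conj z) = conj (moeb γ z) := by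
  simp [moeb_eq, jden]

lemma moeb_im {γ : SL2Z} {z : ℂ} (hz : z.im ≠ 0) :
    (moeb γ z).im = z.im / ‖jden γ z‖ ^ 2 := by
  have h := moeb_sub (γ := γ) hz (w := conj z) (by simpa using hz)
  rw [moeb_conj, jden_conj, Complex.sub_conj, Complex.sub_conj, Complex.mul_conj,
    Complex.normSq_eq_norm_sq] at h
  have h2 := congrArg Complex.im h
  rw [mul_div_right_comm, ← Complex.ofReal_div, Complex.im_ofReal_mul, Complex.im_ofReal_mul,
    Complex.I_im, mul_one, mul_one, mul_div_assoc] at h2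
  linarith

lemma moeb_mem {γ : SL2Z} {z : ℂ} (hz : z ∈ UH) : moeb γ z ∈ UH := by
  have hz' : 0 < z.im := hz
  have := jden_ne (γ := γ) hz'.ne'
  show 0 < (moeb γ z).im
  rw [moeb_im hz'.ne']
  positivity

lemma moeb_one (z : ℂ) : moeb 1 z = z := by simp [moeb]

lemma uh_ne {z : ℂ} (hz : z ∈ UH) : z.im ≠ 0 := ne_of_gt hz

lemma jden_mul {γ δ : SL2Z} {z : ℂ} (hz : z.im ≠ 0) :
    jden (γ * δ) z = jden γ (moeb δ z) * jden δ z := by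
  have h1 := jden_ne (γ := δ) hz
  rw [jden, jden, moeb_eq]
  field_simp
  simp [jden, Matrix.mul_apply, Fin.sum_univ_two]
  ring

lemma moeb_mul {γ δ : SL2Z} {z : ℂ} (hz : z ∈ UH) :
    moeb (γ * δ) z = moeb γ (moeb δ z) := by
  have h1 := jden_ne (γ := δ) (uh_ne hz)
  have h2 := jden_ne (γ := γ * δ) (uh_ne hz)
  have h3 := jden_ne (γ := γ) (uh_ne (moeb_mem (γ := δ) hz))
  rw [moeb_eq, moeb_eq γ, div_eq_div_iff h2 h3, jden_mul (uh_ne hz), moeb_eq]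
  field_simp
  simp [jden, Matrix.mul_apply, Fin.sum_univ_two]
  ring

lemma moeb_inv_moeb {γ : SL2Z} {z : ℂ} (hz : z ∈ UH) : moeb γ⁻¹ (moeb γ z) = z := by
  rw [← moeb_mul hz]; simp [moeb_one]

lemma moeb_moeb_inv {γ : SL2Z} {z : ℂ} (hz : z ∈ UH) : moeb γ (moeb γ⁻¹ z) = z := by
  rw [← moeb_mul hz]; simp [moeb_one]

lemma orbit_sub {ϱ : ℂ} (h : ϱ ∈ UH) : orbit ϱ ⊆ UH := by
  rintro _ ⟨γ, rfl⟩; exact moeb_mem h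

lemma orbit_self (ϱ : ℂ) : ϱ ∈ orbit ϱ := ⟨1, (moeb_one _).symm⟩

lemma moeb_mem_orbit {ϱ : ℂ} (h : ϱ ∈ UH) {o : ℂ} (ho : o ∈ orbit ϱ) (γ : SL2Z) :
    moeb γ o ∈ orbit ϱ := by
  obtain ⟨δ, rfl⟩ := ho
  exact ⟨γ * δ, (moeb_mul h).symm⟩

lemma moeb_mem_orbit_iff {ϱ : ℂ} (h : ϱ ∈ UH) {z : ℂ} (hz : z ∈ UH) (γ : SL2Z) :
    moeb γ z ∈ orbit ϱ ↔ z ∈ orbit ϱ := by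
  refine ⟨fun hh => ?_, fun hh => moeb_mem_orbit h hh γ⟩
  have := moeb_mem_orbit h hh γ⁻¹
  rwa [moeb_inv_moeb hz] at this

/-! ### Summability over the group -/

lemma summable_sl2 : Summable (fun γ : SL2Z =>
    (((γ.1 0 0 : ℝ) ^ 2 + (γ.1 0 1 : ℝ) ^ 2 + (γ.1 1 0 : ℝ) ^ 2 + (γ.1 1 1 : ℝ) ^ 2) ^ 2)⁻¹) := by
  let B : SL2Z → ℤ := fun γ => γ.1 1 0 ^ 2 + γ.1 1 1 ^ 2
  let s : SL2Z → ℤ := fun γ => γ.1 0 0 * γ.1 1 0 + γ.1 0 1 * γ.1 1 1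
  let F : SL2Z → (Fin 2 → ℤ) × ℤ := fun γ => (![γ.1 1 0, γ.1 1 1], s γ / B γ)
  have hB : ∀ γ, 0 < B γ := by
    intro γ
    have h := sl2_det γ
    by_contra hh
    have h0 : γ.1 1 0 = 0 := by simp only [B] at hh; nlinarith
    have h1 : γ.1 1 1 = 0 := by simp only [B] at hh; nlinarith
    rw [h0, h1] at h
    simp at h
  have hF : Function.Injective F := by
    intro γ δ h
    simp only [F, Prod.mk.injEq] at h
    obtain ⟨h1, h2⟩ := h
    have hc : γ.1 1 0 = δ.1 1 0 := by simpa using congrFun h1 0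
    have hd : γ.1 1 1 = δ.1 1 1 := by simpa using congrFun h1 1
    have hBB : B γ = B δ := by simp only [B, hc, hd]
    have e1 := sl2_det γ
    have e2 := sl2_det δ
    rw [hc, hd] at e1
    have hm : ∃ m : ℤ, γ.1 0 0 = δ.1 0 0 + m * δ.1 1 0 ∧ γ.1 0 1 = δ.1 0 1 + m * δ.1 1 1 := by
      refine ⟨γ.1 0 1 * δ.1 0 0 - γ.1 0 0 * δ.1 0 1, ?_, ?_⟩
      · linear_combination (-γ.1 0 0) * e2 + δ.1 0 0 * e1
      · linear_combination (-γ.1 0 1) * e2 + δ.1 0 1 * e1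
    obtain ⟨m, ha, hb⟩ := hm
    have hs : s γ = s δ + m * B δ := by
      simp only [s, B, hc, hd, ha, hb]; ring
    rw [hBB, hs, Int.add_mul_ediv_right _ _ (hB δ).ne'] at h2
    have hm0 : m = 0 := by omega
    subst hm0
    ext i j
    fin_cases i <;> fin_cases j <;> simp_all
  have h1 : Summable (fun x : Fin 2 → ℤ => ‖x‖ ^ (-4 : ℝ)) :=
    EisensteinSeries.summable_one_div_norm_rpow (by norm_num)
  have h2 : Summable (fun n : ℤ => (1 + (n : ℝ) ^ 2)⁻¹) := by
    have h := (Real.summable_one_div_int_pow (p := 2)).mpr (by norm_num)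
    refine Summable.of_nonneg_of_le (fun n => by positivity) (fun n => ?_)
      (h.add (summable_of_ne_finset_zero (s := {0}) (f := fun n : ℤ => if n = 0 then (1:ℝ) else 0)
        (by intro b hb; simp at hb; simp [hb])))
    by_cases hn : n = 0
    · simp [hn]
    · have : (0:ℝ) < (n:ℝ) ^ 2 := by positivity
      simp only [hn, if_false, add_zero, one_div]
      gcongr
      linarith
  have h3 := h1.mul_of_nonneg h2 (fun x => by positivity) (fun n => by positivity)
  refine Summable.of_nonneg_of_le (fun γ => by positivity) (fun γ => ?_)
    ((h3.comp_injective hF).mul_left 9)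
  simp only [Function.comp, F]
  set a := (γ.1 0 0 : ℝ) with ha
  set b := (γ.1 0 1 : ℝ) with hb
  set c := (γ.1 1 0 : ℝ) with hc
  set d := (γ.1 1 1 : ℝ) with hd
  set N := ‖![γ.1 1 0, γ.1 1 1]‖ with hN
  set n : ℤ := s γ / B γ with hn
  have hdet : a * d - b * c = 1 := by rw [ha, hb, hc, hd]; exact_mod_cast sl2_det γ
  have hBr : ((B γ : ℤ) : ℝ) = c ^ 2 + d ^ 2 := by simp [B, hc, hd]
  have hsr : ((s γ : ℤ) : ℝ) = a * c + b * d := by simp [s, ha, hb, hc, hd]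
  have hBpos : (0:ℝ) < c ^ 2 + d ^ 2 := by rw [← hBr]; exact_mod_cast hB γ
  set x : ℝ := (a * c + b * d) / (c ^ 2 + d ^ 2) with hx
  have hn1 : (n : ℝ) ≤ x := by
    rw [hx, le_div_iff₀ hBpos, ← hBr, ← hsr]
    exact_mod_cast Int.ediv_mul_le _ (hB γ).ne'
  have hn2 : x < n + 1 := by
    rw [hx, div_lt_iff₀ hBpos, ← hBr, ← hsr]
    exact_mod_cast Int.lt_ediv_add_one_mul_self _ (hB γ)
  have hn3 : 1 + (n:ℝ) ^ 2 ≤ 3 * (1 + x ^ 2) := by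
    have : ((n:ℝ) - x) ^ 2 ≤ 1 := by nlinarith
    nlinarith [sq_nonneg ((n:ℝ) - x + x), sq_nonneg ((n:ℝ) - 2 * x)]
  have hA : a ^ 2 + b ^ 2 ≥ (c ^ 2 + d ^ 2) * x ^ 2 := by
    have e : (a ^ 2 + b ^ 2) * (c ^ 2 + d ^ 2) = 1 + (a * c + b * d) ^ 2 := by
      linear_combination (a * d - b * c + 1) * hdet
    have : (c ^ 2 + d ^ 2) * x ^ 2 = (a * c + b * d) ^ 2 / (c ^ 2 + d ^ 2) := by
      rw [hx]; field_simp
    rw [this, ge_iff_le, div_le_iff₀ hBpos]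
    linarith
  have hNB : N ^ 2 ≤ c ^ 2 + d ^ 2 := by
    rw [hN, EisensteinSeries.norm_eq_max_natAbs]
    simp only [Matrix.cons_val_zero, Matrix.cons_val_one]
    rcases max_choice (γ.1 1 0).natAbs (γ.1 1 1).natAbs with h | h <;> rw [h] <;>
      rw [Nat.cast_natAbs] <;> push_cast <;> rw [sq_abs] <;> nlinarith
  have hNpos : 0 < N := by
    rw [hN, norm_pos_iff]
    intro h
    have h0 := congrFun h 0
    have h1 := congrFun h 1
    simp at h0 h1
    simp [hc, hd, h0, h1] at hBpos
  have hkey : N ^ 2 * (1 + (n:ℝ) ^ 2) ≤ 3 * (a ^ 2 + b ^ 2 + c ^ 2 + d ^ 2) := by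
    calc N ^ 2 * (1 + (n:ℝ) ^ 2) ≤ (c ^ 2 + d ^ 2) * (3 * (1 + x ^ 2)) := by gcongr
      _ ≤ _ := by nlinarith
  have hr : N ^ (-4 : ℝ) = (N ^ 4)⁻¹ := by
    rw [Real.rpow_neg hNpos.le]; norm_cast
  have hpos : 0 < a ^ 2 + b ^ 2 + c ^ 2 + d ^ 2 := by nlinarith [sq_nonneg a, sq_nonneg b]
  rw [hr, ← mul_inv, ← div_eq_mul_inv, le_div_iff₀ (by positivity), inv_mul_le_iff₀ (by positivity)]
  have hh : N ^ 4 * (1 + (n:ℝ) ^ 2) ≤ (N ^ 2 * (1 + (n:ℝ) ^ 2)) ^ 2 := by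
    have h5 : 1 ≤ 1 + (n:ℝ) ^ 2 := by nlinarith [sq_nonneg (n:ℝ)]
    have h6 : 0 < N ^ 4 := by positivity
    calc N ^ 4 * (1 + (n:ℝ) ^ 2) = N ^ 4 * ((1 + (n:ℝ) ^ 2) * 1) := by ring
      _ ≤ N ^ 4 * ((1 + (n:ℝ) ^ 2) * (1 + (n:ℝ) ^ 2)) := by gcongr
      _ = _ := by ring
  have := pow_le_pow_left₀ (by positivity) hkey 2
  nlinarith

/-- The weight `Im o / (1 + |o|^2)`. -/
def wt (o : ℂ) : ℝ := o.im / (1 + ‖o‖ ^ 2)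

lemma wt_pos {o : ℂ} (h : o ∈ UH) : 0 < wt o := by
  have : 0 < o.im := h
  unfold wt; positivity

lemma wt_le {o : ℂ} (h : o ∈ UH) : wt o ≤ 1 := by
  have h0 : 0 < o.im := h
  unfold wt
  rw [div_le_one (by positivity)]
  have := Complex.abs_im_le_norm o
  rw [abs_of_pos h0] at this
  nlinarith [sq_nonneg (‖o‖ - 1)]

lemma normsq_lin_lower {z : ℂ} (c d : ℝ) :
    z.im ^ 2 / (1 + ‖z‖ ^ 2) * (c ^ 2 + d ^ 2) ≤ ‖(c : ℂ) * z + d‖ ^ 2 := by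
  rw [div_mul_eq_mul_div, div_le_iff₀ (by positivity)]
  rw [← Complex.normSq_eq_norm_sq, ← Complex.normSq_eq_norm_sq, Complex.normSq_apply,
    Complex.normSq_apply]
  simp
  nlinarith [sq_nonneg (c * (z.re ^ 2 + z.im ^ 2) + d * z.re), sq_nonneg (c * z.re + d)]

lemma orbit_summable {ϱ : ℂ} (h : ϱ ∈ UH) :
    Summable (fun o : orbit ϱ => wt (o : ℂ) ^ 2) := by
  have h0 : 0 < ϱ.im := h
  choose g hg using fun o : orbit ϱ => o.2
  have hinj : Function.Injective g := by
    intro o p hop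
    apply Subtype.ext
    rw [hg o, hg p, hop]
  set κ : ℝ := ϱ.im ^ 2 / (1 + ‖ϱ‖ ^ 2) with hκ
  have hκ0 : 0 < κ := by positivity
  refine Summable.of_nonneg_of_le (fun o => sq_nonneg _) (fun o => ?_)
    ((summable_sl2.comp_injective hinj).mul_left ((ϱ.im / κ) ^ 2))
  simp only [Function.comp]
  rw [← inv_pow, ← mul_pow]
  have ho := orbit_sub h o.2
  refine pow_le_pow_left₀ (wt_pos ho).le ?_ 2
  have hj := jden_ne (γ := g o) h0.ne'
  have hj' : 0 < ‖jden (g o) ϱ‖ := by positivity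
  have e1 : wt (o:ℂ) = ϱ.im / (‖jden (g o) ϱ‖ ^ 2 +
      ‖(((g o).1 0 0 : ℝ) : ℂ) * ϱ + (((g o).1 0 1 : ℝ):ℂ)‖ ^ 2) := by
    rw [wt, hg o, moeb_im h0.ne', moeb_eq, norm_div]
    push_cast
    field_simp
  have hl1 := normsq_lin_lower (z := ϱ) ((g o).1 0 0) ((g o).1 0 1)
  have hl2 := normsq_lin_lower (z := ϱ) ((g o).1 1 0) ((g o).1 1 1)
  have hl3 : ‖jden (g o) ϱ‖ = ‖(((g o).1 1 0 : ℝ) : ℂ) * ϱ + (((g o).1 1 1 : ℝ):ℂ)‖ := by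
    simp [jden]
  rw [← hl3] at hl2
  rw [← hκ] at hl1 hl2
  rw [e1, div_mul_eq_mul_div, ← div_eq_mul_inv, div_div]
  have hpos : 0 < ((g o).1 0 0 : ℝ) ^ 2 + ((g o).1 0 1 : ℝ) ^ 2 + ((g o).1 1 0 : ℝ) ^ 2
      + ((g o).1 1 1 : ℝ) ^ 2 := by
    have hd : ((g o).1 0 0 : ℝ) * (g o).1 1 1 - (g o).1 0 1 * (g o).1 1 0 = 1 := by
      exact_mod_cast sl2_det (g o)
    nlinarith [sq_nonneg (((g o).1 0 0 : ℝ) - (g o).1 1 1), sq_nonneg (((g o).1 0 1 : ℝ) + (g o).1 1 0)]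
  apply div_le_div_of_nonneg_left h0.le (by positivity)
  nlinarith

lemma orbit_finite {ϱ : ℂ} (h : ϱ ∈ UH) {ε : ℝ} (hε : 0 < ε) :
    (orbit ϱ ∩ {o | ε ≤ wt o}).Finite := by
  have h1 := (orbit_summable h).tendsto_cofinite_zero
  have h2 := h1.eventually (gt_mem_nhds (show 0 < ε ^ 2 by positivity))
  rw [Filter.eventually_cofinite] at h2
  refine (h2.image (fun o : orbit ϱ => (o : ℂ))).subset ?_
  rintro o ⟨ho, ho2⟩
  refine ⟨⟨o, ho⟩, ?_, rfl⟩
  simp only [mem_ofPred_eq, not_lt] at ho2 ⊢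
  gcongr

/-- Orbits are uniformly discrete near each point. -/
lemma orbit_sep {ϱ : ℂ} (h : ϱ ∈ UH) {z : ℂ} (hz : z ∈ UH) :
    ∃ δ > 0, ∀ o ∈ orbit ϱ, o ≠ z → δ ≤ ‖z - o‖ := by
  have hz' : 0 < z.im := hz
  set ε : ℝ := (z.im / 2) / (1 + (‖z‖ + z.im) ^ 2) with hε
  have hε0 : 0 < ε := by positivity
  have hfin := (orbit_finite h hε0).subset (t := (orbit ϱ ∩ {o | ε ≤ wt o}) \ {z}) sdiff_subset
  obtain ⟨δ₁, hδ₁, hh⟩ : ∃ δ₁ > 0, ∀ o ∈ (orbit ϱ ∩ {o | ε ≤ wt o}) \ {z}, δ₁ ≤ ‖z - o‖ := by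
    by_cases hne : ((orbit ϱ ∩ {o | ε ≤ wt o}) \ {z}).Nonempty
    · obtain ⟨o, ho, hmin⟩ := hfin.exists_minimalFor (fun o => ‖z - o‖) _ hne
      refine ⟨‖z - o‖, norm_pos_iff.mpr (sub_ne_zero.mpr (Ne.symm ho.2)), fun p hp => ?_⟩
      by_contra hlt
      push Not at hlt
      exact absurd (hmin hp hlt.le) (not_le.mpr hlt)
    · refine ⟨1, one_pos, fun o ho => absurd ⟨o, ho⟩ hne⟩
  refine ⟨min δ₁ (z.im / 2), by positivity, fun o ho hoz => ?_⟩
  by_contra hlt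
  push Not at hlt
  rw [lt_min_iff] at hlt
  have hre : |z.im - o.im| ≤ ‖z - o‖ := by
    have := Complex.abs_im_le_norm (z - o); simpa using this
  have him : z.im / 2 ≤ o.im := by have := (abs_le.mp hre).2; linarith [hlt.2]
  have hno : ‖o‖ ≤ ‖z‖ + z.im := by
    have : ‖o‖ ≤ ‖z‖ + ‖o - z‖ := by simpa using norm_add_le z (o - z)
    rw [norm_sub_rev] at this; linarith [hlt.2]
  have hw : ε ≤ wt o := by
    unfold wt
    rw [hε]
    gcongr
    linarith
  exact absurd (hh o ⟨⟨ho, hw⟩, hoz⟩) (not_le.mpr hlt.1)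

lemma orbitUnion_sep {n : ℕ} {ϱ : Fin n → ℂ} (h : ∀ i, ϱ i ∈ UH) {z : ℂ} (hz : z ∈ UH) :
    ∃ δ > 0, ∀ o ∈ orbitUnion ϱ, o ≠ z → δ ≤ ‖z - o‖ := by
  choose δ hδ hh using fun i => orbit_sep (h i) hz
  obtain ⟨ε, hε, hle⟩ : ∃ ε > 0, ∀ i, ε ≤ δ i := by
    rcases isEmpty_or_nonempty (Fin n) with hn | hn
    · exact ⟨1, one_pos, fun i => hn.elim i⟩
    · obtain ⟨i, hi⟩ := Finite.exists_min δ
      exact ⟨δ i, hδ i, hi⟩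
  refine ⟨ε, hε, fun o ho hoz => ?_⟩
  obtain ⟨i, hi⟩ := mem_iUnion.mp ho
  exact (hle i).trans (hh i o hi hoz)

lemma isOpen_UH : IsOpen UH := isOpen_lt continuous_const Complex.continuous_im

lemma isOpen_reg {n : ℕ} {ϱ : Fin n → ℂ} (h : ∀ i, ϱ i ∈ UH) : IsOpen (UH \ orbitUnion ϱ) := by
  rw [Metric.isOpen_iff]
  rintro z ⟨hz, hz2⟩
  obtain ⟨ε, hε, hb⟩ := Metric.isOpen_iff.mp isOpen_UH z hz
  obtain ⟨δ, hδ, hd⟩ := orbitUnion_sep h hz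
  refine ⟨min ε δ, by positivity, fun w hw => ⟨hb (ball_subset_ball (min_le_left _ _) hw), ?_⟩⟩
  intro hwo
  have h1 := hd w hwo (by rintro rfl; exact hz2 hwo)
  rw [mem_ball, dist_eq_norm, norm_sub_rev, lt_min_iff] at hw
  linarith [hw.2]

/-! ### The Poincaré series -/

def poin (k : ℕ) (ϱ z : ℂ) : ℂ := ∑' o : orbit ϱ, polePart k (o : ℂ) z

lemma norm_sub_le_sub_conj {z o : ℂ} (hz : z ∈ UH) (ho : o ∈ UH) : ‖z - o‖ ≤ ‖z - conj o‖ := by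
  have hz' : 0 < z.im := hz
  have ho' : 0 < o.im := ho
  rw [← abs_of_nonneg (norm_nonneg (z - o)), ← abs_of_nonneg (norm_nonneg (z - conj o)),
    ← sq_le_sq, ← Complex.normSq_eq_norm_sq, ← Complex.normSq_eq_norm_sq, Complex.normSq_apply,
    Complex.normSq_apply]
  simp
  nlinarith [mul_pos hz' ho']

lemma one_add_le_of_sep {z o : ℂ} {δ M : ℝ} (hδ : 0 < δ) (h1 : δ ≤ ‖z - o‖) (hM : ‖z‖ ≤ M) :
    1 + ‖o‖ ≤ ((1 + M) / δ + 1) * ‖z - o‖ := by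
  have h2 : ‖o‖ ≤ ‖z‖ + ‖z - o‖ := by
    have := norm_sub_le z (z - o); simpa using this
  have hM0 : 0 ≤ M := (norm_nonneg z).trans hM
  have h3 : (1 + M) ≤ (1 + M) / δ * ‖z - o‖ := by
    rw [div_mul_eq_mul_div, le_div_iff₀ hδ]
    gcongr
  nlinarith

lemma polePart_norm {k : ℕ} {o z : ℂ} (ho : o ∈ UH) :
    ‖polePart k o z‖ = (2 * o.im / (‖z - o‖ * ‖z - conj o‖)) ^ k := by
  have ho' : 0 < o.im := ho
  rw [polePart, zpow_neg, zpow_natCast, norm_inv, norm_pow, norm_div, norm_mul, Complex.sub_conj,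
    norm_mul, Complex.norm_I, mul_one, Complex.norm_real, Real.norm_eq_abs,
    abs_of_pos (by positivity), ← inv_pow, inv_div]

lemma polePart_bound {k : ℕ} (hk : 2 ≤ k) {o z : ℂ} {C : ℝ} (ho : o ∈ UH) (hz : z ∈ UH)
    (hC : 0 < C) (h : 1 + ‖o‖ ≤ C * ‖z - o‖) :
    ‖polePart k o z‖ ≤ (2 * C ^ 2) ^ k * wt o ^ 2 := by
  have ho' : 0 < o.im := ho
  rw [polePart_norm ho]
  have h1 : (1 + ‖o‖ ^ 2) ≤ C ^ 2 * (‖z - o‖ * ‖z - conj o‖) := by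
    have h2 := norm_sub_le_sub_conj hz ho
    have h3 : 0 ≤ ‖z - o‖ := norm_nonneg _
    have h4 : 0 ≤ ‖o‖ := norm_nonneg _
    calc 1 + ‖o‖ ^ 2 ≤ (1 + ‖o‖) ^ 2 := by nlinarith
      _ ≤ (C * ‖z - o‖) ^ 2 := by gcongr
      _ = C ^ 2 * (‖z - o‖ * ‖z - o‖) := by ring
      _ ≤ _ := by gcongr
  have hX : 0 < ‖z - o‖ * ‖z - conj o‖ := by
    by_contra hh
    have : 0 ≤ ‖o‖ ^ 2 := by positivity
    nlinarith [sq_nonneg C]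
  have h5 : 2 * o.im / (‖z - o‖ * ‖z - conj o‖) ≤ 2 * C ^ 2 * wt o := by
    rw [wt, mul_div_assoc', div_le_div_iff₀ hX (by positivity)]
    nlinarith
  calc (2 * o.im / (‖z - o‖ * ‖z - conj o‖)) ^ k ≤ (2 * C ^ 2 * wt o) ^ k := by gcongr
    _ = (2 * C ^ 2) ^ k * wt o ^ k := by rw [mul_pow]
    _ ≤ _ := by
      exact mul_le_mul_of_nonneg_left
        (pow_le_pow_of_le_one (wt_pos ho).le (wt_le ho) hk) (by positivity)

lemma sep_ball {ϱ z₀ : ℂ} (h : ϱ ∈ UH) (hz : z₀ ∈ UH) :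
    ∃ r > 0, ∀ z ∈ ball z₀ r, r ≤ z.im ∧ ‖z‖ ≤ ‖z₀‖ + r ∧
      ∀ o ∈ orbit ϱ, o ≠ z₀ → r ≤ ‖z - o‖ := by
  have hz' : 0 < z₀.im := hz
  obtain ⟨δ, hδ, hd⟩ := orbit_sep h hz
  refine ⟨min δ z₀.im / 2, by positivity, fun z hzb => ?_⟩
  rw [mem_ball, dist_eq_norm] at hzb
  have m1 : min δ z₀.im ≤ δ := min_le_left _ _
  have m2 : min δ z₀.im ≤ z₀.im := min_le_right _ _
  refine ⟨?_, ?_, fun o ho hoz => ?_⟩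
  · have := Complex.abs_im_le_norm (z - z₀)
    rw [Complex.sub_im] at this
    have := (abs_le.mp this).1
    linarith
  · have : ‖z‖ ≤ ‖z₀‖ + ‖z - z₀‖ := by simpa using norm_add_le z₀ (z - z₀)
    linarith
  · have h1 := hd o ho hoz
    have h2 : ‖z₀ - o‖ ≤ ‖z - o‖ + ‖z - z₀‖ := by
      have := norm_sub_le (z - o) (z - z₀); simpa using this
    linarith

/-- Local uniform bound of all terms except possibly the one at the centre. -/
lemma local_bound {ϱ z₀ : ℂ} (h : ϱ ∈ UH) (hz : z₀ ∈ UH) :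
    ∃ r > 0, ∃ C > 0, ball z₀ r ⊆ UH ∧ ∀ z ∈ ball z₀ r, ∀ o ∈ orbit ϱ, o ≠ z₀ →
      1 + ‖o‖ ≤ C * ‖z - o‖ := by
  obtain ⟨r, hr, hb⟩ := sep_ball h hz
  refine ⟨r, hr, (1 + (‖z₀‖ + r)) / r + 1, by positivity,
    fun z hzb => hr.trans_le (hb z hzb).1, fun z hzb o ho hoz => ?_⟩
  exact one_add_le_of_sep hr ((hb z hzb).2.2 o ho hoz) (hb z hzb).2.1

lemma polePart_differentiableAt {k : ℕ} {o z : ℂ} (h1 : z ≠ o) (h2 : z ≠ conj o)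
    (h3 : o ∈ UH) : DifferentiableAt ℂ (polePart k o) z := by
  have h3' : 0 < o.im := h3
  unfold polePart
  have h4 : o - conj o ≠ 0 := by
    rw [Complex.sub_conj]; simp [h3'.ne']
  have h5 : (z - o) * (z - conj o) / (o - conj o) ≠ 0 :=
    div_ne_zero (mul_ne_zero (sub_ne_zero.mpr h1) (sub_ne_zero.mpr h2)) h4
  apply DifferentiableAt.zpow
  · fun_prop
  · exact Or.inl h5

lemma ne_conj_of_UH {z o : ℂ} (hz : z ∈ UH) (ho : o ∈ UH) : z ≠ conj o := by
  have hz' : 0 < z.im := hz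
  have ho' : 0 < o.im := ho
  intro h
  have := congrArg Complex.im h
  simp at this
  linarith

lemma poin_summable {k : ℕ} (hk : 2 ≤ k) {ϱ z : ℂ} (h : ϱ ∈ UH) (hz : z ∈ UH)
    (hzo : z ∉ orbit ϱ) : Summable (fun o : orbit ϱ => polePart k (o : ℂ) z) := by
  obtain ⟨r, hr, C, hC, hU, hb⟩ := local_bound h hz
  refine Summable.of_norm_bounded ((orbit_summable h).mul_left ((2 * C ^ 2) ^ k)) fun o => ?_
  exact polePart_bound hk (orbit_sub h o.2) hz hC
    (hb z (mem_ball_self hr) o o.2 (by rintro rfl; exact hzo o.2))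

lemma poin_diff {k : ℕ} (hk : 2 ≤ k) {ϱ z : ℂ} (h : ϱ ∈ UH) (hz : z ∈ UH)
    (hzo : z ∉ orbit ϱ) : DifferentiableAt ℂ (poin k ϱ) z := by
  obtain ⟨r, hr, C, hC, hU, hb⟩ := local_bound h hz
  have hne : ∀ o : orbit ϱ, (o : ℂ) ≠ z := by rintro o rfl; exact hzo o.2
  have : DifferentiableOn ℂ (fun w => ∑' o : orbit ϱ, polePart k (o : ℂ) w) (ball z r) := by
    refine Complex.differentiableOn_tsum_of_summable_norm
      ((orbit_summable h).mul_left ((2 * C ^ 2) ^ k)) (fun o w hw => ?_) isOpen_ball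
      (fun o w hw => polePart_bound hk (orbit_sub h o.2) (hU hw) hC (hb w hw o o.2 (hne o)))
    refine (polePart_differentiableAt ?_ (ne_conj_of_UH (hU hw) (orbit_sub h o.2))
      (orbit_sub h o.2)).differentiableWithinAt
    rintro rfl
    have := hb _ hw o o.2 (hne o)
    simp at this
    linarith [norm_nonneg (o : ℂ)]
  exact (this z (mem_ball_self hr)).differentiableAt (ball_mem_nhds z hr)

/-- Near any point, the series minus its possible pole term is bounded. -/
lemma poin_local {k : ℕ} (hk : 2 ≤ k) {ϱ z₀ : ℂ} (h : ϱ ∈ UH) (hz : z₀ ∈ UH) :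
    ∃ r > 0, ∃ B : ℝ, ∀ z ∈ ball z₀ r,
      (z₀ ∉ orbit ϱ → ‖poin k ϱ z‖ ≤ B) ∧ (z₀ ∈ orbit ϱ → ‖poin k ϱ z - polePart k z₀ z‖ ≤ B) := by
  classical
  obtain ⟨r, hr, C, hC, hU, hb⟩ := local_bound h hz
  have hs := (orbit_summable h).mul_left ((2 * C ^ 2) ^ k)
  refine ⟨r, hr, ∑' o : orbit ϱ, (2 * C ^ 2) ^ k * wt (o:ℂ) ^ 2, fun z hzb => ⟨fun h0 => ?_, fun h0 => ?_⟩⟩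
  · exact tsum_of_norm_bounded hs.hasSum fun o => polePart_bound hk (orbit_sub h o.2) (hU hzb) hC
      (hb z hzb o o.2 (by rintro rfl; exact h0 o.2))
  · have hbd : ∀ o : orbit ϱ, ‖(if o = (⟨z₀, h0⟩ : orbit ϱ) then 0 else polePart k (o:ℂ) z)‖ ≤
        (2 * C ^ 2) ^ k * wt (o:ℂ) ^ 2 := by
      intro o
      split_ifs with ho
      · have := wt_pos (orbit_sub h o.2)
        simp; positivity
      · refine polePart_bound hk (orbit_sub h o.2) (hU hzb) hC (hb z hzb o o.2 ?_)
        intro h1; exact ho (Subtype.ext h1)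
    have hs1 : Summable fun o : orbit ϱ =>
        (if o = (⟨z₀, h0⟩ : orbit ϱ) then 0 else polePart k (o:ℂ) z) :=
      Summable.of_norm_bounded hs hbd
    have hs2 : Summable fun o : orbit ϱ => polePart k (o:ℂ) z := by
      refine (hs1.add (summable_of_ne_finset_zero (s := {(⟨z₀, h0⟩ : orbit ϱ)})
        (f := fun o : orbit ϱ => if o = (⟨z₀, h0⟩ : orbit ϱ) then polePart k (o:ℂ) z else 0)
        (by intro b hb; simp at hb; simp [hb]))).congr fun o => ?_
      split_ifs <;> simp
    rw [poin, hs2.tsum_eq_add_tsum_ite ⟨z₀, h0⟩, add_sub_cancel_left]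
    exact tsum_of_norm_bounded hs.hasSum hbd

lemma polePart_moeb {k : ℕ} {o z : ℂ} (ho : o ∈ UH) (hz : z ∈ UH) (γ : SL2Z) :
    polePart k (moeb γ o) (moeb γ z) = jden γ z ^ (2 * k) * polePart k o z := by
  have hoc : (conj o).im ≠ 0 := by simpa using uh_ne ho
  have j1 := jden_ne (γ := γ) (uh_ne hz)
  have j2 := jden_ne (γ := γ) (uh_ne ho)
  have j3 := jden_ne (γ := γ) hoc
  have hd : o - conj o ≠ 0 := sub_ne_zero.mpr (ne_conj_of_UH ho ho)
  unfold polePart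
  rw [← moeb_conj, moeb_sub (uh_ne hz) (uh_ne ho), moeb_sub (uh_ne hz) hoc,
    moeb_sub (uh_ne ho) hoc]
  have : (z - o) / (jden γ z * jden γ o) * ((z - conj o) / (jden γ z * jden γ (conj o))) /
      ((o - conj o) / (jden γ o * jden γ (conj o))) =
      (jden γ z ^ 2)⁻¹ * ((z - o) * (z - conj o) / (o - conj o)) := by
    field_simp
  rw [this, mul_zpow, zpow_neg, zpow_natCast, inv_pow, inv_inv, ← pow_mul]

/-- The action of a group element as a permutation of an orbit. -/
def orbitEquiv {ϱ : ℂ} (h : ϱ ∈ UH) (γ : SL2Z) : orbit ϱ ≃ orbit ϱ where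
  toFun o := ⟨moeb γ o, moeb_mem_orbit h o.2 γ⟩
  invFun o := ⟨moeb γ⁻¹ o, moeb_mem_orbit h o.2 γ⁻¹⟩
  left_inv o := Subtype.ext (moeb_inv_moeb (orbit_sub h o.2))
  right_inv o := Subtype.ext (moeb_moeb_inv (orbit_sub h o.2))

lemma poin_moeb {k : ℕ} {ϱ z : ℂ} (h : ϱ ∈ UH) (hz : z ∈ UH) (γ : SL2Z) :
    poin k ϱ (moeb γ z) = jden γ z ^ (2 * k) * poin k ϱ z := by
  rw [poin, poin, ← tsum_mul_left, ← (orbitEquiv h γ).tsum_eq]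
  refine tsum_congr fun o => ?_
  exact polePart_moeb (orbit_sub h o.2) hz γ

lemma orbit_im_bdd {ϱ : ℂ} (h : ϱ ∈ UH) : ∃ M > 0, ∀ o ∈ orbit ϱ, o.im ≤ M := by
  have h0 : 0 < ϱ.im := h
  set κ : ℝ := ϱ.im ^ 2 / (1 + ‖ϱ‖ ^ 2) with hκ
  have hκ0 : 0 < κ := by positivity
  refine ⟨ϱ.im / κ, by positivity, ?_⟩
  rintro _ ⟨γ, rfl⟩
  rw [moeb_im h0.ne']
  apply div_le_div_of_nonneg_left h0.le hκ0
  have h1 := normsq_lin_lower (z := ϱ) (γ.1 1 0) (γ.1 1 1)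
  have h2 : ‖jden γ ϱ‖ = ‖((γ.1 1 0 : ℝ) : ℂ) * ϱ + ((γ.1 1 1 : ℝ):ℂ)‖ := by simp [jden]
  rw [h2]
  refine le_trans ?_ h1
  rw [← hκ]
  have h3 : (1:ℝ) ≤ (γ.1 1 0 : ℝ) ^ 2 + (γ.1 1 1 : ℝ) ^ 2 := by
    have hd := sl2_det γ
    have : 1 ≤ γ.1 1 0 ^ 2 + γ.1 1 1 ^ 2 := by
      by_contra hh
      have h0 : γ.1 1 0 = 0 := by nlinarith
      have h1 : γ.1 1 1 = 0 := by nlinarith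
      rw [h0, h1] at hd
      simp at hd
    exact_mod_cast this
  nlinarith

def Tpow (m : ℤ) : SL2Z := ⟨!![1, m; 0, 1], by simp [Matrix.det_fin_two]⟩

lemma moeb_Tpow (m : ℤ) (z : ℂ) : moeb (Tpow m) z = z + m := by simp [moeb, Tpow]

lemma jden_Tpow (m : ℤ) (z : ℂ) : jden (Tpow m) z = 1 := by simp [jden, Tpow]

lemma poin_cusp {k : ℕ} (hk : 2 ≤ k) {ϱ : ℂ} (h : ϱ ∈ UH) :
    ∀ ε > 0, ∃ T : ℝ, ∀ z ∈ UH, T < z.im → ‖poin k ϱ z‖ < ε := by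
  obtain ⟨M, hM, hMo⟩ := orbit_im_bdd h
  let F : Filter ℂ := Filter.comap Complex.im Filter.atTop ⊓ Filter.principal {z | |z.re| ≤ 1}
  have hbig : ∀ T : ℝ, ∀ᶠ z in F, T < z.im ∧ |z.re| ≤ 1 := by
    intro T
    refine Filter.Eventually.and ?_ ?_
    · exact Filter.Eventually.filter_mono inf_le_left
        ((Filter.eventually_gt_atTop T).comap Complex.im)
    · exact Filter.Eventually.filter_mono inf_le_right (Filter.eventually_principal.mpr fun z hz => hz)
  have hest : ∀ z : ℂ, M + 1 < z.im → |z.re| ≤ 1 → ∀ o ∈ orbit ϱ, z.im - M ≤ ‖z - o‖ ∧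
      1 + ‖o‖ ≤ (3 + M) * ‖z - o‖ := by
    intro z hz hre o ho
    have ho' : 0 < o.im := orbit_sub h ho
    have h1 := Complex.abs_im_le_norm (z - o)
    have h2 := Complex.abs_re_le_norm (z - o)
    rw [Complex.sub_im] at h1
    rw [Complex.sub_re] at h2
    have h3 := hMo o ho
    have h4 : z.im - M ≤ ‖z - o‖ := by have := (abs_le.mp h1).2; linarith
    refine ⟨h4, ?_⟩
    have h5 := Complex.norm_le_abs_re_add_abs_im o
    rw [abs_of_pos ho'] at h5
    have h6 : |o.re| ≤ 1 + ‖z - o‖ := by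
      have : |o.re| ≤ |z.re| + |z.re - o.re| := by
        have := abs_sub z.re (z.re - o.re); simpa using this
      linarith
    have h7 : 1 ≤ ‖z - o‖ := by linarith
    nlinarith
  have hlim : Filter.Tendsto (fun z => ∑' o : orbit ϱ, polePart k (o:ℂ) z) F
      (nhds (∑' o : orbit ϱ, (0:ℂ))) := by
    refine tendsto_tsum_of_dominated_convergence
      (bound := fun o : orbit ϱ => (2 * (3 + M) ^ 2) ^ k * wt (o:ℂ) ^ 2)
      ((orbit_summable h).mul_left _) (fun o => ?_) ?_
    · rw [Metric.tendsto_nhds]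
      intro ε hε
      set o' : ℂ := (o : ℂ)
      have hoo : 0 < o'.im := orbit_sub h o.2
      filter_upwards [hbig (M + 1 + 2 * M + 2 * M / ε)] with z hz
      have hpp : 0 < 2 * M / ε := by positivity
      obtain ⟨h1, -⟩ := hest z (by linarith) hz.2 o' o.2
      have h8 := norm_sub_le_sub_conj (z := z) (o := o') (show 0 < z.im by linarith) hoo
      have h3 := hMo o' o.2
      rw [dist_zero_right, polePart_norm hoo]
      have hX1 : 2 * o'.im / (‖z - o'‖ * ‖z - conj o'‖) ≤ 1 := by
        rw [div_le_one (by apply mul_pos <;> linarith)]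
        nlinarith
      have hX2 : 2 * o'.im / (‖z - o'‖ * ‖z - conj o'‖) < ε := by
        rw [div_lt_iff₀ (by apply mul_pos <;> linarith)]
        have : 2 * M = ε * (2 * M / ε) := by field_simp
        have h9 : ε * (2 * M / ε) < ε * ‖z - o'‖ := by gcongr; linarith
        have h10 : 1 ≤ ‖z - conj o'‖ := by linarith
        have h11 : 0 < ‖z - o'‖ := by linarith
        calc 2 * o'.im ≤ 2 * M := by linarith
          _ < ε * ‖z - o'‖ * 1 := by linarith
          _ ≤ ε * ‖z - o'‖ * ‖z - conj o'‖ := by gcongr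
          _ = _ := by ring
      have hX0 : 0 ≤ 2 * o'.im / (‖z - o'‖ * ‖z - conj o'‖) := by positivity
      calc _ ≤ (2 * o'.im / (‖z - o'‖ * ‖z - conj o'‖)) ^ 1 :=
            pow_le_pow_of_le_one hX0 hX1 (by omega)
        _ < ε := by simpa using hX2
    · filter_upwards [hbig (M + 1)] with z hz o
      exact polePart_bound hk (orbit_sub h o.2) (show 0 < z.im by linarith) (by linarith)
        (hest z hz.1 hz.2 o o.2).2
  rw [tsum_zero] at hlim
  intro ε hε
  have hev := (Metric.tendsto_nhds.mp hlim) ε hε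
  rw [Filter.eventually_inf_principal, Filter.eventually_comap] at hev
  obtain ⟨T, hT⟩ := Filter.eventually_atTop.mp hev
  refine ⟨T, fun z hz hTz => ?_⟩
  have hp : poin k ϱ (z + (-⌊z.re⌋ : ℤ)) = poin k ϱ z := by
    rw [← moeb_Tpow, poin_moeb h hz, jden_Tpow]; simp
  rw [← hp]
  have := hT (z.im) hTz.le (z + (-⌊z.re⌋ : ℤ)) (by simp) (by
    have h1 := Int.floor_le z.re
    have h2 := Int.lt_floor_add_one z.re
    simp only [mem_ofPred_eq]
    rw [abs_le]
    constructor <;> simp <;> linarith)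
  simpa [poin] using this

/-- The real-linear map `v ↦ Re (c v)`. -/
def Lre (c : ℂ) : ℂ →L[ℝ] ℝ := Complex.reCLM.comp ((ContinuousLinearMap.mul ℝ ℂ) c)

lemma Lre_apply (c v : ℂ) : Lre c v = (c * v).re := rfl

lemma Lre_norm (c : ℂ) : ‖Lre c‖ ≤ ‖c‖ := by
  refine ContinuousLinearMap.opNorm_le_bound _ (norm_nonneg _) fun v => ?_
  rw [Lre_apply, Real.norm_eq_abs, ← norm_mul]
  exact Complex.abs_re_le_norm _

lemma hasFDerivAt_re {F : ℂ → ℂ} {c z : ℂ} (h : HasDerivAt F c z) :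
    HasFDerivAt (fun z => (F z).re) (Lre c) z := by
  have h1 := h.hasFDerivAt.restrictScalars ℝ
  have h2 := (Complex.reCLM.hasFDerivAt (x := F z)).comp z h1
  refine h2.congr_fderiv ?_
  ext v
  simp [Lre_apply, mul_comm]

lemma hasFDerivAt_re_comp {P : ℂ → ℝ} {F : ℂ → ℂ} {c d z : ℂ} (hP : HasFDerivAt P (Lre d) (F z))
    (h : HasDerivAt F c z) : HasFDerivAt (fun z => P (F z)) (Lre (d * c)) z := by
  have h1 := h.hasFDerivAt.restrictScalars ℝ
  have h2 := hP.comp z h1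
  refine h2.congr_fderiv ?_
  ext v
  simp [Lre_apply, mul_comm, mul_left_comm]

lemma hasFDerivAt_logNorm {w : ℂ} (hw : w ≠ 0) :
    HasFDerivAt (fun w : ℂ => Real.log ‖w‖) (Lre (1 / w)) w := by
  have h1 : HasDerivAt (fun v : ℂ => Complex.log (v / w)) (1 / w) w := by
    have h2 : HasDerivAt (fun v : ℂ => v / w) (1 / w) w := (hasDerivAt_id w).div_const w
    have h3 := h2.clog (by rw [div_self hw]; exact Complex.one_mem_slitPlane)
    simpa [div_self hw] using h3
  have h4 := (hasFDerivAt_re h1).add_const (Real.log ‖w‖)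
  refine h4.congr_of_eventuallyEq ?_
  filter_upwards [isOpen_ne.mem_nhds hw] with v hv
  have : ‖v‖ ≠ 0 := norm_ne_zero_iff.mpr hv
  have : ‖w‖ ≠ 0 := norm_ne_zero_iff.mpr hw
  rw [Complex.log_re, norm_div, Real.log_div (by assumption) (by assumption)]
  ring

/-- One term of the real antiderivative. -/
def phiT (q w : ℂ) (i l : ℕ) : ℝ :=
  if 2 * l = i then ‖q‖ ^ i * Real.log ‖w‖
  else ((q / w) ^ (i - l) * (conj q * w) ^ l).re / (2 * l - i : ℝ)

/-- A real antiderivative of `Re ((q/w + q1 + conj q w)^K dw/w)`. -/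
def Phi (K : ℕ) (q : ℂ) (q1 : ℝ) (w : ℂ) : ℝ :=
  ∑ i ∈ Finset.range (K + 1), ∑ l ∈ Finset.range (i + 1),
    (K.choose i * i.choose l * q1 ^ (K - i) : ℝ) * phiT q w i l

def hfun (q : ℂ) (q1 : ℝ) (w : ℂ) : ℂ := q / w + q1 + conj q * w

lemma phiT_deriv (q : ℂ) {w : ℂ} (hw : w ≠ 0) {i l : ℕ} (hl : l ≤ i) :
    HasFDerivAt (fun w => phiT q w i l)
      (Lre ((q / w) ^ (i - l) * (conj q * w) ^ l / w)) w := by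
  unfold phiT
  split_ifs with h
  · have h1 := (hasFDerivAt_logNorm hw).const_mul (‖q‖ ^ i)
    refine h1.congr_fderiv (Eq.symm ?_)
    have h2 : (q / w) ^ (i - l) * (conj q * w) ^ l / w = ((‖q‖ ^ i : ℝ) : ℂ) * (1 / w) := by
      have : i - l = l := by omega
      rw [this, ← mul_pow, show q / w * (conj q * w) = q * conj q by field_simp,
        Complex.mul_conj, Complex.normSq_eq_norm_sq, ← h]
      push_cast
      ring
    rw [h2]
    ext v
    rw [Lre_apply, smul_apply, Lre_apply, mul_assoc, Complex.re_ofReal_mul]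
    simp
  · obtain ⟨m, rfl⟩ := Nat.exists_eq_add_of_le hl
    have hne : ((l : ℂ) - m) ≠ 0 := by
      rw [sub_ne_zero]; intro h'; apply h
      have : l = m := by exact_mod_cast h'
      omega
    have h1 : HasDerivAt (fun w : ℂ => (q / w) ^ m * (conj q * w) ^ l / ((l:ℂ) - m))
        ((q / w) ^ m * (conj q * w) ^ l / w) w := by
      have e1 : HasDerivAt (fun w : ℂ => (q / w) ^ m * (conj q * w) ^ l / ((l:ℂ) - m))
        ((m * (q / w) ^ (m-1) * (-q / w ^ 2) * (conj q * w) ^ l +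
          (q / w) ^ m * (l * (conj q * w) ^ (l-1) * conj q)) / ((l:ℂ) - m)) w := by
        have a1 : HasDerivAt (fun w : ℂ => q / w) (-q / w ^ 2) w := by
          have := (hasDerivAt_const w q).fun_div (hasDerivAt_id' w) hw
          simpa using this
        have a2 : HasDerivAt (fun w : ℂ => conj q * w) (conj q) w := by
          simpa using (hasDerivAt_id w).const_mul (conj q)
        exact ((a1.fun_pow m).fun_mul (a2.fun_pow l)).div_const _
      convert e1 using 1
      rw [eq_div_iff hne]
      have b1 : (m:ℂ) * (q / w) ^ (m-1) * (-q / w ^ 2) = - m * (q / w) ^ m / w := by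
        rcases m with _ | m
        · simp
        · simp only [Nat.add_sub_cancel]; rw [pow_succ (q / w)]; field_simp
      have b2 : (l * (conj q * w) ^ (l-1) * conj q) = l * (conj q * w) ^ l / w := by
        rcases l with _ | l
        · simp
        · simp only [Nat.add_sub_cancel]; rw [pow_succ (conj q * w)]; field_simp
      rw [b1, b2]
      field_simp
      ring
    have h2 := hasFDerivAt_re h1
    have h3 : l + m - l = m := by omega
    rw [h3]
    convert h2 using 2 with v
    have : ((l:ℂ) - m) = ((l - m : ℝ) : ℂ) := by push_cast; ring
    rw [this, Complex.div_ofReal_re]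
    push_cast
    congr 1
    ring

lemma Phi_deriv (K : ℕ) (q : ℂ) (q1 : ℝ) {w : ℂ} (hw : w ≠ 0) :
    HasFDerivAt (Phi K q q1) (Lre (hfun q q1 w ^ K / w)) w := by
  have h1 : HasFDerivAt (Phi K q q1) (∑ i ∈ Finset.range (K + 1), ∑ l ∈ Finset.range (i + 1),
      (K.choose i * i.choose l * q1 ^ (K - i) : ℝ) •
        (Lre ((q / w) ^ (i - l) * (conj q * w) ^ l / w))) w := by
    unfold Phi
    refine HasFDerivAt.fun_sum fun i _ => HasFDerivAt.fun_sum fun l hl => ?_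
    refine (phiT_deriv q hw ?_).const_mul _
    rw [Finset.mem_range] at hl; omega
  convert h1 using 1
  have h2 : hfun q q1 w ^ K / w = ∑ i ∈ Finset.range (K + 1), ∑ l ∈ Finset.range (i + 1),
      ((K.choose i * i.choose l * q1 ^ (K - i) : ℝ) : ℂ) *
        ((q / w) ^ (i - l) * (conj q * w) ^ l / w) := by
    have : hfun q q1 w = (conj q * w + q / w) + q1 := by unfold hfun; ring
    rw [this, add_pow, Finset.sum_div]
    refine Finset.sum_congr rfl fun i _ => ?_
    rw [add_pow, Finset.sum_mul, Finset.sum_mul, Finset.sum_div]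
    refine Finset.sum_congr rfl fun l _ => ?_
    push_cast
    ring
  ext v
  rw [Lre_apply, h2, Finset.sum_mul, Complex.re_sum, sum_apply]
  refine Finset.sum_congr rfl fun i _ => ?_
  rw [Finset.sum_mul, Complex.re_sum, sum_apply]
  refine Finset.sum_congr rfl fun l _ => ?_
  rw [smul_apply, Lre_apply, mul_assoc, Complex.re_ofReal_mul, smul_eq_mul]

lemma Phi_circle (K : ℕ) (q : ℂ) (q1 : ℝ) {w : ℂ} (hw : ‖w‖ = 1) : Phi K q q1 w = 0 := by
  unfold Phi
  refine Finset.sum_eq_zero fun i _ => ?_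
  set t : ℕ → ℝ := fun l => (K.choose i * i.choose l * q1 ^ (K - i) : ℝ) * phiT q w i l with ht
  have hw0 : w ≠ 0 := by rintro rfl; simp at hw
  have hc : conj w = w⁻¹ := by
    rw [Complex.inv_def, Complex.normSq_eq_norm_sq, hw]; simp
  have key : ∀ l ∈ Finset.range (i + 1), t (i + 1 - 1 - l) = - t l := by
    intro l hl
    have hl : l ≤ i := by rw [Finset.mem_range] at hl; omega
    simp only [ht, Nat.add_sub_cancel]
    rw [Nat.choose_symm hl]
    have : phiT q w i (i - l) = - phiT q w i l := by
      unfold phiT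
      by_cases h : 2 * l = i
      · rw [if_pos h, if_pos (by omega), hw]; simp
      · rw [if_neg h, if_neg (by omega)]
        have e1 : ((q / w) ^ (i - (i - l)) * (conj q * w) ^ (i - l)).re
            = ((q / w) ^ (i - l) * (conj q * w) ^ l).re := by
          rw [← Complex.conj_re ((q / w) ^ (i - l) * (conj q * w) ^ l)]
          congr 1
          have : i - (i - l) = l := by omega
          simp only [map_mul, map_pow, map_div₀, Complex.conj_conj, hc, this]
          rw [div_inv_eq_mul, mul_comm, div_eq_mul_inv]
        rw [e1, Nat.cast_sub hl, ← div_neg]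
        congr 1; ring
    rw [this]; ring
  have h2 := Finset.sum_range_reflect t (i + 1)
  rw [Finset.sum_congr rfl key, Finset.sum_neg_distrib] at h2
  linarith

lemma Phi_rot (K : ℕ) (q : ℂ) (q1 : ℝ) (w : ℂ) {e : ℂ} (he : ‖e‖ = 1) :
    Phi K (q * e) q1 (w * e) = Phi K q q1 w := by
  have hc : conj e = e⁻¹ := by
    rw [Complex.inv_def, Complex.normSq_eq_norm_sq, he]; simp
  have he0 : e ≠ 0 := by rintro rfl; simp at he
  have h1 : q * e / (w * e) = q / w := mul_div_mul_right _ _ he0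
  have h2 : conj (q * e) * (w * e) = conj q * w := by
    rw [map_mul, hc]; field_simp
  unfold Phi phiT
  simp only [h1, h2, norm_mul, he, mul_one]

/-- Real quadratic polynomial. -/
def Qf (A B C : ℝ) (z : ℂ) : ℂ := A * z ^ 2 + B * z + C

def qz (A B C : ℝ) (o : ℂ) : ℂ := Qf A B C o / (2 * o.im : ℝ)
def qo (A B C : ℝ) (o : ℂ) : ℝ := -(A * ‖o‖ ^ 2 + B * o.re + C) / o.im
def wz (o z : ℂ) : ℂ := (z - o) / (z - conj o)

lemma sub_conj_ne {z o : ℂ} (hz : z ∈ UH) (ho : o ∈ UH) : z - conj o ≠ 0 :=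
  sub_ne_zero.mpr (ne_conj_of_UH hz ho)

lemma hfun_eq (A B C : ℝ) {o z : ℂ} (ho : o ∈ UH) (hz : z ∈ UH) (hzo : z ≠ o) :
    hfun (qz A B C o) (qo A B C o) (wz o z)
      = -(2 * o.im : ℝ) * Qf A B C z / ((z - o) * (z - conj o)) := by
  have h1 := sub_conj_ne hz ho
  have h2 : z - o ≠ 0 := sub_ne_zero.mpr hzo
  have h3 : (o.im : ℂ) ≠ 0 := by exact_mod_cast uh_ne ho
  have hc : conj (qz A B C o) = Qf A B C (conj o) / (2 * o.im : ℝ) := by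
    simp only [qz, Qf, map_div₀, map_add, map_mul, map_pow, Complex.conj_ofReal]
  have hn : ((‖o‖ ^ 2 : ℝ) : ℂ) = o * conj o := by
    rw [Complex.mul_conj, Complex.normSq_eq_norm_sq]
  have hre : ((o.re : ℝ) : ℂ) = (o + conj o) / 2 := by
    rw [Complex.add_conj]; push_cast; ring
  have him : (o.im : ℂ) = (o - conj o) / (2 * I) := by
    rw [Complex.sub_conj]; field_simp [Complex.I_ne_zero]
    push_cast; ring
  have hq : ((qo A B C o : ℝ) : ℂ) = -(A * (o * conj o) + B * ((o + conj o) / 2) + C) / o.im := by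
    rw [← hn, ← hre, qo]; push_cast; ring
  have h4 : (o.im : ℂ) ^ 2 = - (o - conj o) ^ 2 / 4 := by
    rw [him, div_pow, mul_pow, Complex.I_sq]; ring
  unfold hfun
  rw [hc, hq, qz, wz]
  unfold Qf
  push_cast
  rw [eq_div_iff (mul_ne_zero h2 h1)]
  field_simp
  rw [h4]
  ring

lemma wz_deriv {o z : ℂ} (ho : o ∈ UH) (hz : z ∈ UH) :
    HasDerivAt (wz o) ((2 * o.im : ℝ) * I / (z - conj o) ^ 2) z := by
  have h1 := sub_conj_ne hz ho
  have := ((hasDerivAt_id z).sub_const o).fun_div ((hasDerivAt_id z).sub_const (conj o)) h1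
  refine this.congr_deriv ?_
  rw [← Complex.sub_conj]
  simp

/-- The term `p_o(z)`. -/
def po (K : ℕ) (A B C : ℝ) (o z : ℂ) : ℝ := Phi K (qz A B C o) (qo A B C o) (wz o z)

lemma po_deriv (K : ℕ) (A B C : ℝ) {o z : ℂ} (ho : o ∈ UH) (hz : z ∈ UH) (hzo : z ≠ o) :
    HasFDerivAt (po K A B C o) (Lre (I ^ K * (polePart (K + 1) o z * Qf A B C z ^ K))) z := by
  have h1 := sub_conj_ne hz ho
  have h2 : z - o ≠ 0 := sub_ne_zero.mpr hzo
  have hw : wz o z ≠ 0 := div_ne_zero h2 h1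
  have := hasFDerivAt_re_comp (Phi_deriv K (qz A B C o) (qo A B C o) hw) (wz_deriv ho hz)
  refine this.congr_fderiv (congrArg Lre (Eq.symm ?_))
  have h3 : (o.im : ℂ) ≠ 0 := by exact_mod_cast uh_ne ho
  rw [hfun_eq A B C ho hz hzo, polePart, zpow_neg, zpow_natCast, Complex.sub_conj, wz]
  rw [div_pow, div_pow, inv_div]
  simp only [mul_pow, pow_succ]
  field_simp
  rw [neg_pow, ← Complex.I_sq]
  ring

lemma po_moeb (K : ℕ) (γ : SL2Z) {o z : ℂ} (ho : o ∈ UH) (hz : z ∈ UH) :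
    po K (γ.1 1 0) (γ.1 1 1 - γ.1 0 0) (-γ.1 0 1) (moeb γ o) (moeb γ z) =
      po K (γ.1 1 0) (γ.1 1 1 - γ.1 0 0) (-γ.1 0 1) o z := by
  set e : ℂ := conj (jden γ o) / jden γ o with he
  have hj := jden_ne (γ := γ) (uh_ne ho)
  have hjz := jden_ne (γ := γ) (uh_ne hz)
  have hjc : conj (jden γ o) ≠ 0 := by simpa using hj
  have he1 : ‖e‖ = 1 := by
    rw [he, norm_div, Complex.norm_conj, div_self (norm_ne_zero_iff.mpr hj)]
  have hw : wz (moeb γ o) (moeb γ z) = wz o z * e := by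
    have hoc : (conj o).im ≠ 0 := by simpa using uh_ne ho
    rw [wz, ← moeb_conj, moeb_sub (uh_ne hz) (uh_ne ho), moeb_sub (uh_ne hz) hoc, wz, jden_conj, he]
    have := sub_conj_ne hz ho
    field_simp
  have hn : ((‖jden γ o‖ ^ 2 : ℝ) : ℂ) = jden γ o * conj (jden γ o) := by
    rw [Complex.mul_conj, Complex.normSq_eq_norm_sq]
  have h3 : (o.im : ℂ) ≠ 0 := by exact_mod_cast uh_ne ho
  have him := moeb_im (γ := γ) (uh_ne ho)
  have hQ : Qf (γ.1 1 0) (γ.1 1 1 - γ.1 0 0) (-γ.1 0 1) (moeb γ o)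
      = Qf (γ.1 1 0) (γ.1 1 1 - γ.1 0 0) (-γ.1 0 1) o / jden γ o ^ 2 := by
    have hd := sl2_det_c γ
    rw [eq_div_iff (pow_ne_zero 2 hj)]
    unfold Qf
    rw [moeb_eq]
    field_simp
    unfold jden
    push_cast
    linear_combination ((γ.1 1 0 : ℂ) * o ^ 2 + (γ.1 1 1 - γ.1 0 0) * o - γ.1 0 1) * hd
  have hq : qz (γ.1 1 0) (γ.1 1 1 - γ.1 0 0) (-γ.1 0 1) (moeb γ o) =
      qz (γ.1 1 0) (γ.1 1 1 - γ.1 0 0) (-γ.1 0 1) o * e := by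
    rw [qz, hQ, him, qz, he]
    push_cast
    rw [← Complex.ofReal_pow, hn]
    field_simp
  have hq1 : qo (γ.1 1 0) (γ.1 1 1 - γ.1 0 0) (-γ.1 0 1) (moeb γ o) =
      qo (γ.1 1 0) (γ.1 1 1 - γ.1 0 0) (-γ.1 0 1) o := by
    have hnj : ‖jden γ o‖ ^ 2 ≠ 0 := pow_ne_zero 2 (norm_ne_zero_iff.mpr hj)
    have hio := uh_ne ho
    have key : ((γ.1 1 0 : ℝ) * ‖moeb γ o‖ ^ 2 + (γ.1 1 1 - γ.1 0 0) * (moeb γ o).re + (-γ.1 0 1))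
        * ‖jden γ o‖ ^ 2 = ((γ.1 1 0 : ℝ) * ‖o‖ ^ 2 + (γ.1 1 1 - γ.1 0 0) * o.re + (-γ.1 0 1)) := by
      have hre : ∀ o : ℂ, ((o.re : ℝ) : ℂ) = (o + conj o) / 2 := fun o => by
        rw [Complex.add_conj]; push_cast; ring
      have hnn : ∀ o : ℂ, ((‖o‖ : ℂ) ^ 2) = o * conj o := fun o => by
        rw [Complex.mul_conj, Complex.normSq_eq_norm_sq]; push_cast; rfl
      have hd := sl2_det_c γ
      apply Complex.ofReal_injective
      push_cast
      rw [hre, hre, hnn, hnn, hnn, ← moeb_conj, moeb_eq, moeb_eq, ← jden_conj]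
      have hjc' : jden γ (conj o) ≠ 0 := by rw [jden_conj]; exact hjc
      field_simp
      unfold jden
      linear_combination (2 * (γ.1 1 0 : ℂ) * o * conj o + (γ.1 1 1 - γ.1 0 0) * (o + conj o) - 2 * γ.1 0 1) * hd
    rw [qo, qo, him, ← key]
    field_simp
  rw [po, po, hw, hq, hq1, Phi_rot _ _ _ _ he1]

lemma radial_h {u : ℂ} {q1 r s D : ℝ} (hr : 0 < r) (hrs : r ≤ s) (hs : s ≤ 1)
    (hD : ‖u / r + q1 + conj u * r‖ ≤ D) :
    ‖u / s + q1 + conj u * s‖ ≤ 2 * D + ‖u‖ * (1 - r) ^ 2 / r := by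
  have hs0 : 0 < s := hr.trans_le hrs
  have hre : ∀ t : ℝ, 0 < t → (u / t + q1 + conj u * t).re = u.re * (1 / t + t) + q1 := by
    intro t ht
    simp [Complex.div_ofReal_re]; ring
  have him : ∀ t : ℝ, 0 < t → (u / t + q1 + conj u * t).im = u.im * (1 / t - t) := by
    intro t ht
    simp [Complex.div_ofReal_im]; ring
  have h1 : |(u / s + q1 + conj u * s).im| ≤ D := by
    refine le_trans ?_ ((Complex.abs_im_le_norm _).trans hD)
    rw [him s hs0, him r hr, abs_mul, abs_mul]
    have a1 : 0 ≤ 1 / s - s := by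
      have : 1 ≤ 1 / s := by rw [le_div_iff₀ hs0]; linarith
      linarith
    have a2 : 1 / s ≤ 1 / r := one_div_le_one_div_of_le hr hrs
    rw [abs_of_nonneg a1, abs_of_nonneg (a := 1 / r - r) (by linarith)]
    gcongr
  have h2 : |(u / s + q1 + conj u * s).re| ≤ D + ‖u‖ * (1 - r) ^ 2 / r := by
    have b1 := (Complex.abs_re_le_norm _).trans hD
    rw [hre r hr] at b1
    rw [hre s hs0]
    have b2 : u.re * (1 / s + s) + q1 = (u.re * (1 / r + r) + q1)
        - u.re * ((1 / r + r) - (1 / s + s)) := by ring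
    have b3 : 0 ≤ (1 / r + r) - (1 / s + s) := by
      have : (1 / r + r) - (1 / s + s) = (s - r) * (1 - r * s) / (r * s) := by
        field_simp; ring
      rw [this]
      apply div_nonneg _ (by positivity)
      apply mul_nonneg (by linarith)
      nlinarith
    have b4 : (1 / r + r) - (1 / s + s) ≤ (1 - r) ^ 2 / r := by
      have : (1 - r) ^ 2 / r = 1 / r + r - 2 := by field_simp; ring
      have h5 : 2 ≤ 1 / s + s := by
        have : 1 / s + s - 2 = (1 - s) ^ 2 / s := by field_simp; ring
        have : 0 ≤ (1 - s) ^ 2 / s := by positivity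
        linarith
      linarith
    rw [b2]
    calc _ ≤ |u.re * (1 / r + r) + q1| + |u.re * ((1 / r + r) - (1 / s + s))| := abs_sub _ _
      _ ≤ D + ‖u‖ * (1 - r) ^ 2 / r := by
        rw [abs_mul, abs_of_nonneg b3, mul_div_assoc]
        gcongr
        exact Complex.abs_re_le_norm _
  calc _ ≤ _ := Complex.norm_le_abs_re_add_abs_im _
    _ ≤ _ := by linarith

lemma Phi_bound (K : ℕ) (q : ℂ) (q1 : ℝ) {w : ℂ} (hw : w ≠ 0) (hw1 : ‖w‖ ≤ 1) {D r0 : ℝ}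
    (hr0 : 0 < r0) (hwr : r0 ≤ ‖w‖) (hD : ‖hfun q q1 w‖ ≤ D) :
    |Phi K q q1 w| ≤ (2 * D + ‖q‖ * (1 - ‖w‖) ^ 2 / r0) ^ K / r0 * (1 - ‖w‖) := by
  set r := ‖w‖ with hr
  have hr' : 0 < r := norm_pos_iff.mpr hw
  set e : ℂ := w / r with he
  have hrc : (r : ℂ) ≠ 0 := by exact_mod_cast hr'.ne'
  have he1 : ‖e‖ = 1 := by
    rw [he, norm_div, Complex.norm_real, Real.norm_of_nonneg hr'.le, div_self hr'.ne']
  have he0 : e ≠ 0 := by rw [he]; exact div_ne_zero hw hrc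
  have hc : conj e = e⁻¹ := by
    rw [Complex.inv_def, Complex.normSq_eq_norm_sq, he1]; simp
  set u := q / e with hu
  have hun : ‖u‖ = ‖q‖ := by rw [hu, norm_div, he1, div_one]
  have hcu : conj u = conj q * e := by rw [hu, map_div₀, hc, div_inv_eq_mul]
  have hh : ∀ s : ℝ, s ≠ 0 → hfun q q1 (s * e) = u / s + q1 + conj u * s := by
    intro s hs
    have : (s : ℂ) ≠ 0 := by exact_mod_cast hs
    rw [hcu, hu, hfun]; field_simp
  have hwe : w = r * e := by rw [he]; field_simp
  have hd : ∀ s ∈ Icc r 1, HasDerivWithinAt (fun s : ℝ => Phi K q q1 (s * e))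
      ((hfun q q1 (s * e) ^ K / s).re) (Icc r 1) s := by
    intro s hs
    have hs0 : 0 < s := hr'.trans_le hs.1
    have hsc : (s : ℂ) ≠ 0 := by exact_mod_cast hs0.ne'
    have h1 := Phi_deriv K q q1 (w := s * e) (mul_ne_zero hsc he0)
    have h2 : HasDerivAt (fun s : ℝ => (s : ℂ) * e) e s := by
      simpa using (Complex.ofRealCLM.hasDerivAt (x := s)).mul_const e
    have h3 := (h1.comp_hasDerivAt s h2).hasDerivWithinAt (s := Icc r 1)
    refine h3.congr_deriv ?_
    rw [Lre_apply]
    congr 1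
    field_simp
  have hb : ∀ s ∈ Icc r 1, ‖(hfun q q1 (s * e) ^ K / s).re‖ ≤
      (2 * D + ‖q‖ * (1 - r) ^ 2 / r0) ^ K / r0 := by
    intro s hs
    have hs0 : 0 < s := hr'.trans_le hs.1
    refine (Complex.abs_re_le_norm _).trans ?_
    rw [norm_div, norm_pow, Complex.norm_real, Real.norm_of_nonneg hs0.le]
    have : ‖hfun q q1 (s * e)‖ ≤ 2 * D + ‖q‖ * (1 - r) ^ 2 / r0 := by
      rw [hh s hs0.ne', ← hun]
      refine (radial_h hr' hs.1 hs.2 (D := D) ?_).trans ?_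
      · rw [← hh r hr'.ne', ← hwe]; exact hD
      · gcongr
    have hD0 : 0 ≤ D := (norm_nonneg _).trans hD
    gcongr
    exact hwr.trans hs.1
  have := (convex_Icc r 1).norm_image_sub_le_of_norm_hasDerivWithin_le hd hb
    (right_mem_Icc.mpr hw1) (left_mem_Icc.mpr hw1)
  rw [← hwe] at this
  have h1 : Phi K q q1 (((1:ℝ) : ℂ) * e) = 0 := Phi_circle K q q1 (by simpa using he1)
  rw [h1, sub_zero, Real.norm_eq_abs, Real.norm_eq_abs, abs_of_nonpos (a := r - 1) (by linarith)] at this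
  linarith

lemma po_bound (K : ℕ) (hK : 1 ≤ K) (A B C : ℝ) {z : ℂ} (hz : z ∈ UH) {c : ℝ} (hc : 0 < c) :
    ∃ M : ℝ, ∀ o ∈ UH, 1 + ‖o‖ ≤ c * ‖z - o‖ → |po K A B C o z| ≤ M * wt o ^ 2 := by
  set r0 : ℝ := 1 / ((1 + ‖z‖) * c) with hr0
  have hr0p : 0 < r0 := by positivity
  have hzi : 0 < z.im := hz
  set N := |A| + |B| + |C| with hN
  set X := 4 * z.im * c ^ 2 with hX
  set Y := 2 * ‖Qf A B C z‖ * c ^ 2 with hY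
  set Dd := 2 * Y + N * X ^ 2 / r0 with hDd
  refine ⟨Dd ^ K / r0 * X, fun o ho h => ?_⟩
  have hoi : 0 < o.im := ho
  have hwt := wt_pos ho
  have hwt1 := wt_le ho
  have hzo : 0 < ‖z - o‖ := by
    by_contra hh
    have : ‖z - o‖ = 0 := le_antisymm (not_lt.mp hh) (norm_nonneg _)
    rw [this] at h
    have := norm_nonneg o
    linarith
  have hzo' : z ≠ o := by rintro rfl; simp at hzo
  have hle := norm_sub_le_sub_conj hz ho
  have hzc : 0 < ‖z - conj o‖ := hzo.trans_le hle
  have hwn : ‖wz o z‖ = ‖z - o‖ / ‖z - conj o‖ := by rw [wz, norm_div]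
  have hw1 : ‖wz o z‖ ≤ 1 := by rw [hwn]; exact div_le_one_of_le₀ hle hzc.le
  have hw0 : wz o z ≠ 0 := by
    rw [← norm_pos_iff, hwn]; positivity
  have hno := norm_nonneg o
  have hnz := norm_nonneg z
  have hsq : 1 + ‖o‖ ^ 2 ≤ c ^ 2 * ‖z - o‖ ^ 2 := by
    calc 1 + ‖o‖ ^ 2 ≤ (1 + ‖o‖) ^ 2 := by nlinarith
      _ ≤ (c * ‖z - o‖) ^ 2 := by gcongr
      _ = _ := by ring
  have hwr : r0 ≤ ‖wz o z‖ := by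
    rw [hwn, hr0, div_le_div_iff₀ (by positivity) hzc]
    have : ‖z - conj o‖ ≤ ‖z‖ + ‖o‖ := by
      simpa using norm_sub_le z (conj o)
    calc 1 * ‖z - conj o‖ ≤ (1 + ‖z‖) * (1 + ‖o‖) := by nlinarith
      _ ≤ (1 + ‖z‖) * (c * ‖z - o‖) := by gcongr
      _ = _ := by ring
  have hqn : ‖qz A B C o‖ ≤ N / wt o := by
    rw [qz, norm_div, Complex.norm_real, Real.norm_of_nonneg (by positivity), wt, div_div_eq_mul_div]
    have : ‖Qf A B C o‖ ≤ N * (1 + ‖o‖ ^ 2) := by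
      have h1 : ‖Qf A B C o‖ ≤ |A| * ‖o‖ ^ 2 + |B| * ‖o‖ + |C| := by
        unfold Qf
        refine (norm_add₃_le).trans ?_
        simp
      have : |B| * ‖o‖ ≤ |B| * (1 + ‖o‖ ^ 2) := by
        gcongr; nlinarith
      have := abs_nonneg A
      have := abs_nonneg C
      have := sq_nonneg ‖o‖
      rw [hN]
      nlinarith
    calc _ ≤ N * (1 + ‖o‖ ^ 2) / (2 * o.im) := by gcongr
      _ ≤ _ := by gcongr; linarith
  have hsub : ‖z - conj o‖ ^ 2 - ‖z - o‖ ^ 2 = 4 * z.im * o.im := by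
    rw [← Complex.normSq_eq_norm_sq, ← Complex.normSq_eq_norm_sq, Complex.normSq_apply,
      Complex.normSq_apply]
    simp; ring
  have h1r : 1 - ‖wz o z‖ ≤ X * wt o := by
    have a1 : 1 - ‖wz o z‖ ≤ 1 - ‖wz o z‖ ^ 2 := by
      have := norm_nonneg (wz o z); nlinarith
    have a2 : 1 - ‖wz o z‖ ^ 2 = 4 * z.im * o.im / ‖z - conj o‖ ^ 2 := by
      rw [hwn, ← hsub]; field_simp
    rw [a2] at a1
    refine a1.trans ?_
    rw [wt, hX, mul_div_assoc', div_le_div_iff₀ (by positivity) (by positivity)]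
    have : ‖z - o‖ ^ 2 ≤ ‖z - conj o‖ ^ 2 := by gcongr
    have : c ^ 2 * ‖z - o‖ ^ 2 ≤ c ^ 2 * ‖z - conj o‖ ^ 2 := by gcongr
    calc 4 * z.im * o.im * (1 + ‖o‖ ^ 2) ≤ 4 * z.im * o.im * (c ^ 2 * ‖z - conj o‖ ^ 2) := by
          gcongr; linarith
      _ = _ := by ring
  have hhb : ‖hfun (qz A B C o) (qo A B C o) (wz o z)‖ ≤ Y * wt o := by
    rw [hfun_eq A B C ho hz hzo', norm_div, norm_mul, norm_mul, norm_neg, Complex.norm_real,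
      Real.norm_of_nonneg (by positivity), hY, wt, mul_div_assoc',
      div_le_div_iff₀ (by positivity) (by positivity)]
    have : 1 + ‖o‖ ^ 2 ≤ c ^ 2 * (‖z - o‖ * ‖z - conj o‖) := by
      refine hsq.trans ?_
      rw [sq ‖z - o‖]; gcongr
    calc 2 * o.im * ‖Qf A B C z‖ * (1 + ‖o‖ ^ 2)
        ≤ 2 * o.im * ‖Qf A B C z‖ * (c ^ 2 * (‖z - o‖ * ‖z - conj o‖)) := by gcongr
      _ = _ := by ring
  have h := Phi_bound K (qz A B C o) (qo A B C o) hw0 hw1 hr0p hwr hhb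
  have hfin : 2 * (Y * wt o) + ‖qz A B C o‖ * (1 - ‖wz o z‖) ^ 2 / r0 ≤ Dd * wt o := by
    have : ‖qz A B C o‖ * (1 - ‖wz o z‖) ^ 2 / r0 ≤ N / wt o * (X * wt o) ^ 2 / r0 := by
      have : 0 ≤ 1 - ‖wz o z‖ := by linarith
      gcongr
    have e : N / wt o * (X * wt o) ^ 2 / r0 = N * X ^ 2 / r0 * wt o := by field_simp
    rw [e] at this
    rw [hDd]; linarith
  have hY0 : 0 ≤ Y := by positivity
  have hN0 : 0 ≤ N := by positivity
  have hDd0 : 0 ≤ Dd := by positivity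
  have h1r0 : 0 ≤ 1 - ‖wz o z‖ := by linarith
  calc |po K A B C o z| ≤ _ := h
    _ ≤ (Dd * wt o) ^ K / r0 * (X * wt o) := by gcongr
    _ = Dd ^ K / r0 * X * wt o ^ (K + 1) := by rw [mul_pow]; ring
    _ ≤ _ := by
      refine mul_le_mul_of_nonneg_left
        (pow_le_pow_of_le_one (wt_pos ho).le (wt_le ho) (by omega)) (by positivity)

/-- The sum of the `p_o` over an orbit. -/
def Ptot (K : ℕ) (A B C : ℝ) (ϱ z : ℂ) : ℝ := ∑' o : orbit ϱ, po K A B C (o : ℂ) z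

lemma Ptot_moeb (K : ℕ) (γ : SL2Z) {ϱ z : ℂ} (h : ϱ ∈ UH) (hz : z ∈ UH) :
    Ptot K (γ.1 1 0) (γ.1 1 1 - γ.1 0 0) (-γ.1 0 1) ϱ (moeb γ z) =
      Ptot K (γ.1 1 0) (γ.1 1 1 - γ.1 0 0) (-γ.1 0 1) ϱ z := by
  unfold Ptot
  rw [← (orbitEquiv h γ).tsum_eq]
  refine tsum_congr fun o => ?_
  exact po_moeb K γ (orbit_sub h o.2) hz

lemma Ptot_deriv (K : ℕ) (hK : 1 ≤ K) (A B C : ℝ) {ϱ z : ℂ} (h : ϱ ∈ UH) (hz : z ∈ UH)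
    (hzo : z ∉ orbit ϱ) :
    HasFDerivAt (Ptot K A B C ϱ) (Lre (I ^ K * (poin (K + 1) ϱ z * Qf A B C z ^ K))) z := by
  obtain ⟨r, hr, c, hc, hbs, hb⟩ := local_bound h hz
  obtain ⟨M, hM⟩ := po_bound K hK A B C hz hc
  have hne : ∀ o ∈ orbit ϱ, o ≠ z := by rintro o ho rfl; exact hzo ho
  have hs0 : Summable fun o : orbit ϱ => po K A B C (o : ℂ) z := by
    refine Summable.of_norm_bounded ((orbit_summable h).mul_left M) fun o => ?_
    exact hM o (orbit_sub h o.2) (hb z (mem_ball_self hr) o o.2 (hne o o.2))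
  obtain ⟨N, hN⟩ : ∃ N : ℝ, ∀ w ∈ ball z r, ‖Qf A B C w‖ ≤ N := by
    have hcont : Continuous (Qf A B C) := by unfold Qf; fun_prop
    obtain ⟨N, hN⟩ := ((isCompact_closedBall z r).image hcont).isBounded.exists_norm_le
    exact ⟨N, fun w hw => hN _ ⟨w, ball_subset_closedBall hw, rfl⟩⟩
  have hder := hasFDerivAt_tsum_of_isPreconnected (𝕜 := ℝ) (x₀ := z) (x := z)
    (u := fun o : orbit ϱ => ((2 * c ^ 2) ^ (K + 1) * N ^ K) * wt (o : ℂ) ^ 2)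
    (f := fun (o : orbit ϱ) w => po K A B C (o : ℂ) w)
    (f' := fun (o : orbit ϱ) w => Lre (I ^ K * (polePart (K + 1) (o : ℂ) w * Qf A B C w ^ K)))
    ((orbit_summable h).mul_left _) (isOpen_ball (x := z) (ε := r))
    (convex_ball z r).isPreconnected ?_ ?_ (mem_ball_self hr) hs0 (mem_ball_self hr)
  · refine hder.congr_fderiv ?_
    have hsum := poin_summable (k := K + 1) (by omega) h hz hzo
    have h1 : HasSum (fun o : orbit ϱ => I ^ K * (polePart (K + 1) (o : ℂ) z * Qf A B C z ^ K))
        (I ^ K * (poin (K + 1) ϱ z * Qf A B C z ^ K)) :=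
      (hsum.hasSum.mul_right _).mul_left _
    have h2 : HasSum (fun o : orbit ϱ => Lre (I ^ K * (polePart (K + 1) (o : ℂ) z * Qf A B C z ^ K)))
        (Lre (I ^ K * (poin (K + 1) ϱ z * Qf A B C z ^ K))) :=
      h1.mapL ((ContinuousLinearMap.compL ℝ ℂ ℂ ℝ Complex.reCLM).comp (ContinuousLinearMap.mul ℝ ℂ))
    exact h2.tsum_eq
  · intro o w hw
    refine po_deriv K A B C (orbit_sub h o.2) (hbs hw) ?_
    intro hwo
    have := hb w hw o o.2 (hne o o.2)
    rw [hwo] at this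
    simp at this
    have := norm_nonneg (o : ℂ)
    linarith
  · intro o w hw
    refine (Lre_norm _).trans ?_
    rw [norm_mul, norm_pow, Complex.norm_I, one_pow, one_mul, norm_mul, norm_pow]
    have h1 := polePart_bound (k := K + 1) (by omega) (orbit_sub h o.2) (hbs hw) hc
      (hb w hw o o.2 (hne o o.2))
    calc _ ≤ ((2 * c ^ 2) ^ (K + 1) * wt (o : ℂ) ^ 2) * N ^ K := by
          gcongr; exact hN w hw
      _ = _ := by ring

lemma piece_integral {U : Set ℂ} {P : ℂ → ℝ} {F : ℂ → ℂ} {c : ℂ}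
    (hF : ContinuousOn F U) (hP : ∀ z ∈ U, HasFDerivAt P (Lre (c * F z)) z) {σ : ℝ → ℂ} {a b : ℝ}
    (hab : a ≤ b) (hσ : ContDiffOn ℝ 1 σ (Icc a b)) (hU : ∀ t ∈ Icc a b, σ t ∈ U) :
    IntervalIntegrable (fun t => F (σ t) * deriv σ t) volume a b ∧
    (c * ∫ t in a..b, F (σ t) * deriv σ t).re = P (σ b) - P (σ a) := by
  rcases hab.eq_or_lt with rfl | hlt
  · simp
  have hd : ContinuousOn (derivWithin σ (Icc a b)) (Icc a b) :=
    hσ.continuousOn_derivWithin (uniqueDiffOn_Icc hlt) le_rfl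
  have hσc : ContinuousOn σ (Icc a b) := hσ.continuousOn
  have hder : ∀ t ∈ Ioo a b, HasDerivAt σ (deriv σ t) t := by
    intro t ht
    have := (hσ.differentiableOn one_ne_zero).differentiableAt (Icc_mem_nhds ht.1 ht.2)
    exact this.hasDerivAt
  have heq : ∀ t ∈ Ioo a b, derivWithin σ (Icc a b) t = deriv σ t := fun t ht =>
    derivWithin_of_mem_nhds (Icc_mem_nhds ht.1 ht.2)
  have hcont : ContinuousOn (fun t => F (σ t) * derivWithin σ (Icc a b) t) (Icc a b) :=
    (hF.comp hσc hU).mul hd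
  have hIntg : IntervalIntegrable (fun t => F (σ t) * deriv σ t) volume a b := by
    have h1 : IntervalIntegrable (fun t => F (σ t) * derivWithin σ (Icc a b) t) volume a b :=
      ContinuousOn.intervalIntegrable_of_Icc hab hcont
    rw [intervalIntegrable_iff_integrableOn_Ioo_of_le hab] at h1 ⊢
    refine h1.congr_fun (fun t ht => ?_) measurableSet_Ioo
    simp only [heq t ht]
  refine ⟨hIntg, ?_⟩
  rw [← intervalIntegral.integral_const_mul]
  have h2 : IntervalIntegrable (fun t => c * (F (σ t) * deriv σ t)) volume a b := hIntg.const_mul c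
  have h3 := Complex.reCLM.intervalIntegral_comp_comm h2
  simp only [Complex.reCLM_apply] at h3
  rw [← h3]
  refine intervalIntegral.integral_eq_sub_of_hasDerivAt_of_le (f := fun t => P (σ t)) hab ?_ ?_ ?_
  · intro t ht
    exact ((hP _ (hU t ht)).continuousAt.comp_continuousWithinAt (hσc t ht))
  · intro t ht
    have h4 := (hP _ (hU t (Ioo_subset_Icc_self ht))).comp_hasDerivAt t (hder t ht)
    refine h4.congr_deriv ?_
    rw [Lre_apply, mul_assoc]
  · rw [intervalIntegrable_iff] at h2 ⊢
    exact Complex.reCLM.integrable_comp h2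

lemma path_integral {U : Set ℂ} {P : ℂ → ℝ} {F : ℂ → ℂ} {c : ℂ}
    (hF : ContinuousOn F U) (hP : ∀ z ∈ U, HasFDerivAt P (Lre (c * F z)) z) {σ : ℝ → ℂ}
    (hσ : PiecewiseC1 σ) (hU : ∀ t ∈ Icc (0:ℝ) 1, σ t ∈ U) :
    (c * pathInt F σ).re = P (σ 1) - P (σ 0) := by
  obtain ⟨-, n, t, hn, ht0, htn, hmono, hC⟩ := hσ
  have hm : ∀ m ≤ n, 0 ≤ t m := by
    intro m
    induction m with
    | zero => intro _; exact ht0.ge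
    | succ m ih => intro h; exact (ih (by omega)).trans (hmono m (by omega))
  have hm' : ∀ m ≤ n, t (n - m) ≤ 1 := by
    intro m
    induction m with
    | zero => intro _; simpa using htn.le
    | succ m ih =>
      intro h
      have h1 := hmono (n - (m + 1)) (by omega)
      rw [show n - (m + 1) + 1 = n - m by omega] at h1
      exact h1.trans (ih (by omega))
  have hsub : ∀ i < n, ∀ s ∈ Icc (t i) (t (i + 1)), σ s ∈ U := by
    intro i hi s hs
    refine hU s ⟨(hm i hi.le).trans hs.1, hs.2.trans ?_⟩
    have := hm' (n - (i + 1)) (by omega)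
    rwa [show n - (n - (i + 1)) = i + 1 by omega] at this
  have key := fun i (hi : i < n) => piece_integral hF hP (hmono i hi) (hC i hi) (hsub i hi)
  have hsum := intervalIntegral.sum_integral_adjacent_intervals (a := t) (n := n)
    (f := fun t => F (σ t) * deriv σ t) (μ := volume) (fun i hi => (key i hi).1)
  rw [ht0, htn] at hsum
  rw [pathInt, ← hsum, Finset.mul_sum, Complex.re_sum,
    Finset.sum_congr rfl (fun i hi => (key i (Finset.mem_range.mp hi)).2),
    Finset.sum_range_sub (fun i => P (σ (t i))), ht0, htn]

lemma Qpoly_eq (γ : SL2Z) (z : ℂ) :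
    Qpoly γ z = Qf (γ.1 1 0) (γ.1 1 1 - γ.1 0 0) (-γ.1 0 1) z := by
  unfold Qpoly Qf; push_cast; ring

lemma geodFactor_eq (k : ℕ) (γ : SL2Z) :
    geodFactor k γ = ((1 / Real.sqrt (discr γ)) ^ (k - 1) : ℝ) * I ^ (k - 1) := by
  unfold geodFactor; rw [div_eq_mul_inv, mul_pow]; push_cast; rw [one_div]; ring

/-- The candidate form. -/
def canForm (k : ℕ) {n : ℕ} (ϱ : Fin n → ℂ) (α : Fin n → ℝ) (z : ℂ) : ℂ :=
  ∑ i, (α i : ℂ) * poin k (ϱ i) z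

lemma canForm_isCanonical (k : ℕ) (hk : 2 ≤ k)
    (n : ℕ) (ϱ : Fin n → ℂ) (hϱ : ∀ i, ϱ i ∈ UH)
    (hdist : ∀ i j, i ≠ j → ∀ γ : SL2Z, moeb γ (ϱ i) ≠ ϱ j) (α : Fin n → ℝ) :
    IsCanonicalForm k ϱ α (canForm k ϱ α) := by
  have hreg : ∀ z ∈ UH \ orbitUnion ϱ, z ∈ UH ∧ ∀ i, z ∉ orbit (ϱ i) := by
    rintro z ⟨hz, hz2⟩
    exact ⟨hz, fun i hi => hz2 (mem_iUnion.mpr ⟨i, hi⟩)⟩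
  have hdiff : ∀ z ∈ UH \ orbitUnion ϱ, DifferentiableAt ℂ (canForm k ϱ α) z := by
    intro z hz
    have := hreg z hz
    unfold canForm
    exact DifferentiableAt.fun_sum fun i _ => (poin_diff hk (hϱ i) this.1 (this.2 i)).const_mul _
  refine ⟨fun z hz => (hdiff z hz).differentiableWithinAt, ?_, ?_, ?_, ?_⟩
  · intro γ z hz
    unfold canForm
    rw [Finset.mul_sum]
    refine Finset.sum_congr rfl fun i _ => ?_
    rw [poin_moeb (hϱ i) hz.1, jden]; ring
  · intro ε hε
    have : ∀ i, ∃ T : ℝ, ∀ z ∈ UH, T < z.im → ‖poin k (ϱ i) z‖ < ε / ((n + 1) * (|α i| + 1)) :=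
      fun i => poin_cusp hk (hϱ i) _ (by positivity)
    choose T hT using this
    refine ⟨∑ i, |T i|, fun z hz hzT => ?_⟩
    have hi : ∀ i, ‖(α i : ℂ) * poin k (ϱ i) z‖ ≤ ε / (n + 1) := by
      intro i
      have h1 : T i < z.im := by
        refine lt_of_le_of_lt ((le_abs_self _).trans ?_) hzT
        exact Finset.single_le_sum (f := fun i => |T i|) (fun i _ => abs_nonneg _) (Finset.mem_univ i)
      have h2 := (hT i z hz.1 h1).le
      rw [norm_mul, Complex.norm_real, Real.norm_eq_abs]
      calc |α i| * ‖poin k (ϱ i) z‖ ≤ (|α i| + 1) * (ε / ((n + 1) * (|α i| + 1))) := by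
            gcongr; linarith
        _ = _ := by field_simp
    calc ‖canForm k ϱ α z‖ ≤ ∑ i, ‖(α i : ℂ) * poin k (ϱ i) z‖ := norm_sum_le _ _
      _ ≤ ∑ i : Fin n, ε / (n + 1) := Finset.sum_le_sum fun i _ => hi i
      _ = n * (ε / (n + 1)) := by simp
      _ < ε := by
        rw [mul_div_assoc', div_lt_iff₀ (by positivity)]; nlinarith
  · intro i
    classical
    have : ∀ j, ∃ r > 0, ∃ B : ℝ, ∀ z ∈ ball (ϱ i) r,
        ‖poin k (ϱ j) z - (if j = i then polePart k (ϱ i) z else 0)‖ ≤ B := by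
      intro j
      obtain ⟨r, hr, B, hB⟩ := poin_local hk (hϱ j) (hϱ i)
      refine ⟨r, hr, B, fun z hz => ?_⟩
      by_cases h : j = i
      · rw [if_pos h]
        exact (hB z hz).2 (h ▸ orbit_self _)
      · rw [if_neg h, sub_zero]
        refine (hB z hz).1 ?_
        rintro ⟨γ, hγ⟩
        exact hdist j i h γ hγ.symm
    choose r hr B hB using this
    have hδ : ∃ δ > 0, ∀ j, δ ≤ r j := by
      have hne : (Finset.univ : Finset (Fin n)).Nonempty := ⟨i, Finset.mem_univ _⟩
      refine ⟨Finset.univ.inf' hne r, ?_, fun j => Finset.inf'_le _ (Finset.mem_univ j)⟩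
      rw [gt_iff_lt, Finset.lt_inf'_iff]
      exact fun j _ => hr j
    obtain ⟨δ, hδ0, hδ⟩ := hδ
    refine ⟨δ, hδ0, ∑ j, |α j| * B j, fun z hz => ?_⟩
    have e : canForm k ϱ α z - (α i : ℂ) * polePart k (ϱ i) z =
        ∑ j, (α j : ℂ) * (poin k (ϱ j) z - (if j = i then polePart k (ϱ i) z else 0)) := by
      simp only [mul_sub, Finset.sum_sub_distrib, mul_ite, mul_zero, Finset.sum_ite_eq',
        Finset.mem_univ, if_true, canForm]
    rw [e]
    refine (norm_sum_le _ _).trans (Finset.sum_le_sum fun j _ => ?_)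
    rw [norm_mul, Complex.norm_real, Real.norm_eq_abs]
    gcongr
    exact hB j z (ball_subset_ball (hδ j) hz.1.1)
  · intro γ _ _ z₀ hz₀ σ hσ h0 h1 hU
    obtain ⟨K, rfl⟩ : ∃ K, k = K + 1 := ⟨k - 1, by omega⟩
    set A : ℝ := ((γ.1 1 0 : ℤ) : ℝ) with hA
    set B : ℝ := ((γ.1 1 1 : ℤ) : ℝ) - ((γ.1 0 0 : ℤ) : ℝ) with hB
    set C : ℝ := -((γ.1 0 1 : ℤ) : ℝ) with hC
    have h := path_integral (U := UH \ orbitUnion ϱ)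
      (P := fun z => ∑ i, α i * Ptot K A B C (ϱ i) z)
      (F := fun z => canForm (K + 1) ϱ α z * Qpoly γ z ^ K) (c := I ^ K) ?_ ?_ hσ hU
    · rw [geodFactor_eq, mul_assoc, Complex.re_ofReal_mul]
      simp only [Nat.add_sub_cancel]
      rw [h, h1, h0]
      simp only [hA, hB, hC, Ptot_moeb K γ (hϱ _) hz₀.1, sub_self, mul_zero]
    · intro z hz
      refine ((hdiff z hz).continuousAt.mul ?_).continuousWithinAt
      unfold Qpoly; fun_prop
    · intro z hz
      have hz' := hreg z hz
      have hd : HasFDerivAt (fun z => ∑ i, α i * Ptot K A B C (ϱ i) z)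
          (∑ i, α i • Lre (I ^ K * (poin (K + 1) (ϱ i) z * Qf A B C z ^ K))) z :=
        HasFDerivAt.fun_sum fun i _ =>
          (Ptot_deriv K (by omega) A B C (hϱ i) hz'.1 (hz'.2 i)).const_mul (α i)
      refine hd.congr_fderiv ?_
      ext v
      rw [Lre_apply, sum_apply, Qpoly_eq, canForm, Finset.sum_mul, Finset.mul_sum,
        Finset.sum_mul, Complex.re_sum]
      refine Finset.sum_congr rfl fun i _ => ?_
      rw [smul_apply, Lre_apply, smul_eq_mul, ← Complex.re_ofReal_mul]
      congr 1
      simp only [← hA, ← hB, ← hC]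
      ring

section Uniqueness
open Filter Topology

lemma orbitUnion_countable {n : ℕ} (ϱ : Fin n → ℂ) : (orbitUnion ϱ).Countable := by
  have : Countable (Matrix (Fin 2) (Fin 2) ℤ) := inferInstanceAs (Countable (Fin 2 → Fin 2 → ℤ))
  have : Countable SL2Z := Subtype.val_injective.countable
    (f := (Subtype.val : {A : Matrix (Fin 2) (Fin 2) ℤ // A.det = 1} → _))
  refine countable_iUnion fun i => ?_
  have : orbit (ϱ i) = range (fun γ : SL2Z => moeb γ (ϱ i)) := by
    ext z; simp [orbit, eq_comm]
  rw [this]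
  exact countable_range _

lemma exists_path {n : ℕ} {ϱ : Fin n → ℂ} {z₀ z₁ : ℂ} (h0 : z₀ ∈ UH \ orbitUnion ϱ)
    (h1 : z₁ ∈ UH \ orbitUnion ϱ) (hne : z₁ ≠ z₀) :
    ∃ σ : ℝ → ℂ, ContDiff ℝ 1 σ ∧ σ 0 = z₀ ∧ σ 1 = z₁ ∧
      ∀ t ∈ Icc (0:ℝ) 1, σ t ∈ UH \ orbitUnion ϱ := by
  have hΔ : z₁ - z₀ ≠ 0 := sub_ne_zero.mpr hne
  set σ : ℝ → ℝ → ℂ := fun s t => z₀ + (z₁ - z₀) * (t + I * s * t * (1 - t)) with hσ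
  have e0 : ∀ s, σ s 0 = z₀ := fun s => by simp [hσ]
  have e1 : ∀ s, σ s 1 = z₁ := fun s => by simp [hσ]
  have hsm : ∀ s, ContDiff ℝ 1 (σ s) := by
    intro s
    have : ContDiff ℝ 1 (fun t : ℝ => (t : ℂ)) := Complex.ofRealCLM.contDiff
    simp only [hσ]
    fun_prop
  have hz0 : 0 < z₀.im := h0.1
  have hz1 : 0 < z₁.im := h1.1
  set m := min z₀.im z₁.im with hm
  have hm0 : 0 < m := lt_min hz0 hz1
  set s1 : ℝ := m / (|(z₁ - z₀).re| + 1) with hs1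
  have hs10 : 0 < s1 := by positivity
  have him : ∀ s ∈ Ioo 0 s1, ∀ t ∈ Icc (0:ℝ) 1, σ s t ∈ UH := by
    intro s hs t ht
    show 0 < (σ s t).im
    have e : (σ s t).im = (1 - t) * z₀.im + t * z₁.im + s * (t * (1 - t)) * (z₁ - z₀).re := by
      simp [hσ]; ring
    rw [e]
    have a1 : m ≤ (1 - t) * z₀.im + t * z₁.im := by
      have := min_le_left z₀.im z₁.im
      have := min_le_right z₀.im z₁.im
      nlinarith [ht.1, ht.2]
    have a2 : |s * (t * (1 - t)) * (z₁ - z₀).re| < m := by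
      have b1 : t * (1 - t) ≤ 1 := by nlinarith [ht.1, ht.2]
      have b0 : 0 ≤ t * (1 - t) := mul_nonneg ht.1 (by linarith [ht.2])
      rw [abs_mul, abs_of_nonneg (mul_nonneg hs.1.le b0)]
      calc s * (t * (1 - t)) * |(z₁ - z₀).re| ≤ s * 1 * |(z₁ - z₀).re| := by
            have := hs.1.le
            gcongr
        _ ≤ s * (|(z₁ - z₀).re| + 1) := by nlinarith [hs.1]
        _ < s1 * (|(z₁ - z₀).re| + 1) := by
            have := hs.2
            gcongr
        _ = m := by rw [hs1]; field_simp
    have := (abs_lt.mp a2).1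
    linarith
  have hbad : (⋃ o ∈ orbitUnion ϱ, {s : ℝ | ∃ t ∈ Icc (0:ℝ) 1, σ s t = o}).Countable := by
    refine (orbitUnion_countable ϱ).biUnion fun o ho => ?_
    apply Set.Subsingleton.countable
    rintro s ⟨t, ht, hst⟩ s' ⟨t', ht', hst'⟩
    have h2 : (z₁ - z₀) * (t + I * s * t * (1 - t)) = (z₁ - z₀) * (t' + I * s' * t' * (1 - t')) := by
      have := hst.trans hst'.symm
      simpa [hσ] using this
    have h3 := mul_left_cancel₀ hΔ h2
    have hre := congrArg Complex.re h3
    have him' := congrArg Complex.im h3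
    simp at hre him'
    subst hre
    have ht0 : t ≠ 0 := by
      rintro rfl; rw [e0] at hst; exact h0.2 (hst ▸ ho)
    have ht1 : 1 - t ≠ 0 := by
      intro h
      have : t = 1 := by linarith
      rw [this, e1] at hst; exact h1.2 (hst ▸ ho)
    have h4 : s * (t * (1 - t)) = s' * (t * (1 - t)) := by linear_combination him'
    exact mul_right_cancel₀ (mul_ne_zero ht0 ht1) h4
  obtain ⟨s, hs, hsb⟩ := (hbad.dense_compl ℝ).inter_open_nonempty (Ioo 0 s1) isOpen_Ioo
    (nonempty_Ioo.mpr hs10)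
  refine ⟨σ s, hsm s, e0 s, e1 s, fun t ht => ⟨him s hs t ht, fun ho => hsb ?_⟩⟩
  exact mem_biUnion ho ⟨t, ht, rfl⟩

lemma moeb_reg {n : ℕ} {ϱ : Fin n → ℂ} (h : ∀ i, ϱ i ∈ UH) {z : ℂ} (hz : z ∈ UH \ orbitUnion ϱ)
    (γ : SL2Z) : moeb γ z ∈ UH \ orbitUnion ϱ := by
  refine ⟨moeb_mem hz.1, fun hh => hz.2 ?_⟩
  obtain ⟨i, hi⟩ := mem_iUnion.mp hh
  exact mem_iUnion.mpr ⟨i, (moeb_mem_orbit_iff (h i) hz.1 γ).mp hi⟩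

lemma moeb_continuousAt {z : ℂ} (hz : z ∈ UH) (γ : SL2Z) : ContinuousAt (moeb γ) z := by
  unfold moeb
  have := jden_ne (γ := γ) (uh_ne hz)
  unfold jden at this
  fun_prop (disch := assumption)

lemma jden_continuous (γ : SL2Z) : Continuous (jden γ) := by unfold jden; fun_prop

lemma eventually_reg {n : ℕ} {ϱ : Fin n → ℂ} (h : ∀ i, ϱ i ∈ UH) {z : ℂ} (hz : z ∈ UH) :
    ∀ᶠ w in 𝓝[≠] z, w ∈ UH \ orbitUnion ϱ := by
  obtain ⟨δ, hδ, hs⟩ := orbitUnion_sep h hz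
  rw [eventually_nhdsWithin_iff]
  filter_upwards [isOpen_UH.mem_nhds hz, ball_mem_nhds z hδ] with w h1 h2 h3
  refine ⟨h1, fun ho => ?_⟩
  have := hs w ho h3
  rw [mem_ball, dist_eq_norm, norm_sub_rev] at h2
  linarith

/-- The extension of the difference of two canonical forms to the upper half-plane. -/
lemma exists_extension (k : ℕ) (hk : 2 ≤ k)
    (n : ℕ) (ϱ : Fin n → ℂ) (hϱ : ∀ i, ϱ i ∈ UH) (α : Fin n → ℝ) {g1 g2 : ℂ → ℂ}
    (hg1 : IsCanonicalForm k ϱ α g1) (hg2 : IsCanonicalForm k ϱ α g2) :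
    ∃ g : ℂ → ℂ, DifferentiableOn ℂ g UH ∧ (∀ z ∈ UH \ orbitUnion ϱ, g z = g1 z - g2 z) ∧
      (∀ γ : SL2Z, ∀ z ∈ UH, g (moeb γ z) = jden γ z ^ (2 * k) * g z) ∧
      (∀ ε > 0, ∃ T : ℝ, ∀ z ∈ UH, T < z.im → ‖g z‖ ≤ ε) ∧
      (∀ γ : SL2Z, IsHyperbolic γ → IsPrimitive γ → ∀ E : ℂ → ℂ,
        (∀ z ∈ UH, HasDerivAt E (g z * Qpoly γ z ^ (k - 1)) z) →
        ∃ z₀ ∈ UH, (I ^ (k - 1) * (E (moeb γ z₀) - E z₀)).re = 0) := by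
  obtain ⟨d1, m1, c1, b1, v1⟩ := hg1
  obtain ⟨d2, m2, c2, b2, v2⟩ := hg2
  set f : ℂ → ℂ := fun z => g1 z - g2 z with hf
  have hopen := isOpen_reg hϱ
  have hfd : ∀ z ∈ UH \ orbitUnion ϱ, DifferentiableAt ℂ f z := fun z hz =>
    (d1.differentiableAt (hopen.mem_nhds hz)).sub (d2.differentiableAt (hopen.mem_nhds hz))
  have hfm : ∀ γ : SL2Z, ∀ z ∈ UH \ orbitUnion ϱ, f (moeb γ z) = jden γ z ^ (2 * k) * f z := by
    intro γ z hz
    simp only [hf, m1 γ z hz, m2 γ z hz, jden]; ring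
  have hbd0 : ∀ i, ∃ C : ℝ, ∀ᶠ w in 𝓝 (ϱ i), w ∈ UH \ orbitUnion ϱ → ‖f w‖ ≤ C := by
    intro i
    obtain ⟨δ1, hδ1, C1, h1⟩ := b1 i
    obtain ⟨δ2, hδ2, C2, h2⟩ := b2 i
    refine ⟨C1 + C2, ?_⟩
    filter_upwards [ball_mem_nhds _ hδ1, ball_mem_nhds _ hδ2] with w hw1 hw2 hw
    have hne : w ≠ ϱ i := by
      rintro rfl; exact hw.2 (mem_iUnion.mpr ⟨i, orbit_self _⟩)
    have a1 := h1 w ⟨⟨hw1, hne⟩, hw⟩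
    have a2 := h2 w ⟨⟨hw2, hne⟩, hw⟩
    calc ‖f w‖ = ‖(g1 w - (α i : ℂ) * polePart k (ϱ i) w) - (g2 w - (α i : ℂ) * polePart k (ϱ i) w)‖ := by
          simp [hf]
      _ ≤ _ := norm_sub_le _ _
      _ ≤ _ := by linarith
  have hbd : ∀ z ∈ UH, ∃ C : ℝ, ∀ᶠ w in 𝓝 z, w ∈ UH \ orbitUnion ϱ → ‖f w‖ ≤ C := by
    intro z hz
    by_cases hzo : z ∈ orbitUnion ϱ
    · obtain ⟨i, γ, rfl⟩ := mem_iUnion.mp hzo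
      obtain ⟨C, hC⟩ := hbd0 i
      have hcont := moeb_continuousAt hz γ⁻¹
      have hval := moeb_inv_moeb (γ := γ) (hϱ i)
      have ht : Tendsto (moeb γ⁻¹) (𝓝 (moeb γ (ϱ i))) (𝓝 (ϱ i)) := by
        have := hcont.tendsto; rwa [hval] at this
      have hj : Tendsto (fun w => ‖jden γ (moeb γ⁻¹ w)‖) (𝓝 (moeb γ (ϱ i))) (𝓝 ‖jden γ (ϱ i)‖) :=
        ((jden_continuous γ).norm.continuousAt.tendsto).comp ht
      refine ⟨(‖jden γ (ϱ i)‖ + 1) ^ (2 * k) * C, ?_⟩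
      filter_upwards [ht.eventually hC, hj.eventually (gt_mem_nhds (lt_add_one _))] with w hw1 hw2 hw
      have hr := moeb_reg hϱ hw γ⁻¹
      have h3 := hfm γ _ hr
      rw [moeb_moeb_inv hw.1] at h3
      rw [h3, norm_mul, norm_pow]
      have := hw1 hr
      gcongr
    · have hc := (hfd z ⟨hz, hzo⟩).continuousAt.norm
      refine ⟨‖f z‖ + 1, ?_⟩
      filter_upwards [hc.tendsto.eventually (gt_mem_nhds (lt_add_one _))] with w hw _
      exact hw.le
  set g : ℂ → ℂ := fun z => limUnder (𝓝[≠] z) f with hg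
  have hgf : ∀ z ∈ UH \ orbitUnion ϱ, g z = f z := by
    intro z hz
    exact ((hfd z hz).continuousAt.tendsto.mono_left nhdsWithin_le_nhds).limUnder_eq
  have hgd : ∀ z ∈ UH, DifferentiableAt ℂ g z := by
    intro z hz
    obtain ⟨C, hC⟩ := hbd z hz
    have h1 := (eventually_nhdsWithin_iff.mp (eventually_reg hϱ hz)).and hC
    obtain ⟨δ, hδ, hb⟩ := Metric.eventually_nhds_iff_ball.mp h1
    have h2 := Complex.differentiableOn_update_limUnder_of_bddAbove (f := f) (ball_mem_nhds z hδ)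
      (fun w hw => (hfd w ((hb w hw.1).1 hw.2)).differentiableWithinAt)
      (by
        refine ⟨C, ?_⟩
        rintro _ ⟨w, hw, rfl⟩
        exact (hb w hw.1).2 ((hb w hw.1).1 hw.2))
    have h3 := h2.differentiableAt (ball_mem_nhds z hδ)
    refine h3.congr_of_eventuallyEq ?_
    filter_upwards [ball_mem_nhds z hδ] with w hw
    by_cases hwz : w = z
    · subst hwz; simp [hg]
    · rw [Function.update_of_ne hwz]
      exact hgf w ((hb w hw).1 hwz)
  refine ⟨g, fun z hz => (hgd z hz).differentiableWithinAt, hgf, ?_, ?_, ?_⟩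
  · intro γ z hz
    have t1 : Tendsto (fun w => g (moeb γ w)) (𝓝[≠] z) (𝓝 (g (moeb γ z))) :=
      (((hgd _ (moeb_mem hz)).continuousAt.tendsto).comp (moeb_continuousAt hz γ)).mono_left
        nhdsWithin_le_nhds
    have t2 : Tendsto (fun w => jden γ w ^ (2 * k) * g w) (𝓝[≠] z) (𝓝 (jden γ z ^ (2 * k) * g z)) :=
      ((((jden_continuous γ).pow _).continuousAt.tendsto).mul
        (hgd _ hz).continuousAt.tendsto).mono_left nhdsWithin_le_nhds
    refine tendsto_nhds_unique_of_eventuallyEq t1 t2 ?_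
    filter_upwards [eventually_reg hϱ hz] with w hw
    rw [hgf w hw, hgf _ (moeb_reg hϱ hw γ), hfm γ w hw]
  · intro ε hε
    obtain ⟨T1, hT1⟩ := c1 (ε / 2) (by positivity)
    obtain ⟨T2, hT2⟩ := c2 (ε / 2) (by positivity)
    refine ⟨max T1 T2, fun z hz hzT => ?_⟩
    have t1 : Tendsto (fun w => ‖g w‖) (𝓝[≠] z) (𝓝 ‖g z‖) :=
      (hgd z hz).continuousAt.norm.tendsto.mono_left nhdsWithin_le_nhds
    refine le_of_tendsto t1 ?_
    have : ∀ᶠ w in 𝓝[≠] z, max T1 T2 < w.im :=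
      (Complex.continuous_im.continuousAt.tendsto.eventually (lt_mem_nhds hzT)).filter_mono
        nhdsWithin_le_nhds
    filter_upwards [eventually_reg hϱ hz, this] with w hw hwT
    rw [hgf w hw]
    have a1 := hT1 w hw (lt_of_le_of_lt (le_max_left _ _) hwT)
    have a2 := hT2 w hw (lt_of_le_of_lt (le_max_right _ _) hwT)
    exact (norm_sub_le _ _).trans (by linarith)
  · intro γ hγ hp E hE
    have hI : I ∈ UH := by simp [UH]
    obtain ⟨z₀, hz₀⟩ := (eventually_reg hϱ hI).exists
    refine ⟨z₀, hz₀.1, ?_⟩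
    by_cases hne : moeb γ z₀ = z₀
    · rw [hne]; simp
    obtain ⟨σ, hσ, h0, h1, hU⟩ := exists_path hz₀ (moeb_reg hϱ hz₀ γ) hne
    have hpc : PiecewiseC1 σ := by
      refine ⟨hσ.continuous.continuousOn, 1, fun i => i, one_pos, by simp, by simp, ?_, ?_⟩
      · intro i _; simp
      · intro i _; exact hσ.contDiffOn
    have w1 := v1 γ hγ hp z₀ hz₀ σ hpc h0 h1 hU
    have w2 := v2 γ hγ hp z₀ hz₀ σ hpc h0 h1 hU
    have hdis : 0 < (1 / Real.sqrt (discr γ)) ^ (k - 1) := by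
      have : 0 < discr γ := by
        unfold discr
        unfold IsHyperbolic at hγ
        have : (2:ℝ) < |((γ.1 0 0 + γ.1 1 1 : ℤ) : ℝ)| := by exact_mod_cast hγ
        have h2 : (2:ℝ) ^ 2 < |((γ.1 0 0 + γ.1 1 1 : ℤ) : ℝ)| ^ 2 := by gcongr
        rw [sq_abs] at h2
        linarith
      have := Real.sqrt_pos.mpr this
      positivity
    rw [geodFactor_eq, mul_assoc, Complex.re_ofReal_mul] at w1 w2
    have w1 := (mul_eq_zero.mp w1).resolve_left hdis.ne'
    have w2 := (mul_eq_zero.mp w2).resolve_left hdis.ne'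
    have hQc : Continuous (fun z => Qpoly γ z ^ (k - 1)) := by unfold Qpoly; fun_prop
    have hdc : Continuous (deriv σ) := hσ.continuous_deriv le_rfl
    have hIntg : ∀ h : ℂ → ℂ, DifferentiableOn ℂ h (UH \ orbitUnion ϱ) →
        IntervalIntegrable (fun t => h (σ t) * Qpoly γ (σ t) ^ (k - 1) * deriv σ t) volume 0 1 := by
      intro h hh
      refine ContinuousOn.intervalIntegrable_of_Icc zero_le_one ?_
      exact ((hh.continuousOn.comp hσ.continuous.continuousOn hU).mul
        (hQc.comp hσ.continuous).continuousOn).mul hdc.continuousOn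
    have hpi : pathInt (fun z => g z * Qpoly γ z ^ (k - 1)) σ =
        pathInt (fun z => g1 z * Qpoly γ z ^ (k - 1)) σ
          - pathInt (fun z => g2 z * Qpoly γ z ^ (k - 1)) σ := by
      unfold pathInt
      rw [← intervalIntegral.integral_sub (hIntg g1 d1) (hIntg g2 d2)]
      refine intervalIntegral.integral_congr fun t ht => ?_
      rw [uIcc_of_le zero_le_one] at ht
      simp only [hgf _ (hU t ht), hf]
      ring
    have hfin := path_integral (U := UH \ orbitUnion ϱ) (P := fun z => (I ^ (k - 1) * E z).re)
      (F := fun z => g z * Qpoly γ z ^ (k - 1)) (c := I ^ (k - 1)) ?_ ?_ hpc hU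
    · rw [hpi, mul_sub, Complex.sub_re, w1, w2, sub_zero, h0, h1] at hfin
      rw [mul_sub, Complex.sub_re, ← hfin]
    · intro z hz
      exact ((hgd z hz.1).continuousAt.mul hQc.continuousAt).continuousWithinAt
    · intro z hz
      exact hasFDerivAt_re ((hE z hz.1).const_mul _)

def qe (z : ℂ) : ℂ := cexp (2 * Real.pi * I * z)

lemma qe_ne (z : ℂ) : qe z ≠ 0 := Complex.exp_ne_zero _

lemma norm_qe (z : ℂ) : ‖qe z‖ = Real.exp (-2 * Real.pi * z.im) := by
  rw [qe, Complex.norm_exp]; congr 1; simp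

lemma qe_mem {z : ℂ} (hz : z ∈ UH) : qe z ∈ ball (0:ℂ) 1 := by
  have hz : 0 < z.im := hz
  rw [mem_ball_zero_iff, norm_qe, Real.exp_lt_one_iff]
  have := mul_pos Real.pi_pos hz
  linarith

lemma qe_add_int (z : ℂ) (n : ℤ) : qe (z + n) = qe z := by
  unfold qe
  rw [show 2 * Real.pi * I * (z + n) = 2 * Real.pi * I * z + n * (2 * Real.pi * I) by ring]
  exact Complex.exp_periodic.int_mul n _

lemma qe_deriv (z : ℂ) : HasDerivAt qe (2 * Real.pi * I * qe z) z := by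
  have := ((hasDerivAt_id z).const_mul (2 * Real.pi * I)).cexp
  refine this.congr_deriv ?_
  simp [qe]; ring

lemma exists_H {g : ℂ → ℂ} (hd : DifferentiableOn ℂ g UH) (hper : ∀ z ∈ UH, g (z + 1) = g z)
    (hc : ∀ ε > 0, ∃ T : ℝ, ∀ z ∈ UH, T < z.im → ‖g z‖ ≤ ε) :
    ∃ H : ℂ → ℂ, DifferentiableOn ℂ H (ball 0 1) ∧ H 0 = 0 ∧ ∀ z ∈ UH, H (qe z) = g z := by
  classical
  set f : ℂ → ℂ := UH.indicator g with hf
  have hfp : Function.Periodic f (1:ℝ) := by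
    intro z
    by_cases hz : z ∈ UH
    · have hz' : z + 1 ∈ UH := by simpa [UH] using hz
      simp [hf, Set.indicator_of_mem hz, Set.indicator_of_mem hz', hper z hz]
    · have hz' : z + 1 ∉ UH := by simpa [UH] using hz
      simp [hf, hz, hz']
  have hfd : ∀ z ∈ UH, DifferentiableAt ℂ f z := by
    intro z hz
    have h1 : DifferentiableAt ℂ g z := hd.differentiableAt (isOpen_UH.mem_nhds hz)
    refine h1.congr_of_eventuallyEq ?_
    filter_upwards [isOpen_UH.mem_nhds hz] with w hw
    simp [hf, hw]
  have hz0 : Function.Periodic.cuspFunction 1 f 0 = 0 := by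
    refine Function.Periodic.cuspFunction_zero_of_zero_at_inf one_pos ?_
    rw [ZeroAtFilter, Metric.tendsto_nhds]
    intro ε hε
    obtain ⟨T, hT⟩ := hc (ε / 2) (by positivity)
    have h1 : ∀ᶠ y : ℝ in atTop, max T 0 < y := eventually_gt_atTop _
    have h2 : ∀ᶠ z : ℂ in comap Complex.im atTop, max T 0 < z.im := h1.comap _
    filter_upwards [h2] with z hz
    have hzU : z ∈ UH := lt_of_le_of_lt (le_max_right _ _) hz
    rw [dist_zero_right]
    simp only [hf, hzU, Set.indicator_of_mem]
    have := hT z hzU (lt_of_le_of_lt (le_max_left _ _) hz)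
    linarith
  have hUev : ∀ᶠ z : ℂ in comap Complex.im atTop, z ∈ UH := (eventually_gt_atTop (0:ℝ)).comap _
  refine ⟨Function.Periodic.cuspFunction 1 f, ?_, hz0, ?_⟩
  · intro q hq
    refine DifferentiableAt.differentiableWithinAt ?_
    by_cases hq0 : q = 0
    · rw [hq0]
      refine Function.Periodic.differentiableAt_cuspFunction_zero one_pos hfp ?_ ?_
      · filter_upwards [hUev] with z hz using hfd z hz
      · obtain ⟨T, hT⟩ := hc 1 one_pos
        rw [BoundedAtFilter, Asymptotics.isBigO_iff]
        refine ⟨1, ?_⟩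
        have h2 : ∀ᶠ z : ℂ in comap Complex.im atTop, max T 0 < z.im :=
          (eventually_gt_atTop (max T 0)).comap _
        filter_upwards [h2] with z hz
        have hzU : z ∈ UH := lt_of_le_of_lt (le_max_right _ _) hz
        simp only [hf, hzU, Set.indicator_of_mem]
        simpa using hT z hzU (lt_of_le_of_lt (le_max_left _ _) hz)
    · have hr := Function.Periodic.qParam_right_inv (one_ne_zero (α := ℝ)) hq0
      have hzU : Function.Periodic.invQParam 1 q ∈ UH := by
        show 0 < (Function.Periodic.invQParam 1 q).im
        rw [Function.Periodic.im_invQParam]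
        have : Real.log ‖q‖ < 0 := Real.log_neg (norm_pos_iff.mpr hq0) (by simpa using hq)
        have hp := Real.pi_pos
        have : 0 < (1 / (2 * Real.pi)) * (- Real.log ‖q‖) := by
          apply mul_pos <;> [positivity; linarith]
        have e : -1 / (2 * Real.pi) * Real.log ‖q‖ = (1 / (2 * Real.pi)) * (- Real.log ‖q‖) := by ring
        linarith
      rw [← hr]
      exact Function.Periodic.differentiableAt_cuspFunction one_ne_zero hfp (hfd _ hzU)
  · intro z hz
    have := Function.Periodic.eq_cuspFunction (one_ne_zero (α := ℝ)) hfp z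
    have e : qe z = Function.Periodic.qParam 1 z := by simp [qe, Function.Periodic.qParam]
    rw [e, this]; simp [hf, hz]

lemma next_H {H : ℂ → ℂ} (hd : DifferentiableOn ℂ H (ball 0 1)) (h0 : H 0 = 0) :
    ∃ H' : ℂ → ℂ, (DifferentiableOn ℂ H' (ball 0 1) ∧ H' 0 = 0) ∧
      ∀ q ∈ ball (0:ℂ) 1, q ≠ 0 → HasDerivAt H' (H q / (2 * Real.pi * I * q)) q := by
  have h1 : DifferentiableOn ℂ (dslope H 0) (ball 0 1) :=
    (Complex.differentiableOn_dslope (isOpen_ball.mem_nhds (by simp))).mpr hd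
  have h2 : DifferentiableOn ℂ (fun q => dslope H 0 q / (2 * Real.pi * I)) (ball 0 1) :=
    h1.div_const _
  obtain ⟨H', h3, h4⟩ := (DifferentiableOn.isExactOn_ball h2).with_val_at 0 0
  refine ⟨H', ⟨fun q hq => (h4 q hq).differentiableAt.differentiableWithinAt, h3⟩, ?_⟩
  intro q hq hq0
  refine (h4 q hq).congr_deriv ?_
  rw [dslope_of_ne _ hq0, slope_def_field, h0]
  field_simp
  simp

structure HSeq (g : ℂ → ℂ) where
  H : ℕ → ℂ → ℂ
  diff : ∀ l, DifferentiableOn ℂ (H l) (ball 0 1)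
  zero : ∀ l, H l 0 = 0
  der : ∀ l, ∀ q ∈ ball (0:ℂ) 1, q ≠ 0 → HasDerivAt (H (l+1)) (H l q / (2 * Real.pi * I * q)) q
  eq : ∀ z ∈ UH, H 0 (qe z) = g z

lemma exists_HSeq {g : ℂ → ℂ} (hd : DifferentiableOn ℂ g UH) (hper : ∀ z ∈ UH, g (z + 1) = g z)
    (hc : ∀ ε > 0, ∃ T : ℝ, ∀ z ∈ UH, T < z.im → ‖g z‖ ≤ ε) : Nonempty (HSeq g) := by
  obtain ⟨H0, a1, a2, a3⟩ := exists_H hd hper hc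
  choose N hN1 hN2 using fun (H : {H : ℂ → ℂ // DifferentiableOn ℂ H (ball 0 1) ∧ H 0 = 0}) =>
    next_H H.2.1 H.2.2
  let S : ℕ → {H : ℂ → ℂ // DifferentiableOn ℂ H (ball 0 1) ∧ H 0 = 0} := fun l =>
    Nat.rec ⟨H0, a1, a2⟩ (fun _ H => ⟨N H, hN1 H⟩) l
  exact ⟨⟨fun l => (S l).1, fun l => (S l).2.1, fun l => (S l).2.2, fun l => hN2 (S l), a3⟩⟩

namespace HSeq
variable {g : ℂ → ℂ} (s : HSeq g)

def h (l : ℕ) (z : ℂ) : ℂ := s.H l (qe z)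

lemma h_deriv (l : ℕ) {z : ℂ} (hz : z ∈ UH) : HasDerivAt (s.h (l+1)) (s.h l z) z := by
  have := (s.der l _ (qe_mem hz) (qe_ne z)).comp z (qe_deriv z)
  refine this.congr_deriv ?_
  have := qe_ne z
  have := Complex.I_ne_zero
  have : (Real.pi : ℂ) ≠ 0 := by exact_mod_cast Real.pi_ne_zero
  unfold h
  field_simp

lemma h_zero {z : ℂ} (hz : z ∈ UH) : s.h 0 z = g z := s.eq z hz

lemma h_add (l : ℕ) (z : ℂ) (n : ℤ) : s.h l (z + n) = s.h l z := by
  unfold h; rw [qe_add_int]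

lemma h_cusp (l : ℕ) : ∀ ε > 0, ∃ T : ℝ, ∀ z ∈ UH, T < z.im → ‖s.h l z‖ ≤ ε := by
  intro ε hε
  have h1 : ContinuousAt (s.H l) 0 :=
    ((s.diff l).differentiableAt (isOpen_ball.mem_nhds (by simp))).continuousAt
  obtain ⟨δ, hδ, h2⟩ := Metric.continuousAt_iff.mp h1 ε hε
  refine ⟨- Real.log δ / (2 * Real.pi), fun z hz hT => ?_⟩
  have : dist (qe z) 0 < δ := by
    rw [dist_zero_right, norm_qe, ← Real.lt_log_iff_exp_lt hδ]
    rw [div_lt_iff₀ (by positivity)] at hT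
    linarith
  have := h2 this
  rw [s.zero, dist_zero_right] at this
  exact this.le

lemma h_eq_zero (l : ℕ) (hl : ∀ z ∈ UH, s.h l z = 0) : ∀ z ∈ UH, g z = 0 := by
  induction l with
  | zero => intro z hz; rw [← s.h_zero hz, hl z hz]
  | succ l ih =>
    refine ih fun z hz => ?_
    have h1 := s.h_deriv l hz
    have h2 : HasDerivAt (s.h (l+1)) 0 z := by
      refine (hasDerivAt_const z (0:ℂ)).congr_of_eventuallyEq ?_
      filter_upwards [isOpen_UH.mem_nhds hz] with w hw using hl w hw
    exact h1.unique h2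

end HSeq

open Polynomial in
def qpol {S : Type*} [CommRing S] (K : ℕ) (A B D : S) : S[X] := (C A * X ^ 2 + C B * X + C D) ^ K

lemma qpol_natDegree {S : Type*} [CommRing S] (K : ℕ) (A B D : S) :
    (qpol K A B D).natDegree ≤ 2 * K := by
  unfold qpol
  refine Polynomial.natDegree_pow_le.trans ?_
  rw [mul_comm]
  exact Nat.mul_le_mul_right _ Polynomial.natDegree_quadratic_le

lemma qpol_eval {S : Type*} [CommRing S] (K : ℕ) (A B D z : S) :
    (qpol K A B D).eval z = (A * z ^ 2 + B * z + D) ^ K := by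
  simp [qpol]

lemma qpol_map {S S' : Type*} [CommRing S] [CommRing S'] (f : S →+* S') (K : ℕ) (A B D : S) :
    (qpol K A B D).map f = qpol K (f A) (f B) (f D) := by
  simp [qpol]

lemma uh_ne0 {z : ℂ} (hz : z ∈ UH) : z ≠ 0 := by
  rintro rfl; simp [UH] at hz

lemma UH_convex : Convex ℝ UH := by
  have : UH = Complex.im ⁻¹' (Set.Ioi 0) := rfl
  rw [this]
  exact (convex_Ioi (0:ℝ)).is_linear_preimage (Complex.imLm.isLinear)

lemma neg_inv_mem {z : ℂ} (hz : z ∈ UH) : -1 / z ∈ UH := by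
  have hz : 0 < z.im := hz
  show 0 < (-1 / z).im
  have : (-1 / z : ℂ) = - z⁻¹ := by ring
  rw [this, Complex.neg_im, Complex.inv_im]
  have : 0 < Complex.normSq z := Complex.normSq_pos.mpr (by rintro rfl; simp at hz)
  have := div_pos hz this
  rw [neg_div, neg_neg]; exact this

lemma I_mem : I ∈ UH := by simp [UH]

lemma UH_const {f : ℂ → ℂ} (hf : ∀ z ∈ UH, HasDerivAt f 0 z) {z w : ℂ} (hz : z ∈ UH) (hw : w ∈ UH) :
    f z = f w := by
  refine UH_convex.is_const_of_fderivWithin_eq_zero (𝕜 := ℂ) (f := f) ?_ ?_ hz hw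
  · intro x hx; exact (hf x hx).differentiableAt.differentiableWithinAt
  · intro x hx
    rw [fderivWithin_of_isOpen isOpen_UH hx]
    have := (hf x hx).hasFDerivAt.fderiv
    rw [this]; ext; simp

namespace HSeq
variable {g : ℂ → ℂ} (s : HSeq g)

def E (K : ℕ) (R : Polynomial ℂ) (z : ℂ) : ℂ :=
  ∑ j ∈ Finset.range (2 * K + 1), (-1) ^ j * (Polynomial.derivative^[j] R).eval z * s.h (j + 1) z

lemma E_add (K : ℕ) (R R' : Polynomial ℂ) (z : ℂ) : s.E K (R + R') z = s.E K R z + s.E K R' z := by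
  unfold E
  rw [← Finset.sum_add_distrib]
  refine Finset.sum_congr rfl fun j _ => ?_
  rw [iterate_map_add, Polynomial.eval_add]; ring

lemma E_smul (K : ℕ) (c : ℂ) (R : Polynomial ℂ) (z : ℂ) : s.E K (c • R) z = c * s.E K R z := by
  unfold E
  rw [Finset.mul_sum]
  refine Finset.sum_congr rfl fun j _ => ?_
  rw [Polynomial.iterate_derivative_smul, Polynomial.eval_smul, smul_eq_mul]; ring

def EL (K : ℕ) (z : ℂ) : Polynomial ℂ →ₗ[ℂ] ℂ where
  toFun R := s.E K R z
  map_add' R R' := s.E_add K R R' z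
  map_smul' c R := by simpa using s.E_smul K c R z

lemma E_deriv (K : ℕ) {R : Polynomial ℂ} (hR : R.natDegree ≤ 2 * K) {z : ℂ} (hz : z ∈ UH) :
    HasDerivAt (s.E K R) (g z * R.eval z) z := by
  have h1 : ∀ j ∈ Finset.range (2 * K + 1),
      HasDerivAt (fun z => (-1) ^ j * (Polynomial.derivative^[j] R).eval z * s.h (j + 1) z)
        ((-1) ^ j * (Polynomial.derivative^[j+1] R).eval z * s.h (j + 1) z
          + (-1) ^ j * (Polynomial.derivative^[j] R).eval z * s.h j z) z := by
    intro j _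
    rw [Function.iterate_succ_apply']
    exact (((Polynomial.derivative^[j] R).hasDerivAt z).const_mul _).fun_mul (s.h_deriv j hz)
  have h2 := HasDerivAt.fun_sum h1
  refine h2.congr_deriv ?_
  have h3 : ∀ j ∈ Finset.range (2 * K + 1),
      ((-1) ^ j * (Polynomial.derivative^[j+1] R).eval z * s.h (j + 1) z
          + (-1) ^ j * (Polynomial.derivative^[j] R).eval z * s.h j z)
      = (fun j => -((-1) ^ j * (Polynomial.derivative^[j] R).eval z * s.h j z)) (j + 1)
        - (fun j => -((-1) ^ j * (Polynomial.derivative^[j] R).eval z * s.h j z)) j := by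
    intro j _
    simp only [pow_succ]; ring
  rw [Finset.sum_congr rfl h3, Finset.sum_range_sub
    (fun j => -((-1) ^ j * (Polynomial.derivative^[j] R).eval z * s.h j z))]
  have h4 : Polynomial.derivative^[2 * K + 1] R = 0 :=
    Polynomial.iterate_derivative_eq_zero (by omega)
  simp only [h4]
  simp [s.h_zero hz]; ring

lemma E_trans (K : ℕ) (R : Polynomial ℂ) (n : ℤ) (z : ℂ) :
    s.E K R (z + n) = s.E K (R.comp (Polynomial.X + Polynomial.C (n:ℂ))) z := by
  unfold E
  refine Finset.sum_congr rfl fun j _ => ?_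
  have : ∀ j : ℕ, Polynomial.derivative^[j] (R.comp (Polynomial.X + Polynomial.C (n:ℂ)))
      = (Polynomial.derivative^[j] R).comp (Polynomial.X + Polynomial.C (n:ℂ)) := by
    intro j
    induction j with
    | zero => simp
    | succ j ih =>
      rw [Function.iterate_succ_apply', ih, Polynomial.derivative_comp,
        Function.iterate_succ_apply']
      simp
  rw [this, s.h_add]
  simp

lemma E_inv (K : ℕ) (hS : ∀ z ∈ UH, g (-1 / z) = z ^ (2 * K + 2) * g z) {R R' : Polynomial ℂ}
    (hR : R.natDegree ≤ 2 * K) (hR' : R'.natDegree ≤ 2 * K)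
    (h : ∀ z ∈ UH, R'.eval z = z ^ (2 * K) * R.eval (-1 / z)) {z : ℂ} (hz : z ∈ UH) :
    s.E K R (-1 / z) - s.E K R' z = s.E K R I - s.E K R' I := by
  have key : ∀ w ∈ UH, HasDerivAt (fun w => s.E K R (-1 / w) - s.E K R' w) 0 w := by
    intro w hw
    have hw0 := uh_ne0 hw
    have d1 : HasDerivAt (fun w : ℂ => -1 / w) (1 / w ^ 2) w := by
      have := (hasDerivAt_inv hw0).neg
      have e : (fun w : ℂ => -1 / w) = -(fun w : ℂ => w⁻¹) := by
        ext w; simp [neg_div]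
      rw [e]
      refine this.congr_deriv ?_
      field_simp
    have d2 := (s.E_deriv K hR (neg_inv_mem hw)).comp w d1
    refine (d2.sub (s.E_deriv K hR' hw)).congr_deriv ?_
    rw [h w hw, hS w hw]
    field_simp
    ring
  have := UH_const key hz I_mem
  have hI : -1 / I = I := by field_simp; simp
  simp only [hI] at this
  exact this

def rho (K : ℕ) (j : ℕ) : ℝ :=
  (I ^ K * (s.E K (Polynomial.X ^ j) I - (-1) ^ j * s.E K (Polynomial.X ^ (2 * K - j)) I)).re

def rt (K : ℕ) {S : Type*} [CommRing S] [Algebra ℝ S] (A B D : S) : S :=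
  ∑ j ∈ Finset.range (2 * K + 1), (qpol K A B D).coeff j * algebraMap ℝ S (s.rho K j)

lemma rt_map (K : ℕ) {S S' : Type*} [CommRing S] [Algebra ℝ S] [CommRing S'] [Algebra ℝ S']
    (f : S →ₐ[ℝ] S') (A B D : S) : f (s.rt K A B D) = s.rt K (f A) (f B) (f D) := by
  unfold rt
  rw [map_sum]
  refine Finset.sum_congr rfl fun j _ => ?_
  rw [map_mul, AlgHom.commutes]
  have := qpol_map (f : S →+* S') K A B D
  simp only [RingHom.coe_coe] at this
  rw [← this, Polynomial.coeff_map]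
  simp

lemma rt_smul (K : ℕ) {S : Type*} [CommRing S] [Algebra ℝ S] (t A B D : S) :
    s.rt K (t * A) (t * B) (t * D) = t ^ K * s.rt K A B D := by
  unfold rt
  rw [Finset.mul_sum]
  refine Finset.sum_congr rfl fun j _ => ?_
  have : qpol K (t * A) (t * B) (t * D) = Polynomial.C (t ^ K) * qpol K A B D := by
    simp only [qpol, map_mul, map_pow, ← mul_pow]
    congr 1; ring
  rw [this, Polynomial.coeff_C_mul]; ring

def er (K : ℕ) (A B D : ℝ) (z : ℂ) : ℝ := (I ^ K * s.E K (qpol K (A:ℂ) B D) z).re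

lemma er_trans (K : ℕ) (A B D : ℝ) (n : ℤ) (z : ℂ) :
    s.er K A B D (z + n) = s.er K A (B + 2 * A * n) (D + B * n + A * n ^ 2) z := by
  unfold er
  rw [E_trans]
  congr 4
  unfold qpol
  rw [Polynomial.pow_comp]
  congr 1
  have : (Polynomial.C (2:ℂ)) = 2 := rfl
  simp [this]
  ring

lemma er_inv (K : ℕ) (hS : ∀ z ∈ UH, g (-1 / z) = z ^ (2 * K + 2) * g z) (A B D : ℝ) {z : ℂ}
    (hz : z ∈ UH) : s.er K A B D (-1 / z) = s.er K D (-B) A z + s.rt K A B D := by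
  set R := qpol K (A:ℂ) B D with hR
  set R' := qpol K (D:ℂ) ((-B : ℝ):ℂ) A with hR'
  have hev : ∀ z ∈ UH, R'.eval z = z ^ (2 * K) * R.eval (-1 / z) := by
    intro z hz
    have := uh_ne0 hz
    rw [hR, hR', qpol_eval, qpol_eval, pow_mul, ← mul_pow]
    congr 1
    push_cast
    field_simp
    ring
  have h1 := s.E_inv K hS (qpol_natDegree K _ _ _) (qpol_natDegree K _ _ _) hev hz
  have hRs : R = ∑ j ∈ Finset.range (2 * K + 1), R.coeff j • Polynomial.X ^ j := by
    conv_lhs => rw [R.as_sum_range' (2 * K + 1) (Nat.lt_succ_of_le (qpol_natDegree K (A:ℂ) B D))]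
    refine Finset.sum_congr rfl fun j _ => ?_
    rw [← Polynomial.C_mul_X_pow_eq_monomial, Polynomial.smul_eq_C_mul]
  have hRs' : R' = ∑ j ∈ Finset.range (2 * K + 1),
      (R.coeff j * (-1) ^ j) • Polynomial.X ^ (2 * K - j) := by
    refine Polynomial.eq_of_infinite_eval_eq _ _ (Set.Infinite.mono (s := UH) ?_ ?_)
    · intro w hw
      have hw0 := uh_ne0 hw
      show R'.eval w = _
      rw [hev w hw]
      conv_lhs => rw [hRs]
      rw [Polynomial.eval_finsetSum, Polynomial.eval_finsetSum, Finset.mul_sum]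
      refine Finset.sum_congr rfl fun j hj => ?_
      have hj : j ≤ 2 * K := by rw [Finset.mem_range] at hj; omega
      simp only [Polynomial.eval_smul, Polynomial.eval_pow, Polynomial.eval_X, smul_eq_mul]
      have : w ^ (2 * K) = w ^ (2 * K - j) * w ^ j := by rw [← pow_add]; congr 1; omega
      rw [this, div_pow]
      field_simp
    · have := isOpen_UH.mem_nhds I_mem
      exact infinite_of_mem_nhds I this
  have hc : ∀ j, R.coeff j = (((qpol K A B D).coeff j : ℝ) : ℂ) := by
    intro j
    have := qpol_map Complex.ofRealHom K A B D
    simp only [Complex.ofRealHom_eq_coe] at this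
    rw [hR, ← this, Polynomial.coeff_map]; rfl
  have h2 : s.E K R I - s.E K R' I = ∑ j ∈ Finset.range (2 * K + 1), R.coeff j *
      (s.E K (Polynomial.X ^ j) I - (-1) ^ j * s.E K (Polynomial.X ^ (2 * K - j)) I) := by
    have e1 : s.E K R I = ∑ j ∈ Finset.range (2 * K + 1), R.coeff j * s.E K (Polynomial.X ^ j) I := by
      conv_lhs => rw [hRs]
      show s.EL K I _ = _
      rw [map_sum]
      refine Finset.sum_congr rfl fun j _ => ?_
      rw [map_smul]; rfl
    have e2 : s.E K R' I = ∑ j ∈ Finset.range (2 * K + 1),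
        R.coeff j * (-1) ^ j * s.E K (Polynomial.X ^ (2 * K - j)) I := by
      conv_lhs => rw [hRs']
      show s.EL K I _ = _
      rw [map_sum]
      refine Finset.sum_congr rfl fun j _ => ?_
      rw [map_smul]; rfl
    rw [e1, e2, ← Finset.sum_sub_distrib]
    refine Finset.sum_congr rfl fun j _ => ?_
    ring
  have h3 : (I ^ K * (s.E K R I - s.E K R' I)).re = s.rt K A B D := by
    rw [h2, Finset.mul_sum, Complex.re_sum]
    unfold rt rho
    refine Finset.sum_congr rfl fun j _ => ?_
    rw [hc, mul_left_comm, Complex.re_ofReal_mul]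
    rfl
  unfold er
  rw [← hR, ← hR', ← h3, ← h1, ← Complex.add_re]
  congr 1; ring

end HSeq

def chebU (t : ℤ) : ℕ → ℤ
  | 0 => 0
  | 1 => 1
  | (n+2) => t * chebU t (n+1) - chebU t n

lemma chebU_growth {t : ℤ} (ht : 3 ≤ |t|) (n : ℕ) : |chebU t n| + 1 ≤ |chebU t (n+1)| := by
  induction n with
  | zero => simp [chebU]
  | succ n ih =>
    have e : chebU t (n+1+1) = t * chebU t (n+1) - chebU t n := by
      show chebU t (n+2) = _
      rw [chebU]
    have h1 : |t * chebU t (n+1)| - |chebU t n| ≤ |chebU t (n+1+1)| := by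
      rw [e]; exact abs_sub_abs_le_abs_sub _ _
    rw [abs_mul] at h1
    have h2 := abs_nonneg (chebU t (n+1))
    have h3 := abs_nonneg (chebU t n)
    nlinarith

lemma chebU_ge_two {t : ℤ} (ht : 3 ≤ |t|) (n : ℕ) : 2 ≤ |chebU t (n+2)| := by
  have h1 := chebU_growth ht (n+1)
  have h2 := chebU_growth ht n
  have h3 := abs_nonneg (chebU t n)
  have : |chebU t (n+1+1)| = |chebU t (n+2)| := rfl
  omega

lemma sl2_pow (γ : SL2Z) (n : ℕ) :
    (γ ^ (n+1)).1 0 0 = chebU (γ.1 0 0 + γ.1 1 1) (n+1) * γ.1 0 0 - chebU (γ.1 0 0 + γ.1 1 1) n ∧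
    (γ ^ (n+1)).1 0 1 = chebU (γ.1 0 0 + γ.1 1 1) (n+1) * γ.1 0 1 ∧
    (γ ^ (n+1)).1 1 0 = chebU (γ.1 0 0 + γ.1 1 1) (n+1) * γ.1 1 0 ∧
    (γ ^ (n+1)).1 1 1 = chebU (γ.1 0 0 + γ.1 1 1) (n+1) * γ.1 1 1 - chebU (γ.1 0 0 + γ.1 1 1) n := by
  induction n with
  | zero => simp [chebU]
  | succ n ih =>
    obtain ⟨h1, h2, h3, h4⟩ := ih
    have e : chebU (γ.1 0 0 + γ.1 1 1) (n+1+1) = (γ.1 0 0 + γ.1 1 1) *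
      chebU (γ.1 0 0 + γ.1 1 1) (n+1) - chebU (γ.1 0 0 + γ.1 1 1) n := by
      show chebU _ (n+2) = _
      rw [chebU]
    have hd : γ.1 0 0 * γ.1 1 1 - γ.1 0 1 * γ.1 1 0 = 1 := by
      have := γ.2; rwa [Matrix.det_fin_two] at this
    set t := γ.1 0 0 + γ.1 1 1 with ht
    have hm : (γ ^ (n+1+1)).1 = (γ ^ (n+1)).1 * γ.1 := by rw [pow_succ]; rfl
    rw [hm, e]
    simp only [Matrix.mul_apply, Fin.sum_univ_two, h1, h2, h3, h4, ht]
    refine ⟨?_, ?_, ?_, ?_⟩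
    · linear_combination (-chebU t (n+1)) * hd
    · ring
    · ring
    · linear_combination (-chebU t (n+1)) * hd

lemma prim_crit {γ : SL2Z} (hγ : IsHyperbolic γ) (hc : IsCoprime (γ.1 1 0) (γ.1 0 1)) :
    IsPrimitive γ := by
  rintro ⟨γ₀, m, hm, rfl⟩
  obtain ⟨n, rfl⟩ : ∃ n, m = n + 2 := ⟨m - 2, by omega⟩
  obtain ⟨h1, h2, h3, h4⟩ := sl2_pow γ₀ (n+1)
  rw [show n + 1 + 1 = n + 2 from rfl] at h1 h2 h3 h4
  set t := γ₀.1 0 0 + γ₀.1 1 1 with ht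
  set U := chebU t (n+2) with hU
  rw [h2, h3] at hc
  have hu : IsUnit U := by
    have h5 : IsCoprime U U := (hc.of_mul_left_left).of_mul_right_left
    exact isCoprime_self.mp h5
  have hU1 : |U| = 1 := by
    rcases Int.isUnit_iff.mp hu with h | h <;> simp [h]
  have ht3 : 3 ≤ |t| := by
    have hd : γ₀.1 0 0 * γ₀.1 1 1 - γ₀.1 0 1 * γ₀.1 1 0 = 1 := by
      have := γ₀.2; rwa [Matrix.det_fin_two] at this
    have hd' : (γ₀ ^ (n+2)).1 0 0 * (γ₀ ^ (n+2)).1 1 1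
        - (γ₀ ^ (n+2)).1 0 1 * (γ₀ ^ (n+2)).1 1 0 = 1 := by
      have := (γ₀ ^ (n+2)).2; rwa [Matrix.det_fin_two] at this
    unfold IsHyperbolic at hγ
    set T := (γ₀ ^ (n+2)).1 0 0 + (γ₀ ^ (n+2)).1 1 1 with hT
    have k1 : T ^ 2 - 4 = U ^ 2 * (t ^ 2 - 4) := by
      have e1 : T ^ 2 - 4 = ((γ₀ ^ (n+2)).1 1 1 - (γ₀ ^ (n+2)).1 0 0) ^ 2 +
        4 * ((γ₀ ^ (n+2)).1 0 1 * (γ₀ ^ (n+2)).1 1 0) := by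
        rw [hT]; linear_combination 4 * hd'
      have e2 : t ^ 2 - 4 = (γ₀.1 1 1 - γ₀.1 0 0) ^ 2 + 4 * (γ₀.1 0 1 * γ₀.1 1 0) := by
        rw [ht]; linear_combination 4 * hd
      rw [e1, e2, h1, h2, h3, h4]; ring
    have hU2 : U ^ 2 = 1 := by rw [← sq_abs, hU1]; rfl
    rw [hU2, one_mul] at k1
    have k2 : (2:ℤ) ^ 2 < |T| ^ 2 := by gcongr
    rw [sq_abs] at k2
    have k3 : (2:ℤ) ^ 2 < |t| ^ 2 := by rw [sq_abs]; linarith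
    have := lt_of_pow_lt_pow_left₀ 2 (abs_nonneg t) k3
    omega
  have := chebU_ge_two ht3 n
  rw [← hU, hU1] at this
  omega

def wordMat (a b c : ℤ) : SL2Z := ⟨!![-b, 1 - b * c; a * b - 1, a * b * c - a - c], by
  rw [Matrix.det_fin_two]; simp; ring⟩

lemma wordMat_hyp {a b c : ℤ} (ha : 3 ≤ a) (hb : 3 ≤ b) (hc : 3 ≤ c) :
    IsHyperbolic (wordMat a b c) := by
  unfold IsHyperbolic wordMat
  simp only [Matrix.of_apply, Matrix.cons_val', Matrix.cons_val_zero, Matrix.cons_val_one,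
    Matrix.cons_val_fin_one]
  refine lt_of_lt_of_le ?_ (le_abs_self _)
  obtain ⟨x, rfl⟩ : ∃ x, a = x + 3 := ⟨a - 3, by ring⟩
  obtain ⟨y, rfl⟩ : ∃ y, b = y + 3 := ⟨b - 3, by ring⟩
  obtain ⟨w, rfl⟩ : ∃ w, c = w + 3 := ⟨c - 3, by ring⟩
  have hx : 0 ≤ x := by linarith
  have hy : 0 ≤ y := by linarith
  have hw : 0 ≤ w := by linarith
  have := mul_nonneg hx hy
  have := mul_nonneg hx hw
  have := mul_nonneg hy hw
  have := mul_nonneg (mul_nonneg hx hy) hw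
  nlinarith

lemma wordMat_prim {a b c s : ℤ} (ha : 3 ≤ a) (hb : 3 ≤ b) (hc : 3 ≤ c)
    (h : c = a + 1 + (a * b - 1) * s) : IsPrimitive (wordMat a b c) := by
  refine prim_crit (wordMat_hyp ha hb hc) ⟨-a * (1 + b * s) - 1, -a, ?_⟩
  unfold wordMat
  simp only [Matrix.of_apply, Matrix.cons_val', Matrix.cons_val_zero, Matrix.cons_val_one,
    Matrix.cons_val_fin_one]
  rw [h]; ring

namespace HSeq
variable {g : ℂ → ℂ} (s : HSeq g)

lemma rt_words (K : ℕ) (hS : ∀ z ∈ UH, g (-1 / z) = z ^ (2 * K + 2) * g z)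
    (hper : ∀ γ, IsHyperbolic γ → IsPrimitive γ → ∀ E : ℂ → ℂ,
      (∀ z ∈ UH, HasDerivAt E (g z * Qpoly γ z ^ K) z) →
        ∃ z₀ ∈ UH, (I ^ K * (E (moeb γ z₀) - E z₀)).re = 0)
    {a b c m : ℤ} (ha : 3 ≤ a) (hb : 3 ≤ b) (hc : 3 ≤ c) (h : c = a + 1 + (a * b - 1) * m) :
    s.rt K ((a:ℝ) * b - 1) (a * b * c - a - c + b) (b * c - 1)
    + s.rt K ((b:ℝ) * c - 1) (a * b * c - b - a + c) (c * a - 1)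
    + s.rt K ((c:ℝ) * a - 1) (a * b * c - c - b + a) (a * b - 1) = 0 := by
  obtain ⟨z, hz, h0⟩ := hper _ (wordMat_hyp ha hb hc) (wordMat_prim ha hb hc h)
    (s.E K (qpol K ((((a:ℝ) * b - 1 : ℝ)):ℂ) ((a * b * c - a - c + b : ℝ):ℂ) ((b * c - 1 : ℝ) : ℂ)))
    (by
      intro z hz
      refine (s.E_deriv K (qpol_natDegree _ _ _ _) hz).congr_deriv ?_
      rw [qpol_eval]
      congr 2
      simp only [Qpoly, wordMat, Matrix.of_apply, Matrix.cons_val', Matrix.cons_val_zero,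
        Matrix.cons_val_one, Matrix.cons_val_fin_one]
      push_cast
      ring)
  have tr : ∀ {w : ℂ}, w ∈ UH → ∀ n : ℤ, w + n ∈ UH := by
    intro w hw n; simpa [UH] using hw
  have m1 := tr hz c
  have m2 := tr (neg_inv_mem m1) b
  have m3 := tr (neg_inv_mem m2) a
  have n1 := uh_ne0 m1
  have n2 := uh_ne0 m2
  have n3 := uh_ne0 m3
  have hm : moeb (wordMat a b c) z = -1 / (-1 / (-1 / (z + c) + b) + a) := by
    have e2 : -1 / (z + c) + (b:ℂ) = (b * (z + c) - 1) / (z + c) := by field_simp; ring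
    rw [e2] at n2
    have n2' := (div_ne_zero_iff.mp n2).1
    have e3 : -1 / (-1 / (z + c) + (b:ℂ)) + a = ((a * b - 1) * (z + c) - a) / (b * (z + c) - 1) := by
      rw [e2]; field_simp; ring
    rw [e3] at n3
    have n3' := (div_ne_zero_iff.mp n3).1
    rw [e3]
    simp only [moeb, wordMat, Matrix.of_apply, Matrix.cons_val', Matrix.cons_val_zero,
        Matrix.cons_val_one, Matrix.cons_val_fin_one]
    push_cast
    rw [neg_div, one_div_div]
    have e4 : ((a:ℂ) * b - 1) * z + (a * b * c - a - c) = (a * b - 1) * (z + c) - a := by ring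
    rw [e4, ← neg_div]
    congr 1; ring
  rw [hm, mul_sub, Complex.sub_re] at h0
  change s.er K _ _ _ _ - s.er K _ _ _ _ = 0 at h0
  rw [s.er_inv K hS _ _ _ m3, s.er_trans, s.er_inv K hS _ _ _ m2, s.er_trans,
    s.er_inv K hS _ _ _ m1, s.er_trans] at h0
  ring_nf at h0 ⊢
  linarith

end HSeq

lemma poly_zero_of_seq {P : Polynomial ℝ} {u : ℕ → ℝ} (hu : Function.Injective u)
    (h : ∀ n, P.eval (u n) = 0) : P = 0 := by
  refine Polynomial.eq_zero_of_infinite_isRoot P (Set.Infinite.mono (s := Set.range u) ?_ ?_)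
  · rintro _ ⟨n, rfl⟩; exact h n
  · exact Set.infinite_range_of_injective hu

namespace HSeq
variable {g : ℂ → ℂ} (s : HSeq g)

def Lam (K : ℕ) {S : Type*} [CommRing S] [Algebra ℝ S] (a b : S) : S :=
  s.rt K 0 (a * b - 1) b + s.rt K b (a * b + 1) a + s.rt K a (a * b - 1) 0

lemma Lam_map (K : ℕ) {S S' : Type*} [CommRing S] [Algebra ℝ S] [CommRing S'] [Algebra ℝ S']
    (f : S →ₐ[ℝ] S') (a b : S) : f (s.Lam K a b) = s.Lam K (f a) (f b) := by
  simp only [Lam, map_add, rt_map, map_sub, map_mul, map_one, map_zero]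

lemma Lam_int (K : ℕ) (hS : ∀ z ∈ UH, g (-1 / z) = z ^ (2 * K + 2) * g z)
    (hper : ∀ γ, IsHyperbolic γ → IsPrimitive γ → ∀ E : ℂ → ℂ,
      (∀ z ∈ UH, HasDerivAt E (g z * Qpoly γ z ^ K) z) →
        ∃ z₀ ∈ UH, (I ^ K * (E (moeb γ z₀) - E z₀)).re = 0)
    {a b : ℤ} (ha : 3 ≤ a) (hb : 3 ≤ b) : s.Lam K (a:ℝ) (b:ℝ) = 0 := by
  let X : Polynomial ℝ := Polynomial.X
  let A : Polynomial ℝ := Polynomial.C (a:ℝ)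
  let B : Polynomial ℝ := Polynomial.C (b:ℝ)
  let P : Polynomial ℝ := s.rt K (X * (A * B - 1)) (A * B - 1 + X * (B - A)) (B - X)
    + s.rt K (B - X) (A * B + 1 - X * (A + B)) (A - X)
    + s.rt K (A - X) (A * B - 1 + X * (A - B)) (X * (A * B - 1))
  have hP : ∀ t : ℝ, P.eval t = s.rt K (t * (a * b - 1)) (a * b - 1 + t * (b - a)) (b - t)
    + s.rt K (b - t) (a * b + 1 - t * (a + b)) (a - t)
    + s.rt K (a - t) (a * b - 1 + t * (a - b)) (t * (a * b - 1)) := by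
    intro t
    have : P.eval t = Polynomial.aeval t P := by simp
    rw [this]
    simp only [P, map_add, rt_map, map_sub, map_mul, map_one, X, A, B, Polynomial.aeval_X,
      Polynomial.aeval_C]
    rfl
  have hab : (9:ℤ) ≤ a * b := by nlinarith
  have hab' : (9:ℝ) ≤ a * b := by exact_mod_cast hab
  have ha' : (3:ℝ) ≤ a := by exact_mod_cast ha
  let cs : ℕ → ℤ := fun n => a + 1 + (a * b - 1) * n
  have hcs : ∀ n, 3 ≤ cs n := by
    intro n
    have : 0 ≤ (a * b - 1) * (n:ℤ) := by apply mul_nonneg <;> [linarith; positivity]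
    simp only [cs]; linarith
  have hz : P = 0 := by
    refine poly_zero_of_seq (u := fun n => 1 / (cs n : ℝ)) ?_ ?_
    · intro n m hnm
      simp only [one_div, inv_inj, cs] at hnm
      have h1 : (a + 1 + (a * b - 1) * (n:ℤ)) = a + 1 + (a * b - 1) * (m:ℤ) := by exact_mod_cast hnm
      have h2 : (a * b - 1) * (n:ℤ) = (a * b - 1) * (m:ℤ) := by linarith
      have h3 := mul_left_cancel₀ (by linarith : a * b - 1 ≠ 0) h2
      exact_mod_cast h3
    · intro n
      have h1 := s.rt_words K hS hper ha hb (hcs n) (m := n) rfl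
      have hc : (cs n : ℝ) ≠ 0 := by
        have := hcs n
        have : cs n ≠ 0 := by linarith
        exact_mod_cast this
      set c : ℝ := (cs n : ℝ) with hcdef
      have h2 : (1 / c) ^ K * (s.rt K ((a:ℝ) * b - 1) (a * b * c - a - c + b) (b * c - 1)
        + s.rt K ((b:ℝ) * c - 1) (a * b * c - b - a + c) (c * a - 1)
        + s.rt K ((c:ℝ) * a - 1) (a * b * c - c - b + a) (a * b - 1)) = 0 := by
        rw [h1, mul_zero]
      rw [mul_add, mul_add, ← rt_smul, ← rt_smul, ← rt_smul] at h2
      rw [hP]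
      rw [← h2]
      congr 2 <;> congr 1 <;> field_simp <;> ring
  have := hP 0
  rw [hz] at this
  simp only [Polynomial.eval_zero, zero_mul, add_zero, sub_zero] at this
  exact this.symm

lemma Lam_real (K : ℕ) (hS : ∀ z ∈ UH, g (-1 / z) = z ^ (2 * K + 2) * g z)
    (hper : ∀ γ, IsHyperbolic γ → IsPrimitive γ → ∀ E : ℂ → ℂ,
      (∀ z ∈ UH, HasDerivAt E (g z * Qpoly γ z ^ K) z) →
        ∃ z₀ ∈ UH, (I ^ K * (E (moeb γ z₀) - E z₀)).re = 0)
    (a b : ℝ) : s.Lam K a b = 0 := by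
  have hu : Function.Injective (fun n : ℕ => ((n:ℤ) + 3 : ℤ) : ℕ → ℤ) := by
    intro n m h; simpa using h
  have hu' : Function.Injective (fun n : ℕ => (((n:ℤ) + 3 : ℤ) : ℝ)) :=
    Int.cast_injective.comp hu
  have h1 : ∀ (a : ℤ), 3 ≤ a → ∀ b : ℝ, s.Lam K (a:ℝ) b = 0 := by
    intro a ha b
    have hev : ∀ t : ℝ, (s.Lam K (Polynomial.C (a:ℝ)) Polynomial.X).eval t = s.Lam K (a:ℝ) t := by
      intro t
      rw [← Polynomial.coe_aeval_eq_eval, Lam_map]; simp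
    have hz := poly_zero_of_seq (P := s.Lam K (Polynomial.C (a:ℝ)) Polynomial.X) hu' (fun n => by
      rw [hev]; exact s.Lam_int K hS hper ha (by omega))
    rw [← hev, hz]; simp
  have hev : ∀ t : ℝ, (s.Lam K Polynomial.X (Polynomial.C b)).eval t = s.Lam K t b := by
    intro t
    rw [← Polynomial.coe_aeval_eq_eval, Lam_map]; simp
  have hz := poly_zero_of_seq (P := s.Lam K Polynomial.X (Polynomial.C b)) hu' (fun n => by
    rw [hev]; exact h1 _ (by omega) b)
  rw [← hev, hz]; simp

lemma rt_formula (K : ℕ) (hK : 1 ≤ K) (hS : ∀ z ∈ UH, g (-1 / z) = z ^ (2 * K + 2) * g z)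
    (hper : ∀ γ, IsHyperbolic γ → IsPrimitive γ → ∀ E : ℂ → ℂ,
      (∀ z ∈ UH, HasDerivAt E (g z * Qpoly γ z ^ K) z) →
        ∃ z₀ ∈ UH, (I ^ K * (E (moeb γ z₀) - E z₀)).re = 0)
    (A B D : ℝ) : s.rt K A B D = s.rho K 0 * (D ^ K - A ^ K) := by
  -- monomial values
  have hD : ∀ d : ℝ, s.rt K 0 0 d = d ^ K * s.rho K 0 := by
    intro d
    unfold rt
    have : qpol K (0:ℝ) 0 d = Polynomial.C (d ^ K) := by simp [qpol]
    rw [this, Finset.sum_eq_single 0]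
    · rw [Polynomial.coeff_C_zero]; rfl
    · intro j _ hj; rw [Polynomial.coeff_C_of_ne_zero hj]; simp
    · simp
  have hA : ∀ d : ℝ, s.rt K d 0 0 = d ^ K * s.rho K (2 * K) := by
    intro d
    unfold rt
    have : qpol K d 0 0 = Polynomial.C (d ^ K) * Polynomial.X ^ (2 * K) := by
      simp [qpol, mul_pow, pow_mul]
    rw [this, Finset.sum_eq_single (2 * K)]
    · rw [Polynomial.coeff_C_mul_X_pow, if_pos rfl]; rfl
    · intro j _ hj; rw [Polynomial.coeff_C_mul_X_pow, if_neg hj]; simp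
    · simp
  have hsq : ∀ a : ℝ, s.rt K 1 (2 * a) (a ^ 2) =
      ∑ j ∈ Finset.range (2 * K + 1), a ^ (2 * K - j) * ((2 * K).choose j : ℝ) * s.rho K j := by
    intro a
    unfold rt
    have : qpol K 1 (2 * a) (a ^ 2) = (Polynomial.X + Polynomial.C a) ^ (2 * K) := by
      rw [qpol, pow_mul]; congr 1
      have : (Polynomial.C (2:ℝ)) = 2 := rfl
      simp [this]; ring
    refine Finset.sum_congr rfl fun j _ => ?_
    rw [this, Polynomial.coeff_X_add_C_pow]; rfl
  let P : Polynomial ℝ := (∑ j ∈ Finset.range (2 * K + 1),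
    Polynomial.monomial (2 * K - j) (((2 * K).choose j : ℝ) * s.rho K j))
    + Polynomial.C (s.rho K 0) + Polynomial.monomial (2 * K) (s.rho K (2 * K))
  have hP : P = 0 := by
    refine poly_zero_of_seq (u := fun n : ℕ => (n:ℝ) + 1) ?_ ?_
    · intro n m h; simpa using h
    · intro n
      set a : ℝ := (n:ℝ) + 1 with ha
      have ha0 : a ≠ 0 := by positivity
      have h1 := s.Lam_real K hS hper a (1 / a)
      unfold Lam at h1
      rw [mul_one_div_cancel ha0, sub_self, hD, hA] at h1
      have h2 : s.rt K (1 / a) (1 + 1) a = (1 / a) ^ K * s.rt K 1 (2 * a) (a ^ 2) := by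
        rw [← rt_smul]; congr 1 <;> field_simp; norm_num
      rw [h2, hsq] at h1
      have h3 : a ^ K * ((1 / a) ^ K * s.rho K 0 + (1 / a) ^ K *
        (∑ j ∈ Finset.range (2 * K + 1), a ^ (2 * K - j) * ((2 * K).choose j : ℝ) * s.rho K j)
        + a ^ K * s.rho K (2 * K)) = 0 := by rw [h1, mul_zero]
      have h4 : a ^ K * (1 / a) ^ K = 1 := by rw [← mul_pow, mul_one_div_cancel ha0, one_pow]
      simp only [P, Polynomial.eval_add, Polynomial.eval_finsetSum, Polynomial.eval_monomial,
        Polynomial.eval_C]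
      have h5 : ∑ j ∈ Finset.range (2 * K + 1), ((2 * K).choose j : ℝ) * s.rho K j * a ^ (2 * K - j)
        = ∑ j ∈ Finset.range (2 * K + 1), a ^ (2 * K - j) * ((2 * K).choose j : ℝ) * s.rho K j :=
        Finset.sum_congr rfl fun j _ => by ring
      rw [h5]
      rw [two_mul K, pow_add, ← two_mul K]
      linear_combination h3 - (s.rho K 0 + (∑ j ∈ Finset.range (2 * K + 1),
        a ^ (2 * K - j) * ((2 * K).choose j : ℝ) * s.rho K j)) * h4
  have hco : ∀ j ≤ 2 * K, ((2 * K).choose j : ℝ) * s.rho K j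
      + (if j = 2 * K then s.rho K 0 else 0) + (if j = 0 then s.rho K (2 * K) else 0) = 0 := by
    intro j hj
    have h1 : P.coeff (2 * K - j) = 0 := by rw [hP]; simp
    simp only [P, Polynomial.coeff_add, Polynomial.finsetSum_coeff, Polynomial.coeff_monomial,
      Polynomial.coeff_C] at h1
    rw [Finset.sum_eq_single j] at h1
    · rw [if_pos rfl] at h1
      have e1 : (2 * K - j = 0) ↔ j = 2 * K := by omega
      have e2 : (2 * K = 2 * K - j) ↔ j = 0 := by omega
      simp only [e1, e2] at h1
      exact h1
    · intro i hi hij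
      rw [if_neg]
      have : i ≤ 2 * K := by rw [Finset.mem_range] at hi; omega
      omega
    · intro h; exact absurd (Finset.mem_range.mpr (by omega)) h
  have hmid : ∀ j, 0 < j → j < 2 * K → s.rho K j = 0 := by
    intro j h0 h1
    have := hco j h1.le
    rw [if_neg (by omega), if_neg (by omega), add_zero, add_zero] at this
    refine (mul_eq_zero.mp this).resolve_left ?_
    exact_mod_cast (Nat.choose_pos h1.le).ne'
  have hend : s.rho K (2 * K) = - s.rho K 0 := by
    have := hco 0 (by omega)
    rw [if_neg (by omega), if_pos rfl] at this
    simp at this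
    linarith
  unfold rt
  rw [Finset.sum_range_succ, Finset.sum_eq_single 0]
  · have c0 : (qpol K A B D).coeff 0 = D ^ K := by
      rw [Polynomial.coeff_zero_eq_eval_zero, qpol_eval]; simp
    have c1 : (qpol K A B D).coeff (2 * K) = A ^ K := by
      unfold qpol
      rw [mul_comm 2 K, Polynomial.coeff_pow_of_natDegree_le Polynomial.natDegree_quadratic_le]
      simp
    rw [c0, c1, hend]
    simp only [Algebra.algebraMap_self, RingHom.id_apply]
    ring
  · intro j hj hj0
    rw [Finset.mem_range] at hj
    rw [hmid j (by omega) hj]; simp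
  · intro h; exact absurd (Finset.mem_range.mpr (by omega)) h

end HSeq

lemma second_deriv_le {f f' : ℝ → ℝ} {c : ℝ} (h1 : ∀ᶠ t in 𝓝 (0:ℝ), HasDerivAt f (f' t) t)
    (h2 : HasDerivAt f' c 0) (hm : IsLocalMax f 0) : c ≤ 0 := by
  by_contra hc
  push Not at hc
  have e1 : deriv f =ᶠ[𝓝 0] f' := by
    filter_upwards [h1] with t ht using ht.deriv
  have e2 : deriv (deriv f) 0 = c := by
    rw [e1.deriv_eq]; exact h2.deriv
  have hd : deriv f 0 = 0 := hm.deriv_eq_zero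
  have hmin : IsLocalMin f 0 := isLocalMin_of_deriv_deriv_pos (by rw [e2]; exact hc) hd
    h1.self_of_nhds.continuousAt
  have e3 : f =ᶠ[𝓝 0] fun _ => f 0 := by
    filter_upwards [hm, hmin] with t a b using le_antisymm a b
  have e4 : deriv f =ᶠ[𝓝 0] fun _ => 0 := by
    have := e3.deriv
    refine this.trans ?_
    simp
  rw [e4.deriv_eq] at e2
  simp at e2
  exact hc.ne e2

lemma max_principle {u : ℂ → ℝ} (hc : ContinuousOn u UH) (hT : ∀ z ∈ UH, u (z + 1) = u z)
    (hS : ∀ z ∈ UH, u (-1 / z) = u z) (hinf : Tendsto u (comap Complex.im atTop) (𝓝 0))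
    (hmax : ∀ z ∈ UH, IsLocalMax u z → u z ≤ 0) : ∀ z ∈ UH, u z ≤ 0 := by
  have hinv : ∀ γ : SL2Z, ∀ z : UpperHalfPlane, u ((γ • z : UpperHalfPlane) : ℂ) = u z := by
    intro γ
    have hγ : γ ∈ Subgroup.closure ({ModularGroup.S, ModularGroup.T} : Set SL2Z) := by
      rw [SpecialLinearGroup.SL2Z_generators]; trivial
    induction hγ using Subgroup.closure_induction with
    | mem x hx =>
      intro z
      rcases hx with rfl | rfl
      · rw [UpperHalfPlane.modular_S_smul]
        have := hS z z.2
        rw [← this]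
        congr 1
        simp [neg_div, inv_neg]
      · rw [UpperHalfPlane.modular_T_smul]
        have := hT z z.2
        rw [← this]
        congr 1
        simp [add_comm]
    | one => intro z; simp
    | mul x y _ _ hx hy => intro z; rw [mul_smul, hx, hy]
    | inv x _ hx => intro z; have := hx (x⁻¹ • z); rw [smul_inv_smul] at this; exact this.symm
  by_contra hcon
  push Not at hcon
  obtain ⟨z0, hz0, hpos⟩ := hcon
  have hev : ∀ᶠ z in comap Complex.im atTop, u z < u z0 := hinf.eventually (gt_mem_nhds hpos)
  rw [eventually_comap] at hev
  obtain ⟨T, hT'⟩ := (eventually_atTop).mp hev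
  set B : Set ℂ := (Icc (-1) 1) ×ℂ (Icc (1/2) (max T 1)) with hB
  have hBc : IsCompact B := isCompact_Icc.reProdIm isCompact_Icc
  have hBU : B ⊆ UH := by
    intro z hz
    have : (1/2:ℝ) ≤ z.im := (Complex.mem_reProdIm.mp hz).2.1
    show 0 < z.im
    linarith
  have hred : ∀ z ∈ UH, u z < u z0 ∨ ∃ w ∈ B, u z = u w := by
    intro z hz
    obtain ⟨γ, hγ⟩ := ModularGroup.exists_smul_mem_fd (⟨z, hz⟩ : UpperHalfPlane)
    have h1 := hinv γ ⟨z, hz⟩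
    set w := (γ • (⟨z, hz⟩ : UpperHalfPlane)) with hw
    change u w = u z at h1
    by_cases hwT : T ≤ w.im
    · left; rw [← h1]; exact hT' w.im hwT w rfl
    · right
      refine ⟨w, ?_, h1.symm⟩
      have k1 : 1 ≤ Complex.normSq w := hγ.1
      have k2 : |w.re| ≤ 1 / 2 := hγ.2
      rw [Complex.normSq_apply] at k1
      have k3 := abs_le.mp k2
      have k4 : 0 < (w:ℂ).im := w.2
      rw [hB, Complex.mem_reProdIm]
      have e1 : (w:ℂ).re = w.re := rfl
      have e2 : (w:ℂ).im = w.im := rfl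
      rw [e1, e2] at *
      refine ⟨⟨by linarith, by linarith⟩, ?_, ?_⟩
      · by_contra hlt
        push Not at hlt
        have k5 : w.re ^ 2 ≤ 1 / 4 := by nlinarith [k3.1, k3.2]
        have k6 : w.im ^ 2 < 1 / 4 := by
          have k4' : 0 < w.im := k4
          nlinarith
        have k7 : 1 ≤ w.re * w.re + w.im * w.im := k1
        nlinarith
      · exact (le_of_not_ge hwT).trans (le_max_left _ _)
  obtain ⟨w0, hw0, hw0'⟩ := (hred z0 hz0).resolve_left (lt_irrefl _)
  obtain ⟨z1, hz1, hz1m⟩ := hBc.exists_isMaxOn ⟨w0, hw0⟩ (hc.mono hBU)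
  have hge : u z0 ≤ u z1 := by rw [hw0']; exact hz1m hw0
  have hall : ∀ z ∈ UH, u z ≤ u z1 := by
    intro z hz
    rcases hred z hz with h | ⟨w, hw, h⟩
    · exact (h.trans_le hge).le
    · rw [h]; exact hz1m hw
  have : IsLocalMax u z1 := by
    filter_upwards [isOpen_UH.mem_nhds (hBU hz1)] with z hz using hall z hz
  have := hmax z1 (hBU hz1) this
  linarith

namespace HSeq
variable {g : ℂ → ℂ} (s : HSeq g)

lemma h_tendsto (l : ℕ) : Tendsto (s.h l) (comap Complex.im atTop) (𝓝 0) := by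
  rw [Metric.tendsto_nhds]
  intro ε hε
  obtain ⟨T, hT⟩ := s.h_cusp l (ε / 2) (by positivity)
  have h2 : ∀ᶠ z : ℂ in comap Complex.im atTop, max T 0 < z.im :=
    (eventually_gt_atTop (max T 0)).comap _
  filter_upwards [h2] with z hz
  have hzU : z ∈ UH := lt_of_le_of_lt (le_max_right _ _) hz
  have := hT z hzU (lt_of_le_of_lt (le_max_left _ _) hz)
  rw [dist_zero_right]; linarith

/-- The Maass type function with coefficients `a`. -/
def W (K : ℕ) (a : ℕ → ℂ) (μ : ℝ) (z : ℂ) : ℂ :=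
  (∑ i ∈ Finset.range (K + 1), a i * ((z.im : ℂ)⁻¹) ^ i * s.h (K + 1 + i) z) + μ * ((z.im : ℂ)⁻¹) ^ K

lemma W_neg (K : ℕ) (a : ℕ → ℂ) (μ : ℝ) (z : ℂ) : s.W K (fun i => - a i) (-μ) z = - s.W K a μ z := by
  unfold W
  rw [neg_add, ← Finset.sum_neg_distrib]
  congr 1
  · exact Finset.sum_congr rfl fun i _ => by ring
  · push_cast; ring

lemma W_cont (K : ℕ) (a : ℕ → ℂ) (μ : ℝ) : ContinuousOn (s.W K a μ) UH := by
  unfold W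
  have hy : ContinuousOn (fun z : ℂ => (z.im : ℂ)⁻¹) UH := by
    refine ContinuousOn.inv₀ (by fun_prop) ?_
    intro z hz
    exact_mod_cast uh_ne hz
  refine ContinuousOn.add (continuousOn_finsetSum _ fun i _ => ?_) (continuousOn_const.mul (hy.pow _))
  refine (continuousOn_const.mul (hy.pow _)).mul ?_
  intro z hz
  rw [show K + 1 + i = (K + i) + 1 by ring]
  exact (s.h_deriv _ hz).continuousAt.continuousWithinAt

lemma W_tendsto (K : ℕ) (hK : 1 ≤ K) (a : ℕ → ℂ) (μ : ℝ) :
    Tendsto (s.W K a μ) (comap Complex.im atTop) (𝓝 0) := by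
  have hy : Tendsto (fun z : ℂ => (z.im : ℂ)⁻¹) (comap Complex.im atTop) (𝓝 0) := by
    have h1 : Tendsto (fun z : ℂ => z.im⁻¹) (comap Complex.im atTop) (𝓝 0) :=
      tendsto_inv_atTop_zero.comp tendsto_comap
    have h2 := (Complex.continuous_ofReal.tendsto 0).comp h1
    simpa [Function.comp_def] using h2
  have h1 : Tendsto (s.W K a μ) (comap Complex.im atTop)
      (𝓝 ((∑ i ∈ Finset.range (K + 1), a i * 0 ^ i * 0) + μ * 0 ^ K)) := by
    refine Tendsto.add (tendsto_finsetSum _ fun i _ => ?_) ((hy.pow _).const_mul _)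
    exact ((hy.pow _).const_mul _).mul (s.h_tendsto _)
  simpa [zero_pow (by omega : K ≠ 0)] using h1

lemma h_curve (l : ℕ) {z v : ℂ} {t : ℝ} (hz : z + t * v ∈ UH) :
    HasDerivAt (fun t : ℝ => s.h (l + 1) (z + t * v)) (v * s.h l (z + t * v)) t := by
  have h1 : HasDerivAt (fun t : ℝ => z + t * v) v t := by
    have := ((Complex.ofRealCLM.hasDerivAt (x := t)).mul_const v).const_add z
    simpa using this
  have h2 := HasDerivAt.scomp t (s.h_deriv l hz) h1
  exact h2

lemma inv_curve (i : ℕ) {y t : ℝ} (h : y + t ≠ 0) :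
    HasDerivAt (fun t : ℝ => (((y + t : ℝ) : ℂ)⁻¹) ^ i) (-i * (((y + t : ℝ) : ℂ)⁻¹) ^ (i + 1)) t := by
  have h0 : ((y + t : ℝ) : ℂ) ≠ 0 := by exact_mod_cast h
  have h1 : HasDerivAt (fun t : ℝ => ((y + t : ℝ) : ℂ)) 1 t :=
    ((hasDerivAt_id t).const_add y).ofReal_comp
  have h2 := (h1.inv h0).fun_pow i
  refine h2.congr_deriv ?_
  rcases i with _ | i
  · simp
  · simp only [Nat.add_sub_cancel, Pi.inv_apply, div_eq_mul_inv]
    rw [← inv_pow]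
    ring

lemma W_laplace (K : ℕ) (hK : 1 ≤ K) (a : ℕ → ℂ) (μ : ℝ)
    (ha : ∀ i ≤ K, 2 * I * (i + 1) * a (i + 1) = a i * (i * (i + 1) - K * (K + 1)))
    {z : ℂ} (hz : z ∈ UH) : ∃ f1 f2 : ℝ → ℂ, ∃ c1 c2 : ℂ,
      (∀ᶠ t in 𝓝 (0:ℝ), HasDerivAt (fun t : ℝ => s.W K a μ (z + t * 1)) (f1 t) t) ∧
      HasDerivAt f1 c1 0 ∧
      (∀ᶠ t in 𝓝 (0:ℝ), HasDerivAt (fun t : ℝ => s.W K a μ (z + t * I)) (f2 t) t) ∧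
      HasDerivAt f2 c2 0 ∧ z.im ^ 2 * (c1 + c2) = K * (K + 1) * s.W K a μ z := by
  obtain ⟨N, rfl⟩ : ∃ N, K = N + 1 := ⟨K - 1, by omega⟩
  have hzi : 0 < z.im := hz
  have hy0 : (z.im : ℂ) ≠ 0 := by exact_mod_cast hzi.ne'
  have ev : ∀ v : ℂ, ∀ᶠ t : ℝ in 𝓝 0, z + t * v ∈ UH := by
    intro v
    have hc : ContinuousAt (fun t : ℝ => z + t * v) 0 := by fun_prop
    refine hc.eventually_mem (isOpen_UH.mem_nhds ?_)
    simpa using hz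
  have evy : ∀ᶠ t : ℝ in 𝓝 0, z.im + t ≠ 0 := by
    have hc : ContinuousAt (fun t : ℝ => z.im + t) 0 := by fun_prop
    exact hc.eventually_ne (by simpa using hzi.ne')
  have hh1 : ∀ i, N + 1 + 1 + i = (N + 1 + i) + 1 := fun i => by ring
  have hh2 : ∀ i, N + 1 + i = (N + i) + 1 := fun i => by ring
  have imx : ∀ t : ℝ, (z + t * 1).im = z.im := by intro t; simp
  have imy : ∀ t : ℝ, (z + t * I).im = z.im + t := by intro t; simp
  set Y : ℂ := (z.im : ℂ)⁻¹ with hY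
  refine ⟨fun t => ∑ i ∈ Finset.range (N + 1 + 1), a i * Y ^ i * s.h (N + 1 + i) (z + t * 1),
    fun t => (∑ i ∈ Finset.range (N + 1 + 1), a i *
      (-i * (((z.im + t : ℝ) : ℂ)⁻¹) ^ (i + 1) * s.h (N + 1 + 1 + i) (z + t * I)
        + (((z.im + t : ℝ) : ℂ)⁻¹) ^ i * (I * s.h (N + 1 + i) (z + t * I))))
        + μ * (-(N + 1 : ℕ) * (((z.im + t : ℝ) : ℂ)⁻¹) ^ (N + 1 + 1)),
    ∑ i ∈ Finset.range (N + 1 + 1), a i * Y ^ i * s.h (N + i) z,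
    (∑ i ∈ Finset.range (N + 1 + 1), a i *
      (-i * (-(i + 1 : ℕ) * Y ^ (i + 1 + 1)) * s.h (N + 1 + 1 + i) z
        + -i * Y ^ (i + 1) * (I * s.h (N + 1 + i) z)
        + (-i * Y ^ (i + 1) * (I * s.h (N + 1 + i) z) + Y ^ i * (I * (I * s.h (N + i) z)))))
      + μ * (-(N + 1 : ℕ) * (-(N + 1 + 1 : ℕ) * Y ^ (N + 1 + 1 + 1))), ?_, ?_, ?_, ?_, ?_⟩
  · filter_upwards [ev 1] with t ht
    have : (fun t : ℝ => s.W (N + 1) a μ (z + t * 1)) = fun t : ℝ =>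
        (∑ i ∈ Finset.range (N + 1 + 1), a i * Y ^ i * s.h (N + 1 + i + 1) (z + t * 1))
          + μ * Y ^ (N + 1) := by
      ext t; simp only [W, imx, hh1, hY]
    rw [this]
    refine HasDerivAt.add_const _ (HasDerivAt.fun_sum fun i _ => ?_)
    have := (s.h_curve (N + 1 + i) ht).const_mul (a i * Y ^ i)
    rw [one_mul] at this
    exact this
  · have hz' : z + ((0:ℝ):ℂ) * 1 ∈ UH := by simpa using hz
    refine HasDerivAt.fun_sum fun i _ => ?_
    have := (s.h_curve (N + i) hz').const_mul (a i * Y ^ i)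
    rw [one_mul] at this
    simp only [hh2]
    refine this.congr_deriv ?_
    simp
  · filter_upwards [ev I, evy] with t ht hty
    have : (fun t : ℝ => s.W (N + 1) a μ (z + t * I)) = fun t : ℝ =>
        (∑ i ∈ Finset.range (N + 1 + 1), a i * ((((z.im + t : ℝ) : ℂ)⁻¹) ^ i
          * s.h (N + 1 + i + 1) (z + t * I)))
          + μ * (((z.im + t : ℝ) : ℂ)⁻¹) ^ (N + 1) := by
      ext t; simp only [W, imy, hh1, mul_assoc]
    rw [this]
    refine HasDerivAt.add (HasDerivAt.fun_sum fun i _ => ?_) ((inv_curve (N + 1) hty).const_mul _)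
    simp only [hh1]
    exact ((inv_curve i hty).fun_mul (s.h_curve (N + 1 + i) ht)).const_mul (a i)
  · have hz' : z + ((0:ℝ):ℂ) * I ∈ UH := by simpa using hz
    have hty : z.im + 0 ≠ 0 := by simpa using hzi.ne'
    have e0 : z + ((0:ℝ):ℂ) * I = z := by simp
    have e1 : ((z.im + 0 : ℝ) : ℂ)⁻¹ = Y := by simp [hY]
    refine HasDerivAt.add (HasDerivAt.fun_sum fun i _ => ?_) ?_
    · have d1 := ((inv_curve (i+1) hty).const_mul (-(i:ℂ))).fun_mul (s.h_curve (N + 1 + i) hz')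
      have d2 := (inv_curve i hty).fun_mul ((s.h_curve (N + i) hz').const_mul I)
      simp only [← hh1, ← hh2] at d1 d2
      have d3 := (d1.fun_add d2).const_mul (a i)
      refine d3.congr_deriv ?_
      rw [e0, e1]
    · have d1 := (((inv_curve (N+1+1) hty).const_mul (-((N+1 : ℕ):ℂ)))).const_mul (μ:ℂ)
      refine d1.congr_deriv ?_
      rw [e1]
  · have hYy : (z.im : ℂ) * Y = 1 := mul_inv_cancel₀ hy0
    set y : ℂ := (z.im : ℂ) with hy
    have hshift : ∑ i ∈ Finset.range (N + 1 + 1), (i * a i) * Y ^ (i + 1) * s.h (N + 1 + i) z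
        = ∑ i ∈ Finset.range (N + 1 + 1), ((i + 1) * a (i + 1)) * Y ^ (i + 2) * s.h (N + 1 + 1 + i) z := by
      rw [Finset.sum_range_succ' _ (N + 1), Finset.sum_range_succ _ (N + 1)]
      have hlast : a (N + 1 + 1) = 0 := by
        have := ha (N + 1) le_rfl
        rw [sub_self, mul_zero] at this
        have h2 : (2 * I * (((N + 1 : ℕ) : ℂ) + 1)) ≠ 0 := by
          have : ((N + 1 : ℕ) : ℂ) + 1 ≠ 0 := by exact_mod_cast (Nat.succ_ne_zero (N+1))
          exact mul_ne_zero (mul_ne_zero two_ne_zero Complex.I_ne_zero) this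
        exact (mul_eq_zero.mp this).resolve_left h2
      rw [hlast]
      simp only [Nat.cast_zero, zero_mul, mul_zero, add_zero]
      refine Finset.sum_congr rfl fun i _ => ?_
      rw [show N + 1 + (i + 1) = N + 1 + 1 + i by ring]
      push_cast; ring
    have hsum : (∑ i ∈ Finset.range (N + 1 + 1), a i * Y ^ i * s.h (N + i) z)
        + (∑ i ∈ Finset.range (N + 1 + 1), a i *
      (-i * (-(i + 1 : ℕ) * Y ^ (i + 1 + 1)) * s.h (N + 1 + 1 + i) z
        + -i * Y ^ (i + 1) * (I * s.h (N + 1 + i) z)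
        + (-i * Y ^ (i + 1) * (I * s.h (N + 1 + i) z) + Y ^ i * (I * (I * s.h (N + i) z)))))
      = ((N + 1 : ℕ) : ℂ) * ((N + 1 : ℕ) + 1) * ∑ i ∈ Finset.range (N + 1 + 1),
          a i * Y ^ (i + 2) * s.h (N + 1 + 1 + i) z := by
      have k1 : (∑ i ∈ Finset.range (N + 1 + 1), a i * Y ^ i * s.h (N + i) z)
        + (∑ i ∈ Finset.range (N + 1 + 1), a i *
        (-i * (-(i + 1 : ℕ) * Y ^ (i + 1 + 1)) * s.h (N + 1 + 1 + i) z
          + -i * Y ^ (i + 1) * (I * s.h (N + 1 + i) z)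
          + (-i * Y ^ (i + 1) * (I * s.h (N + 1 + i) z) + Y ^ i * (I * (I * s.h (N + i) z)))))
        = (∑ i ∈ Finset.range (N + 1 + 1), a i * (i * (i + 1)) * Y ^ (i + 2) * s.h (N + 1 + 1 + i) z)
          - 2 * I * ∑ i ∈ Finset.range (N + 1 + 1), (i * a i) * Y ^ (i + 1) * s.h (N + 1 + i) z := by
        rw [Finset.mul_sum, ← Finset.sum_add_distrib, ← Finset.sum_sub_distrib]
        refine Finset.sum_congr rfl fun i _ => ?_
        push_cast
        linear_combination (a i * Y ^ i * s.h (N + i) z) * Complex.I_mul_I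
      rw [k1, hshift, Finset.mul_sum, Finset.mul_sum, ← Finset.sum_sub_distrib]
      refine Finset.sum_congr rfl fun i hi => ?_
      have := ha i (by rw [Finset.mem_range] at hi; omega)
      linear_combination (-(Y ^ (i + 2) * s.h (N + 1 + 1 + i) z)) * this
    rw [← add_assoc, hsum]
    unfold W
    rw [← hy, ← hY, mul_add (y ^ 2), mul_add (((N + 1 : ℕ) : ℂ) * ((N + 1 : ℕ) + 1))]
    congr 1
    · rw [mul_left_comm]
      congr 1
      rw [Finset.mul_sum]
      refine Finset.sum_congr rfl fun i _ => ?_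
      have : y ^ 2 * Y ^ (i + 2) = Y ^ i := by
        rw [pow_add]
        linear_combination (Y ^ i * (y * Y + 1)) * hYy
      linear_combination (a i * s.h (N + 1 + 1 + i) z) * this
    · have : y ^ 2 * Y ^ (N + 1 + 2) = Y ^ (N + 1) := by
        rw [pow_add _ (N+1)]
        linear_combination (Y ^ (N + 1) * (y * Y + 1)) * hYy
      push_cast
      linear_combination (μ * (N + 1) * (N + 1 + 1)) * this

lemma re_curve {f : ℝ → ℂ} {c : ℂ} {t : ℝ} (h : HasDerivAt f c t) :
    HasDerivAt (fun t => (f t).re) c.re t :=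
  Complex.reCLM.hasFDerivAt.comp_hasDerivAt t h

lemma W_localMax (K : ℕ) (hK : 1 ≤ K) (a : ℕ → ℂ) (μ : ℝ)
    (ha : ∀ i ≤ K, 2 * I * (i + 1) * a (i + 1) = a i * (i * (i + 1) - K * (K + 1)))
    {z : ℂ} (hz : z ∈ UH) (hm : IsLocalMax (fun z => (s.W K a μ z).re) z) : (s.W K a μ z).re ≤ 0 := by
  obtain ⟨f1, f2, c1, c2, h1, h2, h3, h4, h5⟩ := s.W_laplace K hK a μ ha hz
  have hl : ∀ v : ℂ, IsLocalMax (fun t : ℝ => (s.W K a μ (z + t * v)).re) 0 := by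
    intro v
    have hc : ContinuousAt (fun t : ℝ => z + t * v) 0 := by fun_prop
    have hc' : Tendsto (fun t : ℝ => z + t * v) (𝓝 0) (𝓝 z) := by
      have := hc.tendsto; simpa using this
    have := hc'.eventually hm
    filter_upwards [this] with t ht
    simpa using ht
  have b1 : c1.re ≤ 0 := second_deriv_le (by filter_upwards [h1] with t ht using re_curve ht)
    (re_curve h2) (hl 1)
  have b2 : c2.re ≤ 0 := second_deriv_le (by filter_upwards [h3] with t ht using re_curve ht)
    (re_curve h4) (hl I)
  have h6 : z.im ^ 2 * (c1.re + c2.re) = K * (K + 1) * (s.W K a μ z).re := by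
    have := congrArg Complex.re h5
    have e1 : ((z.im : ℂ) ^ 2 * (c1 + c2)).re = z.im ^ 2 * (c1.re + c2.re) := by
      rw [← Complex.ofReal_pow, Complex.re_ofReal_mul, Complex.add_re]
    have e2 : ((K : ℂ) * (K + 1) * s.W K a μ z).re = K * (K + 1) * (s.W K a μ z).re := by
      have : (K : ℂ) * (K + 1) = ((K * (K + 1) : ℝ) : ℂ) := by push_cast; ring
      rw [this, Complex.re_ofReal_mul]
    rw [e1, e2] at this
    exact this
  have h7 : z.im ^ 2 * (c1.re + c2.re) ≤ 0 := mul_nonpos_of_nonneg_of_nonpos (sq_nonneg _) (by linarith)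
  rw [h6] at h7
  have hK' : (0:ℝ) < K * (K + 1) := by positivity
  by_contra hcon
  push Not at hcon
  have := mul_pos hK' hcon
  linarith

lemma W_re_zero (K : ℕ) (hK : 1 ≤ K) (a : ℕ → ℂ) (μ : ℝ)
    (ha : ∀ i ≤ K, 2 * I * (i + 1) * a (i + 1) = a i * (i * (i + 1) - K * (K + 1)))
    (hT : ∀ z ∈ UH, (s.W K a μ (z + 1)).re = (s.W K a μ z).re)
    (hS : ∀ z ∈ UH, (s.W K a μ (-1 / z)).re = (s.W K a μ z).re) :
    ∀ z ∈ UH, (s.W K a μ z).re = 0 := by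
  have key : ∀ (a : ℕ → ℂ) (μ : ℝ),
    (∀ i ≤ K, 2 * I * (i + 1) * a (i + 1) = a i * (i * (i + 1) - K * (K + 1))) →
    (∀ z ∈ UH, (s.W K a μ (z + 1)).re = (s.W K a μ z).re) →
    (∀ z ∈ UH, (s.W K a μ (-1 / z)).re = (s.W K a μ z).re) →
    ∀ z ∈ UH, (s.W K a μ z).re ≤ 0 := by
    intro a μ ha hT hS
    refine max_principle (u := fun z => (s.W K a μ z).re) ?_ hT hS ?_ ?_
    · exact Complex.continuous_re.comp_continuousOn (s.W_cont K a μ)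
    · have := (Complex.continuous_re.tendsto 0).comp (s.W_tendsto K hK a μ)
      simpa [Function.comp_def] using this
    · intro z hz hm; exact s.W_localMax K hK a μ ha hz hm
  intro z hz
  refine le_antisymm (key a μ ha hT hS z hz) ?_
  have := key (fun i => - a i) (-μ) ?_ ?_ ?_ z hz
  · rw [W_neg, Complex.neg_re] at this; linarith
  · intro i hi; linear_combination -(ha i hi)
  · intro z hz; rw [W_neg, W_neg, Complex.neg_re, Complex.neg_re, hT z hz]
  · intro z hz; rw [W_neg, W_neg, Complex.neg_re, Complex.neg_re, hS z hz]

end HSeq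

namespace HSeq
variable {g : ℂ → ℂ} (s : HSeq g)

def a0 (K i : ℕ) : ℂ := (-1) ^ (K + i) * (K + i).factorial * (K.choose i) * (2 * I) ^ (K - i)

lemma a0_rec (K i : ℕ) (hi : i ≤ K) :
    2 * I * (i + 1) * a0 K (i + 1) = a0 K i * (i * (i + 1) - K * (K + 1)) := by
  unfold a0
  rcases hi.eq_or_lt with rfl | hlt
  · simp
  · obtain ⟨m, rfl⟩ : ∃ m, K = i + 1 + m := ⟨K - i - 1, by omega⟩
    have e1 : i + 1 + m - (i + 1) = m := by omega
    have e2 : i + 1 + m - i = m + 1 := by omega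
    have h1 := Nat.choose_succ_right_eq (i + 1 + m) i
    rw [e2] at h1
    have h2 : (((i + 1 + m).choose (i + 1) : ℕ) : ℂ) * (i + 1) = ((i + 1 + m).choose i : ℕ) * (m + 1) := by
      exact_mod_cast h1
    have h3 : ((i + 1 + m + (i + 1)).factorial : ℂ)
        = (i + 1 + m + i + 1) * (i + 1 + m + i).factorial := by
      rw [show i + 1 + m + (i + 1) = (i + 1 + m + i) + 1 by ring, Nat.factorial_succ]
      push_cast; ring
    rw [e1, e2, h3, show i + 1 + m + (i + 1) = (i + 1 + m + i) + 1 by ring, pow_succ (-1 : ℂ),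
      pow_succ (2 * I)]
    push_cast
    linear_combination (-(2 * I) * (2 * I) ^ m * (-1) ^ (i + 1 + m + i) * (i + 1 + m + i + 1)
      * (i + 1 + m + i).factorial) * h2

lemma E_qz (K : ℕ) {z : ℂ} (hz : z ∈ UH) :
    s.E K (qpol K ((1 / z.im : ℝ) : ℂ) ((-2 * z.re / z.im : ℝ) : ℂ)
      (((z.re ^ 2 + z.im ^ 2) / z.im : ℝ) : ℂ)) z
    = ∑ i ∈ Finset.range (K + 1), a0 K i * ((z.im : ℂ)⁻¹) ^ i * s.h (K + 1 + i) z := by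
  have hy0 : (z.im : ℂ) ≠ 0 := by exact_mod_cast uh_ne hz
  set R := qpol K ((1 / z.im : ℝ) : ℂ) ((-2 * z.re / z.im : ℝ) : ℂ)
      (((z.re ^ 2 + z.im ^ 2) / z.im : ℝ) : ℂ) with hR
  set y : ℂ := (z.im : ℂ) with hy
  have ht : Polynomial.taylor z R = Polynomial.C (y⁻¹ ^ K) *
      ((Polynomial.X + Polynomial.C (2 * I * y)) ^ K * Polynomial.X ^ K) := by
    rw [hR, qpol, Polynomial.taylor_apply, Polynomial.pow_comp, ← mul_pow, map_pow, ← mul_pow]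
    congr 1
    refine Polynomial.funext fun w => ?_
    simp only [Polynomial.add_comp, Polynomial.mul_comp, Polynomial.C_comp, Polynomial.pow_comp,
      Polynomial.X_comp, Polynomial.eval_add, Polynomial.eval_mul, Polynomial.eval_C,
      Polynomial.eval_pow, Polynomial.eval_X]
    push_cast
    rw [← hy]
    set x : ℂ := (z.re : ℂ) with hx
    have hzz : z = x + y * I := (Complex.re_add_im z).symm
    rw [hzz]
    field_simp
    linear_combination (y ^ 2) * Complex.I_sq
  have hder : ∀ j, (Polynomial.derivative^[j] R).eval z = j.factorial * (Polynomial.taylor z R).coeff j := by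
    intro j
    rw [Polynomial.taylor_coeff, ← Polynomial.factorial_smul_hasseDeriv]
    simp
  have hlow : ∀ j, j < K → (Polynomial.taylor z R).coeff j = 0 := by
    intro j hj
    rw [ht, Polynomial.coeff_C_mul, Polynomial.coeff_mul_X_pow', if_neg (by omega), mul_zero]
  have hhigh : ∀ i, i ≤ K → (Polynomial.taylor z R).coeff (K + i)
      = (2 * I) ^ (K - i) * (K.choose i) * y⁻¹ ^ i := by
    intro i hi
    rw [ht, Polynomial.coeff_C_mul, Polynomial.coeff_mul_X_pow', if_pos (by omega),
      Nat.add_sub_cancel_left, Polynomial.coeff_X_add_C_pow, mul_pow]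
    have : y⁻¹ ^ K * y ^ (K - i) = y⁻¹ ^ i := by
      rw [show y⁻¹ ^ K = y⁻¹ ^ i * y⁻¹ ^ (K - i) by rw [← pow_add]; congr 1; omega, mul_assoc,
        ← mul_pow, inv_mul_cancel₀ hy0, one_pow, mul_one]
    linear_combination (2 * I) ^ (K - i) * (K.choose i) * this
  unfold E
  rw [show 2 * K + 1 = K + (K + 1) by ring, Finset.sum_range_add]
  rw [Finset.sum_eq_zero, zero_add]
  · refine Finset.sum_congr rfl fun i hi => ?_
    rw [hder, hhigh i (by rw [Finset.mem_range] at hi; omega), show K + i + 1 = K + 1 + i by ring]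
    unfold a0
    ring
  · intro j hj
    rw [hder, hlow j (by simpa using hj)]; simp

lemma W_eq_er (K : ℕ) (μ : ℝ) {z : ℂ} (hz : z ∈ UH) :
    (s.W K (fun i => I ^ K * a0 K i) μ z).re
      = s.er K (1 / z.im) (-2 * z.re / z.im) ((z.re ^ 2 + z.im ^ 2) / z.im) z + μ * (1 / z.im) ^ K := by
  unfold W er
  rw [s.E_qz K hz, Complex.add_re, Finset.mul_sum]
  congr 1
  · congr 1
    exact Finset.sum_congr rfl fun i _ => by ring
  · rw [← Complex.ofReal_inv, ← Complex.ofReal_pow, Complex.re_ofReal_mul, Complex.ofReal_re, one_div]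

lemma W_zero (K : ℕ) (hK : 1 ≤ K) (hS : ∀ z ∈ UH, g (-1 / z) = z ^ (2 * K + 2) * g z)
    (hper : ∀ γ, IsHyperbolic γ → IsPrimitive γ → ∀ E : ℂ → ℂ,
      (∀ z ∈ UH, HasDerivAt E (g z * Qpoly γ z ^ K) z) →
        ∃ z₀ ∈ UH, (I ^ K * (E (moeb γ z₀) - E z₀)).re = 0) :
    ∀ z ∈ UH, (s.W K (fun i => I ^ K * a0 K i) (s.rho K 0) z).re = 0 := by
  refine s.W_re_zero K hK _ _ ?_ ?_ ?_
  · intro i hi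
    linear_combination I ^ K * a0_rec K i hi
  · intro z hz
    have hz1 : z + 1 ∈ UH := by simpa [UH] using hz
    have hz0 : z.im ≠ 0 := uh_ne hz
    rw [s.W_eq_er K _ hz1, s.W_eq_er K _ hz]
    have := s.er_trans K (1 / z.im) (-2 * (z.re + 1) / z.im) (((z.re + 1) ^ 2 + z.im ^ 2) / z.im) 1 z
    simp only [Int.cast_one] at this
    simp only [Complex.add_re, Complex.one_re, Complex.add_im, Complex.one_im, add_zero]
    rw [this]
    congr 2 <;> field_simp <;> ring
  · intro z hz
    have hz1 := neg_inv_mem hz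
    have hz0 : z.im ≠ 0 := uh_ne hz
    rw [s.W_eq_er K _ hz1, s.W_eq_er K _ hz, s.er_inv K hS _ _ _ hz, s.rt_formula K hK hS hper]
    have hn : z.re ^ 2 + z.im ^ 2 ≠ 0 := by positivity
    have e0 : (-1 / z : ℂ) = - z⁻¹ := by ring
    have e1 : (-1 / z).re = - z.re / (z.re ^ 2 + z.im ^ 2) := by
      rw [e0, Complex.neg_re, Complex.inv_re, Complex.normSq_apply]; ring
    have e2 : (-1 / z).im = z.im / (z.re ^ 2 + z.im ^ 2) := by
      rw [e0, Complex.neg_im, Complex.inv_im, Complex.normSq_apply]; ring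
    rw [e1, e2]
    have k1 : ((-z.re / (z.re ^ 2 + z.im ^ 2)) ^ 2 + (z.im / (z.re ^ 2 + z.im ^ 2)) ^ 2)
        / (z.im / (z.re ^ 2 + z.im ^ 2)) = 1 / z.im := by
      field_simp
    have k2 : -(-2 * (-z.re / (z.re ^ 2 + z.im ^ 2)) / (z.im / (z.re ^ 2 + z.im ^ 2)))
        = -2 * z.re / z.im := by
      field_simp
    have k3 : 1 / (z.im / (z.re ^ 2 + z.im ^ 2)) = (z.re ^ 2 + z.im ^ 2) / z.im := by
      field_simp
    rw [k1, k2, k3]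
    ring

end HSeq

lemma const_of_re_zero {f : ℂ → ℂ} {r : ℝ} (hr : 0 < r) (hr1 : r < 1)
    (hd : DifferentiableOn ℂ f (ball 0 1)) (h : ∀ ζ, ‖ζ‖ = r → (f ζ).re = 0) :
    ∀ ζ ∈ closedBall (0:ℂ) r, f ζ = f 0 := by
  have hsub : closedBall (0:ℂ) r ⊆ ball 0 1 := closedBall_subset_ball hr1
  have hdc : ∀ c : ℂ, DiffContOnCl ℂ (fun ζ => cexp (c * f ζ)) (ball 0 r) := by
    intro c
    refine DifferentiableOn.diffContOnCl ?_
    rw [closure_ball _ hr.ne']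
    exact ((hd.mono hsub).const_mul c).cexp
  have hle : ∀ c : ℂ, c.im = 0 → ∀ ζ ∈ closedBall (0:ℂ) r, ‖cexp (c * f ζ)‖ ≤ 1 := by
    intro c hc ζ hζ
    refine Complex.norm_le_of_forall_mem_frontier_norm_le isBounded_ball (hdc c) ?_ ?_
    · intro w hw
      rw [frontier_ball _ hr.ne'] at hw
      rw [Complex.norm_exp, Complex.mul_re, hc, h w (by simpa using hw)]
      simp
    · rw [closure_ball _ hr.ne']; exact hζ
  have hre : ∀ ζ ∈ closedBall (0:ℂ) r, (f ζ).re = 0 := by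
    intro ζ hζ
    have h1 := hle 1 (by simp) ζ hζ
    have h2 := hle (-1) (by simp) ζ hζ
    rw [Complex.norm_exp, Real.exp_le_one_iff] at h1 h2
    simp at h1 h2
    linarith
  have hder : ∀ ζ ∈ ball (0:ℂ) r, HasDerivAt f 0 ζ := by
    intro ζ hζ
    have hfd : DifferentiableAt ℂ f ζ :=
      hd.differentiableAt (isOpen_ball.mem_nhds (hsub (ball_subset_closedBall hζ)))
    have h1 := hfd.hasDerivAt
    have hc : ∀ v : ℂ, (v * deriv f ζ).re = 0 := by
      intro v
      have d1 : HasDerivAt (fun t : ℝ => ζ + t * v) v 0 := by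
        have := ((Complex.ofRealCLM.hasDerivAt (x := (0:ℝ))).mul_const v).const_add ζ
        simpa using this
      have h1' : HasDerivAt f (deriv f ζ) (ζ + ((0:ℝ):ℂ) * v) := by simpa using h1
      have d2 := HSeq.re_curve (HasDerivAt.scomp (0:ℝ) h1' d1)
      have d3 : HasDerivAt (fun t : ℝ => (f (ζ + t * v)).re) 0 0 := by
        refine (hasDerivAt_const (0:ℝ) (0:ℝ)).congr_of_eventuallyEq ?_
        have hcont : ContinuousAt (fun t : ℝ => ζ + t * v) 0 := by fun_prop
        have := hcont.eventually_mem (s := ball 0 r) (isOpen_ball.mem_nhds (by simpa using hζ))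
        filter_upwards [this] with t ht
        exact hre _ (ball_subset_closedBall ht)
      have := d2.unique d3
      simpa using this
    have k1 := hc 1
    have k2 := hc I
    have : deriv f ζ = 0 := by
      apply Complex.ext
      · simpa using k1
      · simpa using k2
    rwa [this] at h1
  have hconst : ∀ ζ ∈ ball (0:ℂ) r, f ζ = f 0 := by
    intro ζ hζ
    refine (convex_ball (0:ℂ) r).is_const_of_fderivWithin_eq_zero (𝕜 := ℂ) (f := f) ?_ ?_ hζ
      (mem_ball_self hr)
    · intro x hx; exact (hder x hx).differentiableAt.differentiableWithinAt
    · intro x hx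
      rw [fderivWithin_of_isOpen isOpen_ball hx, (hder x hx).hasFDerivAt.fderiv]
      ext; simp
  intro ζ hζ
  have : EqOn f (fun _ => f 0) (closure (ball 0 r)) := by
    refine Set.EqOn.of_subset_closure (s := ball 0 r) (t := closure (ball 0 r)) hconst ?_
      continuousOn_const subset_closure subset_rfl
    rw [closure_ball _ hr.ne']
    exact (hd.mono hsub).continuousOn
  rw [closure_ball _ hr.ne'] at this
  exact this hζ

lemma exists_qe {y : ℝ} {ζ : ℂ} (h : ‖ζ‖ = Real.exp (-2 * Real.pi * y)) :
    ∃ z : ℂ, z.im = y ∧ qe z = ζ := by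
  have h0 : ζ ≠ 0 := by
    rintro rfl
    rw [norm_zero] at h
    exact (Real.exp_pos _).ne h
  refine ⟨Complex.log ζ / (2 * Real.pi * I), ?_, ?_⟩
  · have hI : (2 * Real.pi * I : ℂ) ≠ 0 := Complex.two_pi_I_ne_zero
    have e : Complex.log ζ / (2 * Real.pi * I) = ((1 / (2 * Real.pi) : ℝ) : ℂ) * (Complex.log ζ * (-I)) := by
      push_cast
      have : (Real.pi : ℂ) ≠ 0 := by exact_mod_cast Real.pi_ne_zero
      field_simp
      rw [Complex.I_sq]; ring
    rw [e, Complex.im_ofReal_mul]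
    have : (Complex.log ζ * (-I)).im = - Real.log ‖ζ‖ := by simp [Complex.log_re]
    rw [this, h, Real.log_exp]
    have := Real.pi_ne_zero
    field_simp
  · unfold qe
    rw [mul_div_cancel₀ _ Complex.two_pi_I_ne_zero, Complex.exp_log h0]

theorem form_zero (K : ℕ) (hK : 1 ≤ K) {g : ℂ → ℂ} (hd : DifferentiableOn ℂ g UH)
    (hmod : ∀ γ, ∀ z ∈ UH, g (moeb γ z) = jden γ z ^ (2 * (K + 1)) * g z)
    (hc : ∀ ε > 0, ∃ T : ℝ, ∀ z ∈ UH, T < z.im → ‖g z‖ ≤ ε)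
    (hper : ∀ γ, IsHyperbolic γ → IsPrimitive γ → ∀ E : ℂ → ℂ,
      (∀ z ∈ UH, HasDerivAt E (g z * Qpoly γ z ^ K) z) →
        ∃ z₀ ∈ UH, (I ^ K * (E (moeb γ z₀) - E z₀)).re = 0) :
    ∀ z ∈ UH, g z = 0 := by
  have hT : ∀ z ∈ UH, g (z + 1) = g z := by
    intro z hz
    have := hmod (Tpow 1) z hz
    rw [moeb_Tpow, jden_Tpow] at this
    simpa using this
  have hS : ∀ z ∈ UH, g (-1 / z) = z ^ (2 * K + 2) * g z := by
    intro z hz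
    have := hmod ModularGroup.S z hz
    simp only [moeb, jden, ModularGroup.S, Matrix.of_apply, Matrix.cons_val', Matrix.cons_val_zero,
      Matrix.cons_val_one, Matrix.cons_val_fin_one] at this
    simpa [mul_add] using this
  obtain ⟨s⟩ := exists_HSeq hd hT hc
  have hW := s.W_zero K hK hS hper
  refine s.h_eq_zero (K + 1) ?_
  have key : ∀ y : ℝ, 0 < y → ∀ z : ℂ, y ≤ z.im →
      ∑ i ∈ Finset.range (K + 1), (I ^ K * HSeq.a0 K i) * ((y : ℂ)⁻¹) ^ i * s.h (K + 1 + i) z = 0 := by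
    intro y hy z hz
    have hp := Real.pi_pos
    have hr1 : Real.exp (-2 * Real.pi * y) < 1 := by
      rw [Real.exp_lt_one_iff]
      have := mul_pos hp hy
      linarith
    have hconst := const_of_re_zero (f := fun ζ => (∑ i ∈ Finset.range (K + 1),
      (I ^ K * HSeq.a0 K i) * ((y : ℂ)⁻¹) ^ i * s.H (K + 1 + i) ζ) + s.rho K 0 * ((y : ℂ)⁻¹) ^ K)
      (Real.exp_pos (-2 * Real.pi * y)) hr1 ?_ ?_ (qe z) ?_
    · simp only [s.zero, mul_zero, Finset.sum_const_zero, zero_add] at hconst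
      exact add_eq_right.mp hconst
    · refine DifferentiableOn.add_const _ (DifferentiableOn.fun_sum fun i _ => ?_)
      exact (s.diff _).const_mul _
    · intro ζ hζ
      obtain ⟨w, hw, rfl⟩ := exists_qe hζ
      have hwU : w ∈ UH := by show 0 < w.im; rw [hw]; exact hy
      have := hW w hwU
      unfold HSeq.W at this
      rw [hw] at this
      exact this
    · rw [mem_closedBall_zero_iff, norm_qe, Real.exp_le_exp]
      have := mul_le_mul_of_nonneg_left hz hp.le
      linarith
  intro z hz
  have hzi : 0 < z.im := hz
  let P : Polynomial ℂ := ∑ i ∈ Finset.range (K + 1),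
    Polynomial.monomial i ((I ^ K * HSeq.a0 K i) * s.h (K + 1 + i) z)
  have hP : P = 0 := by
    refine Polynomial.eq_zero_of_infinite_isRoot P
      (Set.Infinite.mono (s := Set.range fun n : ℕ => (((n + 1 : ℝ) / z.im : ℝ) : ℂ)) ?_ ?_)
    · rintro _ ⟨n, rfl⟩
      have hn : (0:ℝ) < n + 1 := by positivity
      have hk := key (z.im / (n + 1)) (by positivity) z (by
        rw [div_le_iff₀ hn]; nlinarith [(Nat.cast_nonneg n : (0:ℝ) ≤ n)])
      show P.eval _ = 0
      rw [← hk]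
      simp only [P, Polynomial.eval_finsetSum, Polynomial.eval_monomial]
      refine Finset.sum_congr rfl fun i _ => ?_
      have : (((z.im / (n + 1) : ℝ) : ℂ))⁻¹ = (((n + 1 : ℝ) / z.im : ℝ) : ℂ) := by
        rw [← Complex.ofReal_inv, inv_div]
      rw [this]; ring
    · refine Set.infinite_range_of_injective ?_
      intro n m h
      have h1 := Complex.ofReal_injective h
      have h2 : (n:ℝ) + 1 = m + 1 := (div_left_inj' hzi.ne').mp h1
      simpa using h2
  have h0 : P.coeff 0 = 0 := by rw [hP]; simp
  simp only [P, Polynomial.finsetSum_coeff, Polynomial.coeff_monomial] at h0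
  rw [Finset.sum_ite_eq' (Finset.range (K + 1)) 0, if_pos (by simp)] at h0
  have ha : I ^ K * HSeq.a0 K 0 ≠ 0 := by
    unfold HSeq.a0
    have : (K.factorial : ℂ) ≠ 0 := by exact_mod_cast K.factorial_ne_zero
    simp [Complex.I_ne_zero, this]
  exact (mul_eq_zero.mp h0).resolve_left ha

end Uniqueness

/-- Existence and uniqueness of the canonical meromorphic modular form of weight `2k`
associated with the divisor `∑ᵢ αᵢ[ϱᵢ]`, for points `ϱᵢ ∈ ℍ` in pairwise distinct
`SL₂(ℤ)`-orbits and real coefficients `αᵢ`; uniqueness means any two such functions agree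
on `ℍ ∖ ⋃ᵢ SL₂(ℤ)ϱᵢ` (off the poles, where the properties constrain them). -/
theorem canonical_meromorphic_modular_form_exists_unique (k : ℕ) (hk : 2 ≤ k)
    (n : ℕ) (ϱ : Fin n → ℂ) (hϱ : ∀ i, ϱ i ∈ UH)
    (hdist : ∀ i j, i ≠ j → ∀ γ : SL2Z, moeb γ (ϱ i) ≠ ϱ j) (α : Fin n → ℝ) :
    ∃ f : ℂ → ℂ, IsCanonicalForm k ϱ α f ∧
      ∀ g : ℂ → ℂ, IsCanonicalForm k ϱ α g → Set.EqOn g f (UH \ orbitUnion ϱ) := by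
  refine ⟨canForm k ϱ α, canForm_isCanonical k hk n ϱ hϱ hdist α, fun g hg z hz => ?_⟩
  obtain ⟨e, h1, h2, h3, h4, h5⟩ := exists_extension k hk n ϱ hϱ α hg
    (canForm_isCanonical k hk n ϱ hϱ hdist α)
  obtain ⟨K, rfl⟩ : ∃ K, k = K + 1 := ⟨k - 1, by omega⟩
  simp only [Nat.add_sub_cancel] at h5
  have h0 := form_zero K (by omega) h1 h3 h4 h5 z hz.1
  rw [h2 z hz] at h0
  exact sub_eq_zero.mp h0
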